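/- Let n be a positive integer and write 8n+15 = 3^β·n₁ with n₁ a positive integer not divisible by 3. Then t(1,1,1,12;n) = (1/2)·(3^(β+1)·(3/n₁) + 1)·Σ_{d | n₁} d·(3/d) + 3·Σ (−1)^((b−1)/2)·b, where (3/·) is the Kronecker symbol and the last sum is over all pairs (a,b) of positive integers with a odd and 4(8n+15) = a² + 3b². -/

import Mathlib

/-!
Put `N = 8 n + 15`. Multiplying by `8` and completing squares turns `tquad 1 1 1 12 n` into the number
of representations of `N` by `x² + y² + z² + 12 w²` with all variables odd (`Tri.tquad_eq`). The proof
evaluates this number without modular forms.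

Write `A4 m` and `A3 m` for the sums over the divisors of `m` of the odd characters modulo `4` and `3`,
and `A1`, `A2` for the sums of `χ(d) d` and `χ(d) m / d`, where `χ = (3 / ·)` has modulus `12`. Splitting
the quaternary form as `(x² + y²) + (z² + 12 w²)` gives a convolution of representation numbers of
binary forms. These are divisor sums, since the forms needed have class number one, or (for
discriminant `-24`) their genera have: Thue's lemma finds the representation of a split prime,
composition of forms gives the Hecke recursion (`Tri.rep_split`), and the recursion determines the
values at odd arguments (`Tri.uniq`). As the odd representations of `2 k` by two squares are counted by
`2 (A4 k - (-1)^k A4 k)`, what remains is the unsigned convolution `∑ A4 k * A3 (N - 2 k)` and the signed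
one `∑ (-1)^k A4 k * A3 (N - 2 k)`.

Liouville's elementary method evaluates the unsigned convolution. For suitable `f`, the sum of
`f (a - b) - f (a + b)` over `a x + b y = n` collapses under `(a, b, x, y) ↦ (a - b, b, x, x + y)` to its
diagonal terms, which are divisor sums. Because `χ (a - b) - χ (a + b)` is a sum of two products
(`Tri.K1`), the identity is one between convolutions of `A4` and `A3` and their dilations and the sums
`A1`, `A2`. Three such identities (`Tri.liouville_even`, `Tri.liouville_odd`, `Tri.liouville_weighted`)
leave one unknown too many; the missing relation comes from comparing parities in the solutions of
`3 u² + 3 v² + e² + 3 f² = N` (`Tri.count_rel`), and `Tri.conv_c1` is the result.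

For the signed convolution, another weight in `Tri.liouville_weighted` relates
`∑ (-1)^k A4 k * A3 (N - 2 k) + 3 ∑ (-1)^k A4 k * A3 (N - 6 k)` to a signed count of the solutions of
`2 x² + 3 y² + z² + 2 t² = 2 N`, which vanishes because exchanging `x` and `t` reverses the sign
(`Tri.twoFormConv_eq_zero`). The sum over `N - 6 k` is a form of Jacobi's derivative formula, proved by
three sign-reversing involutions preserving `c² + 8 d e`; the boundary plane `d + c = 2 e` that they
leave contributes the sum of `(-1)^((b - 1) / 2) b` over `a² + 3 b² = 4 N` (`Tri.jacobi_identity`).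

Together these say that twice the number of odd representations is `3 A2 N + A1 N` plus three times a
sum over `a² + 3 b² = 4 N` (`Tri.sum_odd`), and `A1`, `A2` at `3^β n₁` reduce to the divisor sum at `n₁`.
-/

open scoped BigOperators

/-- `Nquad a b c d n` is the number of quadruples `(x,y,z,w) ∈ ℤ⁴` with
`n = a*x^2 + b*y^2 + c*z^2 + d*w^2`. -/
noncomputable def Nquad (a b c d : ℕ) (n : ℕ) : ℕ :=
  Nat.card {p : ℤ × ℤ × ℤ × ℤ //
    (n : ℤ) = a * p.1 ^ 2 + b * p.2.1 ^ 2 + c * p.2.2.1 ^ 2 + d * p.2.2.2 ^ 2}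

/-- `tquad a b c d n` is the number of quadruples `(x,y,z,w) ∈ ℤ⁴` with
`n = a*x(x-1)/2 + b*y(y-1)/2 + c*z(z-1)/2 + d*w(w-1)/2`. -/
noncomputable def tquad (a b c d : ℕ) (n : ℕ) : ℕ :=
  Nat.card {p : ℤ × ℤ × ℤ × ℤ //
    (n : ℤ) = a * (p.1 * (p.1 - 1) / 2) + b * (p.2.1 * (p.2.1 - 1) / 2)
      + c * (p.2.2.1 * (p.2.2.1 - 1) / 2) + d * (p.2.2.2 * (p.2.2.2 - 1) / 2)}

namespace Tri

/-! ### Divisor sums, convolutions and dilations -/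

/-- Pairs of positive integers with product `n`. -/
noncomputable def P (n : ℤ) : Finset (ℤ × ℤ) :=
  (Finset.Icc 1 n ×ˢ Finset.Icc 1 n).filter (fun p => p.1 * p.2 = n)

lemma mem_P {n : ℤ} {p : ℤ × ℤ} : p ∈ P n ↔ 0 < p.1 ∧ 0 < p.2 ∧ p.1 * p.2 = n := by
  simp only [P, Finset.mem_filter, Finset.mem_product, Finset.mem_Icc]
  constructor
  · rintro ⟨⟨⟨h1, _⟩, h2, _⟩, h3⟩
    exact ⟨h1, h2, h3⟩
  · rintro ⟨h1, h2, h3⟩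
    refine ⟨⟨⟨h1, ?_⟩, h2, ?_⟩, h3⟩ <;> nlinarith

/-- The Dirichlet convolution of `u` and `v` at `n` (zero for `n ≤ 0`). -/
noncomputable def D (u v : ℤ → ℤ) (n : ℤ) : ℤ := ∑ p ∈ P n, u p.1 * v p.2

/-- The additive convolution over pairs of positive integers with sum `n`. -/
noncomputable def cv (f g : ℤ → ℤ) (n : ℤ) : ℤ := ∑ i ∈ Finset.Ioo 0 n, f i * g (n - i)

/-- `dil k f` is `f (n / k)` at multiples `n` of `k` and vanishes elsewhere. -/
noncomputable def dil (k : ℤ) (f : ℤ → ℤ) (n : ℤ) : ℤ := if k ∣ n then f (n / k) else 0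

lemma P_nonpos {n : ℤ} (h : n ≤ 0) : P n = ∅ := by
  ext p
  simp only [mem_P, Finset.notMem_empty, iff_false]
  rintro ⟨h1, h2, h3⟩
  nlinarith [mul_pos h1 h2]

lemma D_nonpos (u v : ℤ → ℤ) {n : ℤ} (h : n ≤ 0) : D u v n = 0 := by
  simp [D, P_nonpos h]

lemma D_comm (u v : ℤ → ℤ) (n : ℤ) : D u v n = D v u n := by
  unfold D
  refine Finset.sum_nbij' (fun p => (p.2, p.1)) (fun p => (p.2, p.1)) ?_ ?_ ?_ ?_ ?_
  · intro p hp; rw [mem_P] at hp ⊢; exact ⟨hp.2.1, hp.1, by rw [← hp.2.2]; ring⟩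
  · intro p hp; rw [mem_P] at hp ⊢; exact ⟨hp.2.1, hp.1, by rw [← hp.2.2]; ring⟩
  · intro p _; rfl
  · intro p _; rfl
  · intro p _; ring

lemma D_congr {u v u' v' : ℤ → ℤ} {n : ℤ}
    (h : ∀ a x, 0 < a → 0 < x → a * x = n → u a * v x = u' a * v' x) : D u v n = D u' v' n := by
  unfold D
  refine Finset.sum_congr rfl ?_
  intro p hp
  rw [mem_P] at hp
  exact h _ _ hp.1 hp.2.1 hp.2.2

lemma D_add_left (u u' v : ℤ → ℤ) (n : ℤ) :
    D (fun a => u a + u' a) v n = D u v n + D u' v n := by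
  simp [D, add_mul, Finset.sum_add_distrib]

lemma D_sub_left (u u' v : ℤ → ℤ) (n : ℤ) :
    D (fun a => u a - u' a) v n = D u v n - D u' v n := by
  simp [D, sub_mul, Finset.sum_sub_distrib]

lemma D_mul_left (c : ℤ) (u v : ℤ → ℤ) (n : ℤ) :
    D (fun a => c * u a) v n = c * D u v n := by
  simp [D, mul_assoc, Finset.mul_sum]

lemma D_dil_left {k : ℤ} (hk : 0 < k) (u v : ℤ → ℤ) (n : ℤ) :
    D (dil k u) v n = dil k (D u v) n := by
  have e1 : D (dil k u) v n = ∑ p ∈ (P n).filter (fun p => k ∣ p.1), u (p.1 / k) * v p.2 := by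
    rw [Finset.sum_filter]
    refine Finset.sum_congr rfl ?_
    intro p _
    simp only [dil]
    split_ifs <;> simp
  rw [e1]
  simp only [dil]
  split_ifs with h
  · obtain ⟨m, rfl⟩ := h
    rw [Int.mul_ediv_cancel_left _ hk.ne']
    unfold D
    refine Finset.sum_nbij' (fun p => (p.1 / k, p.2)) (fun p => (k * p.1, p.2)) ?_ ?_ ?_ ?_ ?_
    · rintro ⟨a, x⟩ hp
      simp only [Finset.mem_filter, mem_P] at hp ⊢
      obtain ⟨⟨h1, h2, h3⟩, a, rfl⟩ := hp
      rw [Int.mul_ediv_cancel_left _ hk.ne']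
      refine ⟨pos_of_mul_pos_right h1 hk.le, h2, ?_⟩
      exact mul_left_cancel₀ hk.ne' (by linarith)
    · rintro ⟨a, x⟩ hp
      simp only [Finset.mem_filter, mem_P] at hp ⊢
      exact ⟨⟨mul_pos hk hp.1, hp.2.1, by rw [← hp.2.2]; ring⟩, dvd_mul_right _ _⟩
    · rintro ⟨a, x⟩ hp
      simp only [Finset.mem_filter, mem_P] at hp ⊢
      rw [Int.mul_ediv_cancel' hp.2]
    · rintro ⟨a, x⟩ hp
      simp [hk.ne']
    · rintro ⟨a, x⟩ hp
      rfl
  · refine Finset.sum_eq_zero ?_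
    rintro ⟨a, x⟩ hp
    simp only [Finset.mem_filter, mem_P] at hp
    exact absurd (hp.1.2.2 ▸ dvd_mul_of_dvd_left hp.2 x) h

lemma D_dil_right {k : ℤ} (hk : 0 < k) (u v : ℤ → ℤ) (n : ℤ) :
    D u (dil k v) n = dil k (D u v) n := by
  rw [D_comm, D_dil_left hk]
  have : D v u = D u v := funext fun m => D_comm v u m
  rw [this]

/-- At twice an odd number, exactly one of two complementary divisors is even. -/
lemma D_two_mul_odd (u v : ℤ → ℤ) {N : ℤ} (hN : N % 2 = 1) :
    D u v (2 * N) = D (fun a => u (2 * a)) v N + D u (fun x => v (2 * x)) N := by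
  have key : ∀ a x : ℤ, a * x = N → a % 2 = 1 ∧ x % 2 = 1 := by
    intro a x h
    have : Odd (a * x) := by rw [h]; exact Int.odd_iff.mpr hN
    rw [Int.odd_mul] at this
    exact ⟨Int.odd_iff.mp this.1, Int.odd_iff.mp this.2⟩
  unfold D
  rw [← Finset.sum_filter_add_sum_filter_not (P (2 * N)) (fun p => p.1 % 2 = 0)]
  congr 1
  · refine Finset.sum_nbij' (fun p => (p.1 / 2, p.2)) (fun p => (2 * p.1, p.2)) ?_ ?_ ?_ ?_ ?_
    · rintro ⟨a, x⟩ hp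
      simp only [Finset.mem_filter, mem_P] at hp ⊢
      obtain ⟨⟨h1, h2, h3⟩, h4⟩ := hp
      obtain ⟨a, rfl⟩ := Int.dvd_of_emod_eq_zero h4
      refine ⟨by omega, h2, ?_⟩
      rw [Int.mul_ediv_cancel_left _ two_ne_zero]
      linarith
    · rintro ⟨a, x⟩ hp
      simp only [Finset.mem_filter, mem_P] at hp ⊢
      exact ⟨⟨by omega, hp.2.1, by rw [← hp.2.2]; ring⟩, by omega⟩
    · rintro ⟨a, x⟩ hp
      simp only [Finset.mem_filter, mem_P] at hp ⊢
      rw [Int.mul_ediv_cancel' (Int.dvd_of_emod_eq_zero hp.2)]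
    · rintro ⟨a, x⟩ hp
      simp
    · rintro ⟨a, x⟩ hp
      simp only [Finset.mem_filter, mem_P] at hp ⊢
      rw [Int.mul_ediv_cancel' (Int.dvd_of_emod_eq_zero hp.2)]
  · have hx : ∀ a x : ℤ, a * x = 2 * N → ¬ a % 2 = 0 → 2 ∣ x := by
      intro a x h3 h4
      have : Even (a * x) := by rw [h3]; exact even_two_mul N
      rcases Int.even_mul.mp this with h | h
      · exact absurd (Int.even_iff.mp h) h4
      · exact h.two_dvd
    refine Finset.sum_nbij' (fun p => (p.1, p.2 / 2)) (fun p => (p.1, 2 * p.2)) ?_ ?_ ?_ ?_ ?_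
    · rintro ⟨a, x⟩ hp
      simp only [Finset.mem_filter, mem_P] at hp ⊢
      obtain ⟨⟨h1, h2, h3⟩, h4⟩ := hp
      obtain ⟨x, rfl⟩ := hx a x h3 h4
      refine ⟨h1, by omega, ?_⟩
      rw [Int.mul_ediv_cancel_left _ two_ne_zero]
      linarith
    · rintro ⟨a, x⟩ hp
      simp only [Finset.mem_filter, mem_P] at hp ⊢
      have := key a x hp.2.2
      exact ⟨⟨hp.1, by omega, by rw [← hp.2.2]; ring⟩, by omega⟩
    · rintro ⟨a, x⟩ hp
      simp only [Finset.mem_filter, mem_P] at hp ⊢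
      rw [Int.mul_ediv_cancel' (hx a x hp.1.2.2 hp.2)]
    · rintro ⟨a, x⟩ hp
      simp
    · rintro ⟨a, x⟩ hp
      simp only [Finset.mem_filter, mem_P] at hp ⊢
      rw [Int.mul_ediv_cancel' (hx a x hp.1.2.2 hp.2)]

lemma odd_of_mul {a x N : ℤ} (hN : N % 2 = 1) (h : a * x = N) : a % 2 = 1 ∧ x % 2 = 1 := by
  have : Odd (a * x) := by rw [h]; exact Int.odd_iff.mpr hN
  rw [Int.odd_mul] at this
  exact ⟨Int.odd_iff.mp this.1, Int.odd_iff.mp this.2⟩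

/-- The Hecke recursion at a prime for the divisor sum of a completely multiplicative function. -/
lemma D_prime_mul {χ : ℤ → ℤ} (hχ : ∀ a b, χ (a * b) = χ a * χ b) {p : ℤ} (hp : Prime p)
    (hp0 : 0 < p) (m : ℤ) :
    D χ (fun _ => 1) (p * m) =
      (1 + χ p) * D χ (fun _ => 1) m - χ p * dil p (D χ (fun _ => 1)) m := by
  have e1 : dil p (D χ (fun _ => 1)) m = ∑ q ∈ (P m).filter (fun q => p ∣ q.2), χ q.1 := by
    rw [← D_dil_right hp0, D, Finset.sum_filter]
    refine Finset.sum_congr rfl ?_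
    intro q _
    simp only [dil]
    split_ifs <;> simp
  have e2 : D χ (fun _ => 1) m = ∑ q ∈ (P m).filter (fun q => p ∣ q.2), χ q.1
      + ∑ q ∈ (P m).filter (fun q => ¬ p ∣ q.2), χ q.1 := by
    rw [Finset.sum_filter_add_sum_filter_not]; simp [D]
  have e3 : ∑ q ∈ (P (p * m)).filter (fun q => p ∣ q.2), χ q.1 = D χ (fun _ => 1) m := by
    unfold D
    refine Finset.sum_nbij' (fun q => (q.1, q.2 / p)) (fun q => (q.1, p * q.2)) ?_ ?_ ?_ ?_ ?_
    · rintro ⟨a, x⟩ h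
      simp only [Finset.mem_filter, mem_P] at h ⊢
      obtain ⟨⟨h1, h2, h3⟩, x, rfl⟩ := h
      rw [Int.mul_ediv_cancel_left _ hp0.ne']
      exact ⟨h1, pos_of_mul_pos_right h2 hp0.le, mul_left_cancel₀ hp0.ne' (by linarith)⟩
    · rintro ⟨a, x⟩ h
      simp only [Finset.mem_filter, mem_P] at h ⊢
      exact ⟨⟨h.1, mul_pos hp0 h.2.1, by rw [← h.2.2]; ring⟩, dvd_mul_right _ _⟩
    · rintro ⟨a, x⟩ h
      simp only [Finset.mem_filter, mem_P] at h ⊢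
      rw [Int.mul_ediv_cancel' h.2]
    · rintro ⟨a, x⟩ h
      simp [hp0.ne']
    · rintro ⟨a, x⟩ h
      simp
  have e4 : ∑ q ∈ (P (p * m)).filter (fun q => ¬ p ∣ q.2), χ q.1
      = χ p * ∑ q ∈ (P m).filter (fun q => ¬ p ∣ q.2), χ q.1 := by
    rw [Finset.mul_sum]
    have hd : ∀ a x : ℤ, a * x = p * m → ¬ p ∣ x → p ∣ a := by
      intro a x h h'
      exact (hp.dvd_or_dvd (h ▸ dvd_mul_right p m)).resolve_right h'
    refine Finset.sum_nbij' (fun q => (q.1 / p, q.2)) (fun q => (p * q.1, q.2)) ?_ ?_ ?_ ?_ ?_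
    · rintro ⟨a, x⟩ h
      simp only [Finset.mem_filter, mem_P] at h ⊢
      obtain ⟨⟨h1, h2, h3⟩, h4⟩ := h
      obtain ⟨a, rfl⟩ := hd a x h3 h4
      rw [Int.mul_ediv_cancel_left _ hp0.ne']
      exact ⟨⟨pos_of_mul_pos_right h1 hp0.le, h2, mul_left_cancel₀ hp0.ne' (by linarith)⟩, h4⟩
    · rintro ⟨a, x⟩ h
      simp only [Finset.mem_filter, mem_P] at h ⊢
      exact ⟨⟨mul_pos hp0 h.1.1, h.1.2.1, by rw [← h.1.2.2]; ring⟩, h.2⟩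
    · rintro ⟨a, x⟩ h
      simp only [Finset.mem_filter, mem_P] at h ⊢
      rw [Int.mul_ediv_cancel' (hd a x h.1.2.2 h.2)]
    · rintro ⟨a, x⟩ h
      simp [hp0.ne']
    · rintro ⟨a, x⟩ h
      simp only [Finset.mem_filter, mem_P] at h ⊢
      rw [← hχ, Int.mul_ediv_cancel' (hd a x h.1.2.2 h.2)]
  have e5 : D χ (fun _ => 1) (p * m) = ∑ q ∈ (P (p * m)).filter (fun q => p ∣ q.2), χ q.1
      + ∑ q ∈ (P (p * m)).filter (fun q => ¬ p ∣ q.2), χ q.1 := by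
    rw [Finset.sum_filter_add_sum_filter_not]; simp [D]
  rw [e5, e3, e4, e1]
  have : ∑ q ∈ (P m).filter (fun q => ¬ p ∣ q.2), χ q.1 = D χ (fun _ => 1) m
    - ∑ q ∈ (P m).filter (fun q => p ∣ q.2), χ q.1 := by rw [e2]; ring
  rw [this]; ring

/-! ### Additive convolution -/

lemma cv_comm (f g : ℤ → ℤ) (n : ℤ) : cv f g n = cv g f n := by
  unfold cv
  refine Finset.sum_nbij' (fun i => n - i) (fun i => n - i) ?_ ?_ ?_ ?_ ?_
  · intro i hi; simp only [Finset.mem_Ioo] at hi ⊢; omega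
  · intro i hi; simp only [Finset.mem_Ioo] at hi ⊢; omega
  · intro i hi; ring
  · intro i hi; ring
  · intro i hi; simp only [sub_sub_cancel]; ring

lemma cv_congr {f g f' g' : ℤ → ℤ} {n : ℤ}
    (h : ∀ i j, 0 < i → 0 < j → i + j = n → f i * g j = f' i * g' j) : cv f g n = cv f' g' n := by
  unfold cv
  refine Finset.sum_congr rfl ?_
  intro i hi
  rw [Finset.mem_Ioo] at hi
  exact h _ _ hi.1 (by omega) (by omega)

lemma cv_add_left (f f' g : ℤ → ℤ) (n : ℤ) :
    cv (fun i => f i + f' i) g n = cv f g n + cv f' g n := by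
  simp [cv, add_mul, Finset.sum_add_distrib]

lemma cv_sub_left (f f' g : ℤ → ℤ) (n : ℤ) :
    cv (fun i => f i - f' i) g n = cv f g n - cv f' g n := by
  simp [cv, sub_mul, Finset.sum_sub_distrib]

lemma cv_mul_left (c : ℤ) (f g : ℤ → ℤ) (n : ℤ) :
    cv (fun i => c * f i) g n = c * cv f g n := by
  simp [cv, mul_assoc, Finset.mul_sum]

lemma cv_add_right (f g g' : ℤ → ℤ) (n : ℤ) :
    cv f (fun i => g i + g' i) n = cv f g n + cv f g' n := by
  simp [cv, mul_add, Finset.sum_add_distrib]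

lemma cv_sub_right (f g g' : ℤ → ℤ) (n : ℤ) :
    cv f (fun i => g i - g' i) n = cv f g n - cv f g' n := by
  simp [cv, mul_sub, Finset.sum_sub_distrib]

lemma cv_mul_right (c : ℤ) (f g : ℤ → ℤ) (n : ℤ) :
    cv f (fun i => c * g i) n = c * cv f g n := by
  simp only [cv, Finset.mul_sum]
  exact Finset.sum_congr rfl fun i _ => by ring

lemma dil_mul_self {k : ℤ} (hk : k ≠ 0) (f : ℤ → ℤ) (m : ℤ) : dil k f (k * m) = f m := by
  simp [dil, hk]

lemma dil_of_not_dvd {k m : ℤ} (h : ¬ k ∣ m) (f : ℤ → ℤ) : dil k f m = 0 := by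
  simp [dil, h]

/-- In `cv f (dil k g)` at a multiple of `k`, only multiples of `k` contribute. -/
lemma cv_dil_right {k : ℤ} (hk : 0 < k) (f g : ℤ → ℤ) (m : ℤ) :
    cv f (dil k g) (k * m) = cv (fun i => f (k * i)) g m := by
  have e1 : cv f (dil k g) (k * m) =
      ∑ i ∈ (Finset.Ioo 0 (k * m)).filter (fun i => k ∣ i), f i * dil k g (k * m - i) := by
    unfold cv
    rw [Finset.sum_filter]
    refine Finset.sum_congr rfl ?_
    intro i _
    split_ifs with h
    · rfl
    · rw [dil_of_not_dvd, mul_zero]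
      intro h'
      exact h ((dvd_sub_right (dvd_mul_right k m)).mp h')
  rw [e1]
  unfold cv
  refine Finset.sum_nbij' (fun i => i / k) (fun i => k * i) ?_ ?_ ?_ ?_ ?_
  · intro i hi
    simp only [Finset.mem_filter, Finset.mem_Ioo] at hi ⊢
    obtain ⟨⟨h1, h2⟩, i, rfl⟩ := hi
    rw [Int.mul_ediv_cancel_left _ hk.ne']
    exact ⟨pos_of_mul_pos_right h1 hk.le, lt_of_mul_lt_mul_left h2 hk.le⟩
  · intro i hi
    simp only [Finset.mem_filter, Finset.mem_Ioo] at hi ⊢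
    exact ⟨⟨mul_pos hk hi.1, mul_lt_mul_of_pos_left hi.2 hk⟩, dvd_mul_right _ _⟩
  · intro i hi
    simp only [Finset.mem_filter] at hi
    exact Int.mul_ediv_cancel' hi.2
  · intro i hi
    simp [hk.ne']
  · intro i hi
    simp only [Finset.mem_filter] at hi
    obtain ⟨_, i, rfl⟩ := hi
    rw [Int.mul_ediv_cancel_left _ hk.ne', ← mul_sub, dil_mul_self hk.ne']

lemma dil_dil {k l : ℤ} (hk : k ≠ 0) (f : ℤ → ℤ) : dil k (dil l f) = dil (k * l) f := by
  funext n
  by_cases h : k ∣ n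
  · obtain ⟨m, rfl⟩ := h
    rw [dil_mul_self hk]
    simp only [dil]
    by_cases h : l ∣ m
    · obtain ⟨r, rfl⟩ := h
      rcases eq_or_ne l 0 with rfl | hl
      · simp
      · rw [if_pos (dvd_mul_right _ _), if_pos ⟨r, by ring⟩, Int.mul_ediv_cancel_left _ hl,
          ← mul_assoc, Int.mul_ediv_cancel_left _ (mul_ne_zero hk hl)]
    · rw [if_neg h, if_neg]
      rwa [mul_dvd_mul_iff_left hk]
  · rw [dil_of_not_dvd h, dil_of_not_dvd]
    exact fun h' => h (dvd_trans (dvd_mul_right _ _) h')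

/-! ### The solutions of `a x + b y = n` -/

/-- The quadruples `(a, b, x, y)` of positive integers with `a x + b y = n`. -/
noncomputable def Om (n : ℤ) : Finset (ℤ × ℤ × ℤ × ℤ) :=
  (Finset.Icc 1 n ×ˢ Finset.Icc 1 n ×ˢ Finset.Icc 1 n ×ˢ Finset.Icc 1 n).filter
    (fun q => q.1 * q.2.2.1 + q.2.1 * q.2.2.2 = n)

lemma mem_Om {n a b x y : ℤ} :
    (a, b, x, y) ∈ Om n ↔ 0 < a ∧ 0 < b ∧ 0 < x ∧ 0 < y ∧ a * x + b * y = n := by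
  simp only [Om, Finset.mem_filter, Finset.mem_product, Finset.mem_Icc]
  constructor
  · rintro ⟨⟨⟨h1, _⟩, ⟨h2, _⟩, ⟨h3, _⟩, ⟨h4, _⟩⟩, h5⟩
    exact ⟨h1, h2, h3, h4, h5⟩
  · rintro ⟨h1, h2, h3, h4, h5⟩
    have := mul_pos h1 h3
    have := mul_pos h2 h4
    refine ⟨⟨⟨h1, ?_⟩, ⟨h2, ?_⟩, ⟨h3, ?_⟩, ⟨h4, ?_⟩⟩, h5⟩ <;> nlinarith

/-- The sum of `f a b x y` over `Om n`. -/
noncomputable def S (n : ℤ) (f : ℤ → ℤ → ℤ → ℤ → ℤ) : ℤ := ∑ q ∈ Om n, f q.1 q.2.1 q.2.2.1 q.2.2.2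

lemma S_congr {n : ℤ} {f g : ℤ → ℤ → ℤ → ℤ → ℤ}
    (h : ∀ a b x y, 0 < a → 0 < b → 0 < x → 0 < y → a * x + b * y = n → f a b x y = g a b x y) :
    S n f = S n g := by
  refine Finset.sum_congr rfl ?_
  rintro ⟨a, b, x, y⟩ hq
  obtain ⟨h1, h2, h3, h4, h5⟩ := mem_Om.mp hq
  exact h a b x y h1 h2 h3 h4 h5

lemma S_add (n : ℤ) (f g : ℤ → ℤ → ℤ → ℤ → ℤ) :
    S n (fun a b x y => f a b x y + g a b x y) = S n f + S n g := by
  simp [S, Finset.sum_add_distrib]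

lemma S_sub (n : ℤ) (f g : ℤ → ℤ → ℤ → ℤ → ℤ) :
    S n (fun a b x y => f a b x y - g a b x y) = S n f - S n g := by
  simp [S, Finset.sum_sub_distrib]

lemma S_mul (n c : ℤ) (f : ℤ → ℤ → ℤ → ℤ → ℤ) :
    S n (fun a b x y => c * f a b x y) = c * S n f := by
  simp [S, Finset.mul_sum]

/-- A product weight splits into two divisor sums. -/
lemma S_prod (n : ℤ) (u v w z : ℤ → ℤ) :
    S n (fun a b x y => (u a * v x) * (w b * z y)) = cv (D u v) (D w z) n := by
  unfold S cv D
  simp only [Finset.sum_mul_sum, Finset.sum_sigma']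
  refine Finset.sum_nbij' (fun q => ⟨q.1 * q.2.2.1, ⟨(q.1, q.2.2.1), (q.2.1, q.2.2.2)⟩⟩)
    (fun s => (s.2.1.1, s.2.2.1, s.2.1.2, s.2.2.2)) ?_ ?_ ?_ ?_ ?_
  · rintro ⟨a, b, x, y⟩ hq
    obtain ⟨h1, h2, h3, h4, h5⟩ := mem_Om.mp hq
    simp only [Finset.mem_sigma, Finset.mem_Ioo, mem_P]
    have := mul_pos h1 h3
    have := mul_pos h2 h4
    exact ⟨⟨by assumption, by linarith⟩, ⟨h1, h3, trivial⟩, h2, h4, by linarith⟩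
  · rintro ⟨i, ⟨⟨a, x⟩, ⟨b, y⟩⟩⟩ hs
    simp only [Finset.mem_sigma, Finset.mem_Ioo, mem_P] at hs
    obtain ⟨_, ⟨h1, h3, h5⟩, h2, h4, h6⟩ := hs
    exact mem_Om.mpr ⟨h1, h2, h3, h4, by linarith⟩
  · rintro ⟨a, b, x, y⟩ _; rfl
  · rintro ⟨i, ⟨⟨a, x⟩, ⟨b, y⟩⟩⟩ hs
    simp only [Finset.mem_sigma, Finset.mem_Ioo, mem_P] at hs
    obtain ⟨_, ⟨_, _, rfl⟩, _⟩ := hs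
    rfl
  · rintro ⟨a, b, x, y⟩ _; rfl

lemma S_swap (n : ℤ) (f : ℤ → ℤ → ℤ → ℤ → ℤ) :
    S n f = S n (fun a b x y => f b a y x) := by
  refine Finset.sum_nbij' (fun q => (q.2.1, q.1, q.2.2.2, q.2.2.1))
    (fun q => (q.2.1, q.1, q.2.2.2, q.2.2.1)) ?_ ?_ ?_ ?_ ?_
  · rintro ⟨a, b, x, y⟩ hq
    obtain ⟨h1, h2, h3, h4, h5⟩ := mem_Om.mp hq
    exact mem_Om.mpr ⟨h2, h1, h4, h3, by linarith⟩
  · rintro ⟨a, b, x, y⟩ hq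
    obtain ⟨h1, h2, h3, h4, h5⟩ := mem_Om.mp hq
    exact mem_Om.mpr ⟨h2, h1, h4, h3, by linarith⟩
  · intro _ _; rfl
  · intro _ _; rfl
  · intro _ _; rfl

/-- The substitution `(a, b, x, y) ↦ (a - b, b, x, x + y)`, a bijection from `a > b` to `x < y`. -/
lemma S_shift (n : ℤ) (g : ℤ → ℤ → ℤ → ℤ → ℤ) :
    S n (fun a b x y => if b < a then g (a - b) b x (x + y) else 0) =
      S n (fun a b x y => if x < y then g a b x y else 0) := by
  simp only [S, ← Finset.sum_filter]
  refine Finset.sum_nbij' (fun q => (q.1 - q.2.1, q.2.1, q.2.2.1, q.2.2.1 + q.2.2.2))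
    (fun q => (q.1 + q.2.1, q.2.1, q.2.2.1, q.2.2.2 - q.2.2.1)) ?_ ?_ ?_ ?_ ?_
  · rintro ⟨a, b, x, y⟩ hq
    simp only [Finset.mem_filter, mem_Om] at hq ⊢
    obtain ⟨⟨h1, h2, h3, h4, h5⟩, h6⟩ := hq
    exact ⟨⟨by linarith, h2, h3, by linarith, by linarith⟩, by linarith⟩
  · rintro ⟨a, b, x, y⟩ hq
    simp only [Finset.mem_filter, mem_Om] at hq ⊢
    obtain ⟨⟨h1, h2, h3, h4, h5⟩, h6⟩ := hq
    exact ⟨⟨by linarith, h2, h3, by linarith, by linarith⟩, by linarith⟩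
  · rintro ⟨a, b, x, y⟩ _; simp
  · rintro ⟨a, b, x, y⟩ _; simp
  · rintro ⟨a, b, x, y⟩ _; rfl

/-- The mirror image of `S_shift` under exchanging the two products. -/
lemma S_shift' (n : ℤ) (g : ℤ → ℤ → ℤ → ℤ → ℤ) :
    S n (fun a b x y => if a < b then g a (b - a) (x + y) y else 0) =
      S n (fun a b x y => if y < x then g a b x y else 0) := by
  rw [S_swap, S_swap n (fun a b x y => if y < x then g a b x y else 0),
    ← S_shift n (fun a b x y => g b a y x)]
  refine S_congr fun a b x y _ _ _ _ _ => ?_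
  rw [add_comm y x]

lemma S_tri (n : ℤ) (f : ℤ → ℤ → ℤ → ℤ → ℤ) (u : ℤ → ℤ → ℤ → ℤ → ℤ) :
    S n f = S n (fun a b x y => if 0 < u a b x y then f a b x y else 0)
      + S n (fun a b x y => if u a b x y < 0 then f a b x y else 0)
      + S n (fun a b x y => if u a b x y = 0 then f a b x y else 0) := by
  rw [← S_add, ← S_add]
  refine S_congr fun a b x y _ _ _ _ _ => ?_
  rcases lt_trichotomy (u a b x y) 0 with h | h | h
  · simp [h, h.not_gt, h.ne]
  · simp [h]
  · simp [h, h.not_gt, h.ne']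

lemma S_tri_ab (n : ℤ) (f : ℤ → ℤ → ℤ → ℤ → ℤ) :
    S n f = S n (fun a b x y => if b < a then f a b x y else 0)
      + S n (fun a b x y => if a < b then f a b x y else 0)
      + S n (fun a b x y => if a = b then f a b x y else 0) := by
  have := S_tri n f (fun a b _ _ => a - b)
  simpa only [sub_pos, sub_neg, sub_eq_zero] using this

lemma S_tri_xy (n : ℤ) (f : ℤ → ℤ → ℤ → ℤ → ℤ) :
    S n f = S n (fun a b x y => if y < x then f a b x y else 0)
      + S n (fun a b x y => if x < y then f a b x y else 0)
      + S n (fun a b x y => if x = y then f a b x y else 0) := by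
  have := S_tri n f (fun _ _ x y => x - y)
  simpa only [sub_pos, sub_neg, sub_eq_zero] using this

/-- The diagonal `a = b`: then `a (x + y) = n`. -/
lemma S_diag_ab (n : ℤ) (f : ℤ → ℤ → ℤ → ℤ → ℤ) :
    S n (fun a b x y => if a = b then f a b x y else 0) =
      ∑ p ∈ P n, ∑ l ∈ Finset.Ioo 0 p.2, f p.1 p.1 (p.2 - l) l := by
  simp only [S, ← Finset.sum_filter]
  rw [Finset.sum_sigma']
  refine Finset.sum_nbij' (fun q => ⟨(q.1, q.2.2.1 + q.2.2.2), q.2.2.2⟩)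
    (fun s => (s.1.1, s.1.1, s.1.2 - s.2, s.2)) ?_ ?_ ?_ ?_ ?_
  · rintro ⟨a, b, x, y⟩ hq
    simp only [Finset.mem_filter, mem_Om, Finset.mem_sigma, mem_P, Finset.mem_Ioo] at hq ⊢
    obtain ⟨⟨h1, h2, h3, h4, h5⟩, rfl⟩ := hq
    exact ⟨⟨h1, by linarith, by linarith⟩, h4, by linarith⟩
  · rintro ⟨⟨a, s⟩, l⟩ hq
    simp only [Finset.mem_filter, mem_Om, Finset.mem_sigma, mem_P, Finset.mem_Ioo] at hq ⊢
    obtain ⟨⟨h1, h2, h3⟩, h4, h5⟩ := hq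
    exact ⟨⟨h1, h1, by linarith, h4, by linarith⟩, trivial⟩
  · rintro ⟨a, b, x, y⟩ hq
    simp only [Finset.mem_filter] at hq
    obtain ⟨_, rfl⟩ := hq
    simp
  · rintro ⟨⟨a, s⟩, l⟩ hq
    simp
  · rintro ⟨a, b, x, y⟩ hq
    simp only [Finset.mem_filter] at hq
    obtain ⟨_, rfl⟩ := hq
    simp

/-- The diagonal `x = y`: then `(a + b) x = n`. -/
lemma S_diag_xy (n : ℤ) (f : ℤ → ℤ → ℤ → ℤ → ℤ) :
    S n (fun a b x y => if x = y then f a b x y else 0) =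
      ∑ p ∈ P n, ∑ l ∈ Finset.Ioo 0 p.1, f l (p.1 - l) p.2 p.2 := by
  simp only [S, ← Finset.sum_filter]
  rw [Finset.sum_sigma']
  refine Finset.sum_nbij' (fun q => ⟨(q.1 + q.2.1, q.2.2.1), q.1⟩)
    (fun s => (s.2, s.1.1 - s.2, s.1.2, s.1.2)) ?_ ?_ ?_ ?_ ?_
  · rintro ⟨a, b, x, y⟩ hq
    simp only [Finset.mem_filter, mem_Om, Finset.mem_sigma, mem_P, Finset.mem_Ioo] at hq ⊢
    obtain ⟨⟨h1, h2, h3, h4, h5⟩, rfl⟩ := hq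
    exact ⟨⟨by linarith, h3, by linarith⟩, h1, by linarith⟩
  · rintro ⟨⟨a, s⟩, l⟩ hq
    simp only [Finset.mem_filter, mem_Om, Finset.mem_sigma, mem_P, Finset.mem_Ioo] at hq ⊢
    obtain ⟨⟨h1, h2, h3⟩, h4, h5⟩ := hq
    exact ⟨⟨h4, by linarith, h2, h2, by linarith⟩, trivial⟩
  · rintro ⟨a, b, x, y⟩ hq
    simp only [Finset.mem_filter] at hq
    obtain ⟨_, rfl⟩ := hq
    simp
  · rintro ⟨⟨a, s⟩, l⟩ hq
    simp
  · rintro ⟨a, b, x, y⟩ hq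
    simp only [Finset.mem_filter] at hq
    obtain ⟨_, rfl⟩ := hq
    simp

/-! ### Characters modulo divisors of 24 -/

/-- The nontrivial Dirichlet character modulo `4`. -/
def c4 (a : ℤ) : ℤ := if a % 4 = 1 then 1 else if a % 4 = 3 then -1 else 0

/-- The nontrivial Dirichlet character modulo `3`. -/
def c3 (a : ℤ) : ℤ := if a % 3 = 1 then 1 else if a % 3 = 2 then -1 else 0

/-- The character modulo `8` attached to `ℚ(√-2)`. -/
def c8 (a : ℤ) : ℤ :=
  if a % 8 = 1 ∨ a % 8 = 3 then 1 else if a % 8 = 5 ∨ a % 8 = 7 then -1 else 0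

/-- The character modulo `12` attached to `ℚ(√3)`. -/
def c12 (a : ℤ) : ℤ := c4 a * c3 a

/-- The character modulo `24` attached to `ℚ(√-6)`. -/
def c24 (a : ℤ) : ℤ := c12 a * c8 a

/-- The indicator function of the odd integers. -/
def od (a : ℤ) : ℤ := if a % 2 = 1 then 1 else 0

/-- The factor depending on `a` in `χ (a - 2 c) - χ (a + 2 c)`, where `χ = c12`. -/
def g1 (a : ℤ) : ℤ := if a % 3 = 0 then -2 * c4 a else c4 a

/-- The factor depending on `c` in `χ (a - 2 c) - χ (a + 2 c)`, where `χ = c12`. -/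
def h1 (c : ℤ) : ℤ := if c % 2 = 0 then -c3 c else c3 c

lemma c4_congr {a b : ℤ} (h : a % 4 = b % 4) : c4 a = c4 b := by simp only [c4, h]
lemma c3_congr {a b : ℤ} (h : a % 3 = b % 3) : c3 a = c3 b := by simp only [c3, h]
lemma c8_congr {a b : ℤ} (h : a % 8 = b % 8) : c8 a = c8 b := by simp only [c8, h]
lemma c12_congr {a b : ℤ} (h : a % 12 = b % 12) : c12 a = c12 b := by
  rw [c12, c12, c4_congr (by omega : a % 4 = b % 4), c3_congr (by omega : a % 3 = b % 3)]
lemma od_congr {a b : ℤ} (h : a % 2 = b % 2) : od a = od b := by simp only [od, h]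
lemma g1_congr {a b : ℤ} (h : a % 12 = b % 12) : g1 a = g1 b := by
  rw [g1, g1, c4_congr (by omega : a % 4 = b % 4), (by omega : a % 3 = b % 3)]
lemma h1_congr {a b : ℤ} (h : a % 6 = b % 6) : h1 a = h1 b := by
  rw [h1, h1, c3_congr (by omega : a % 3 = b % 3), (by omega : a % 2 = b % 2)]
lemma dil_h1_congr {a b : ℤ} (h : a % 12 = b % 12) : dil 2 h1 a = dil 2 h1 b := by
  simp only [dil]
  by_cases h2 : (2 : ℤ) ∣ a
  · rw [if_pos h2, if_pos (by omega), h1_congr (by omega : a / 2 % 6 = b / 2 % 6)]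
  · rw [if_neg h2, if_neg (by omega)]

/-- A statement on two residues modulo `m` can be checked on representatives. -/
lemma per2 {m : ℕ} (hm : 0 < m) {Q : ℤ → ℤ → Prop}
    (hQ : ∀ a b, Q (a % m) (b % m) → Q a b) (h : ∀ r s : Fin m, Q (r : ℕ) (s : ℕ)) (a b : ℤ) :
    Q a b := by
  refine hQ a b ?_
  have hm' : (0 : ℤ) < m := by exact_mod_cast hm
  have key : ∀ a : ℤ, ∃ r : Fin m, a % m = ((r : ℕ) : ℤ) := by
    intro a
    have h1 := Int.emod_nonneg a hm'.ne'
    have h2 := Int.emod_lt_of_pos a hm'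
    refine ⟨⟨(a % m).toNat, by omega⟩, ?_⟩
    simp only
    omega
  obtain ⟨r, hr⟩ := key a
  obtain ⟨s, hs⟩ := key b
  rw [hr, hs]
  exact h r s

lemma per1 {m : ℕ} (hm : 0 < m) {Q : ℤ → Prop}
    (hQ : ∀ a, Q (a % m) → Q a) (h : ∀ r : Fin m, Q (r : ℕ)) (a : ℤ) : Q a :=
  per2 (Q := fun a _ => Q a) hm (fun a _ => hQ a) (fun r _ => h r) a 0

lemma c4_mul (a b : ℤ) : c4 (a * b) = c4 a * c4 b := by
  refine per2 (m := 4) (by norm_num) (Q := fun a b => c4 (a * b) = c4 a * c4 b) ?_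
    (by decide +kernel) a b
  intro a b h
  rw [c4_congr (Int.mul_emod a b 4), c4_congr (Int.emod_emod a 4).symm,
    c4_congr (Int.emod_emod b 4).symm]
  exact h

lemma c3_mul (a b : ℤ) : c3 (a * b) = c3 a * c3 b := by
  refine per2 (m := 3) (by norm_num) (Q := fun a b => c3 (a * b) = c3 a * c3 b) ?_
    (by decide +kernel) a b
  intro a b h
  rw [c3_congr (Int.mul_emod a b 3), c3_congr (Int.emod_emod a 3).symm,
    c3_congr (Int.emod_emod b 3).symm]
  exact h

lemma c8_mul (a b : ℤ) : c8 (a * b) = c8 a * c8 b := by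
  refine per2 (m := 8) (by norm_num) (Q := fun a b => c8 (a * b) = c8 a * c8 b) ?_
    (by decide +kernel) a b
  intro a b h
  rw [c8_congr (Int.mul_emod a b 8), c8_congr (Int.emod_emod a 8).symm,
    c8_congr (Int.emod_emod b 8).symm]
  exact h

lemma c12_mul (a b : ℤ) : c12 (a * b) = c12 a * c12 b := by
  simp only [c12, c4_mul, c3_mul]; ring

lemma c24_mul (a b : ℤ) : c24 (a * b) = c24 a * c24 b := by
  simp only [c24, c12_mul, c8_mul]; ring

lemma c4_even {a : ℤ} (h : a % 2 = 0) : c4 a = 0 := by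
  simp only [c4]; rw [if_neg (by omega), if_neg (by omega)]
lemma c8_even {a : ℤ} (h : a % 2 = 0) : c8 a = 0 := by
  simp only [c8]; rw [if_neg (by omega), if_neg (by omega)]
lemma c12_even {a : ℤ} (h : a % 2 = 0) : c12 a = 0 := by rw [c12, c4_even h, zero_mul]
lemma g1_even {a : ℤ} (h : a % 2 = 0) : g1 a = 0 := by simp [g1, c4_even h]
lemma c4_neg (a : ℤ) : c4 (-a) = -c4 a := by
  rw [← neg_one_mul, c4_mul]; simp only [c4]; split_ifs <;> simp_all
lemma c3_neg (a : ℤ) : c3 (-a) = -c3 a := by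
  rw [← neg_one_mul, c3_mul]; simp only [c3]; split_ifs <;> simp_all
lemma c12_neg (a : ℤ) : c12 (-a) = c12 a := by
  rw [c12, c12, c4_neg, c3_neg]; ring
lemma c4_sq {a : ℤ} (h : a % 2 = 1) : c4 a * c4 a = 1 := by
  have : a % 4 = 1 ∨ a % 4 = 3 := by omega
  rcases this with h | h <;> simp [c4, h]
lemma c8_sq {a : ℤ} (h : a % 2 = 1) : c8 a * c8 a = 1 := by
  have : a % 8 = 1 ∨ a % 8 = 3 ∨ a % 8 = 5 ∨ a % 8 = 7 := by omega
  rcases this with h | h | h | h <;> simp [c8, h]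

/-- The difference `χ (a - b) - χ (a + b)` factors. -/
lemma K1 (a b : ℤ) : c12 (a - b) - c12 (a + b) = g1 a * dil 2 h1 b + dil 2 h1 a * g1 b := by
  refine per2 (m := 12) (by norm_num)
    (Q := fun a b => c12 (a - b) - c12 (a + b) = g1 a * dil 2 h1 b + dil 2 h1 a * g1 b) ?_
    (by decide +kernel) a b
  intro a b h
  push_cast at h
  rw [c12_congr (by omega : (a % 12 - b % 12) % 12 = (a - b) % 12),
    c12_congr (by omega : (a % 12 + b % 12) % 12 = (a + b) % 12),
    g1_congr (by omega : a % 12 % 12 = a % 12), g1_congr (by omega : b % 12 % 12 = b % 12),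
    dil_h1_congr (by omega : a % 12 % 12 = a % 12),
    dil_h1_congr (by omega : b % 12 % 12 = b % 12)] at h
  exact h

/-- Twice the sum of `χ` below `d`, corrected by the endpoint, in closed form. -/
lemma sum_c12 {d : ℤ} (hd : 0 < d) :
    2 * ∑ l ∈ Finset.Ioo 0 d, c12 l + c12 d = g1 d + 2 * dil 2 h1 d := by
  induction d, hd using Int.leInduction with
  | base => decide +kernel
  | succ d hd ih =>
    have e : Finset.Ioo 0 (d + 1) = insert d (Finset.Ioo 0 d) := by
      ext l; simp only [Finset.mem_Ioo, Finset.mem_insert]; omega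
    rw [e, Finset.sum_insert (by simp)]
    have key : c12 d + c12 (d + 1) = (g1 (d + 1) + 2 * dil 2 h1 (d + 1))
        - (g1 d + 2 * dil 2 h1 d) := by
      refine per1 (m := 12) (by norm_num) (Q := fun d => c12 d + c12 (d + 1) =
        (g1 (d + 1) + 2 * dil 2 h1 (d + 1)) - (g1 d + 2 * dil 2 h1 d)) ?_ (by decide +kernel) d
      intro a h
      push_cast at h
      rw [c12_congr (by omega : (a % 12) % 12 = a % 12),
        c12_congr (by omega : (a % 12 + 1) % 12 = (a + 1) % 12),
        g1_congr (by omega : a % 12 % 12 = a % 12),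
        g1_congr (by omega : (a % 12 + 1) % 12 = (a + 1) % 12),
        dil_h1_congr (by omega : a % 12 % 12 = a % 12),
        dil_h1_congr (by omega : (a % 12 + 1) % 12 = (a + 1) % 12)] at h
      exact h
    linarith

/-- Sum of `c3` over `0 < l < s`. -/
lemma sum_c3 {s : ℤ} (hs : 0 < s) :
    ∑ l ∈ Finset.Ioo 0 s, c3 l = if s % 3 = 2 then 1 else 0 := by
  induction s, hs using Int.leInduction with
  | base => decide +kernel
  | succ d hd ih =>
    have e : Finset.Ioo 0 (d + 1) = insert d (Finset.Ioo 0 d) := by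
      ext l; simp only [Finset.mem_Ioo, Finset.mem_insert]; omega
    rw [e, Finset.sum_insert (by simp), ih, c3]
    split_ifs <;> omega

/-- Sum of `c4` over `0 < l < s`. -/
lemma sum_c4 {s : ℤ} (hs : 0 < s) :
    ∑ l ∈ Finset.Ioo 0 s, c4 l = if s % 4 = 2 ∨ s % 4 = 3 then 1 else 0 := by
  induction s, hs using Int.leInduction with
  | base => decide +kernel
  | succ d hd ih =>
    have e : Finset.Ioo 0 (d + 1) = insert d (Finset.Ioo 0 d) := by
      ext l; simp only [Finset.mem_Ioo, Finset.mem_insert]; omega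
    rw [e, Finset.sum_insert (by simp), ih, c4]
    split_ifs <;> omega

/-! ### The divisor sums of the characters -/

/-- `A4 n` is the sum of `c4` over the positive divisors of `n`. -/
noncomputable def A4 : ℤ → ℤ := D c4 (fun _ => 1)

/-- `A3 n` is the sum of `c3` over the positive divisors of `n`. -/
noncomputable def A3 : ℤ → ℤ := D c3 (fun _ => 1)

lemma D_eq_zero_of_neg {χ : ℤ → ℤ} (hχ : ∀ a b, χ (a * b) = χ a * χ b) {n : ℤ}
    (hn : χ n = -1) : D χ (fun _ => 1) n = 0 := by
  have h1 : D χ (fun _ => 1) n = - D χ (fun _ => 1) n := by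
    conv_rhs => rw [D_comm]
    rw [neg_eq_neg_one_mul, ← D_mul_left]
    refine D_congr fun a x _ _ h => ?_
    have h2 : χ a * χ x = -1 := by rw [← hχ, h, hn]
    have h3 : χ x * χ x = 1 := by
      have : IsUnit (χ x) := by
        refine IsUnit.of_mul_eq_one (-χ a) ?_
        linarith [mul_comm (χ a) (χ x)]
      rcases Int.isUnit_iff.mp this with h | h <;> simp [h]
    have : χ a = -χ x := by
      calc χ a = χ a * (χ x * χ x) := by rw [h3, mul_one]
        _ = (χ a * χ x) * χ x := by ring
        _ = -χ x := by rw [h2]; ring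
    simp [this]
  linarith

lemma A4_nonpos {n : ℤ} (h : n ≤ 0) : A4 n = 0 := D_nonpos _ _ h
lemma A3_nonpos {n : ℤ} (h : n ≤ 0) : A3 n = 0 := D_nonpos _ _ h

lemma prime_two' : Prime (2 : ℤ) := Int.prime_two
lemma prime_three' : Prime (3 : ℤ) := Int.prime_three

lemma A4_two_mul (m : ℤ) : A4 (2 * m) = A4 m := by
  rw [A4, D_prime_mul c4_mul prime_two' (by norm_num)]
  simp [c4]

lemma A4_three_mul (m : ℤ) : A4 (3 * m) = dil 3 A4 m := by
  rw [A4, D_prime_mul c4_mul prime_three' (by norm_num)]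
  simp [c4]

lemma A3_two_mul (m : ℤ) : A3 (2 * m) = dil 2 A3 m := by
  rw [A3, D_prime_mul c3_mul prime_two' (by norm_num)]
  simp [c3]

lemma A3_four_mul (m : ℤ) : A3 (4 * m) = A3 m := by
  rw [show 4 * m = 2 * (2 * m) by ring, A3_two_mul, dil_mul_self two_ne_zero]

lemma A4_three_mod_four {n : ℤ} (h : n % 4 = 3) : A4 n = 0 :=
  D_eq_zero_of_neg c4_mul (by simp [c4, h])

lemma A3_two_mod_three {n : ℤ} (h : n % 3 = 2) : A3 n = 0 :=
  D_eq_zero_of_neg c3_mul (by simp [c3, h])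

lemma A3_two_mod_four {n : ℤ} (h : n % 4 = 2) : A3 n = 0 := by
  obtain ⟨m, rfl⟩ : (2 : ℤ) ∣ n := by omega
  rw [A3_two_mul, dil_of_not_dvd (by omega)]

lemma D_g1 (n : ℤ) : D g1 (fun _ => 1) n = A4 n - 3 * dil 3 (D (fun a => c4 (3 * a)) (fun _ => 1)) n := by
  rw [← D_dil_left (by norm_num), ← D_mul_left, A4, ← D_sub_left]
  refine D_congr fun a x _ _ _ => ?_
  simp only [g1, dil, mul_one]
  by_cases h : (3 : ℤ) ∣ a
  · rw [if_pos h, if_pos (by omega), Int.mul_ediv_cancel' h]; ring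
  · rw [if_neg h, if_neg (by omega)]; ring

/-- The divisor sum of `g1`. -/
noncomputable def G1 : ℤ → ℤ := D g1 (fun _ => 1)

/-- The divisor sum of `h1`. -/
noncomputable def H1 : ℤ → ℤ := D h1 (fun _ => 1)

lemma G1_eq (n : ℤ) : G1 n = A4 n + 3 * dil 3 A4 n := by
  rw [G1, D_g1]
  have : D (fun a => c4 (3 * a)) (fun _ => 1) = fun m => -1 * A4 m := by
    funext m
    rw [A4, ← D_mul_left]
    refine D_congr fun a x _ _ _ => ?_
    rw [c4_mul]; simp [c4]
  rw [this]
  simp only [dil]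
  split_ifs <;> ring

lemma H1_eq (n : ℤ) : H1 n = A3 n + 2 * dil 2 A3 n := by
  rw [H1, A3]
  rw [← D_dil_left (by norm_num), ← D_mul_left, ← D_add_left]
  refine D_congr fun a x _ _ _ => ?_
  simp only [h1, dil, mul_one]
  by_cases h : (2 : ℤ) ∣ a
  · rw [if_pos h, if_pos (by omega)]
    obtain ⟨b, rfl⟩ := h
    rw [Int.mul_ediv_cancel_left _ two_ne_zero, c3_mul]
    simp [c3]
    split_ifs <;> norm_num
  · rw [if_neg h, if_neg (by omega)]; ring

/-! ### Liouville-type identities -/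

/-- The sign `(-1) ^ b`. -/
def sg (b : ℤ) : ℤ := if b % 2 = 0 then 1 else -1

lemma sg_congr {a b : ℤ} (h : a % 2 = b % 2) : sg a = sg b := by simp only [sg, h]

/-- The indicator function of the residue class of `2` modulo `4`. -/
def t2 (b : ℤ) : ℤ := if b % 4 = 2 then 1 else 0

/-- The sum of `χ(d) d` over the divisors `d` of `n`, where `χ = c12`. -/
noncomputable def A1 : ℤ → ℤ := D (fun d => c12 d * d) (fun _ => 1)

/-- The sum of `χ(d) n / d` over the divisors `d` of `n`, where `χ = c12`. -/
noncomputable def A2 : ℤ → ℤ := D c12 (fun e => e)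

lemma S_zero {n : ℤ} {f : ℤ → ℤ → ℤ → ℤ → ℤ}
    (h : ∀ a b x y, 0 < a → 0 < b → 0 < x → 0 < y → a * x + b * y = n → f a b x y = 0) :
    S n f = 0 := by
  rw [S_congr (g := fun _ _ _ _ => 0) h]; simp [S]

/-- Liouville's identity for the even function `χ = c12`. -/
lemma liouville_even (n : ℤ) :
    2 * cv G1 (dil 2 H1) n = 2 * A2 n - A1 n - G1 n - 2 * dil 2 H1 n := by
  have e0 : S n (fun a b x y => c12 (a - b) - c12 (a + b)) = 2 * cv G1 (dil 2 H1) n := by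
    have hd : D (dil 2 h1) (fun _ => 1) = dil 2 H1 :=
      funext fun m => D_dil_left (by norm_num) _ _ m
    have h : S n (fun a b x y => c12 (a - b) - c12 (a + b)) =
        S n (fun a b x y => (g1 a * (fun _ => 1) x) * (dil 2 h1 b * (fun _ => 1) y)) +
        S n (fun a b x y => (dil 2 h1 a * (fun _ => 1) x) * (g1 b * (fun _ => 1) y)) := by
      rw [← S_add]
      refine S_congr fun a b x y _ _ _ _ _ => ?_
      rw [K1]; ring
    rw [h, S_prod, S_prod, hd, cv_comm (dil 2 H1)]
    simp only [G1]; ring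
  have e1 : S n (fun a b x y => c12 (a - b)) =
      2 * S n (fun a b x y => if x < y then c12 a else 0) := by
    rw [S_tri_ab, S_shift n (fun a _ _ _ => c12 a)]
    have h2 : S n (fun a b x y => if a < b then c12 (a - b) else 0) =
        S n (fun a b x y => if x < y then c12 a else 0) := by
      rw [S_swap n (fun a b x y => if x < y then c12 a else 0),
        ← S_shift' n (fun _ b _ _ => c12 b)]
      refine S_congr fun a b x y _ _ _ _ _ => ?_
      rw [← c12_neg, neg_sub]
    have h3 : S n (fun a b x y => if a = b then c12 (a - b) else 0) = 0 := by
      refine S_zero fun a b x y _ _ _ _ _ => ?_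
      split_ifs with h
      · subst h; rw [sub_self]; rfl
      · rfl
    rw [h2, h3]; ring
  have e2 : S n (fun a b x y => c12 (a + b)) =
      2 * S n (fun a b x y => if b < a then c12 a else 0) +
      S n (fun a b x y => if x = y then c12 (a + b) else 0) := by
    rw [S_tri_xy, ← S_shift n (fun a b _ _ => c12 (a + b)),
      ← S_shift' n (fun a b _ _ => c12 (a + b)),
      S_swap n (fun a b x y => if a < b then c12 (a + (b - a)) else 0)]
    simp only [add_sub_cancel, sub_add_cancel]
    ring
  have e3 : S n (fun a b x y => if x < y then c12 a else 0) -
      S n (fun a b x y => if b < a then c12 a else 0) =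
      S n (fun a b x y => if a = b then c12 a else 0) -
      S n (fun a b x y => if x = y then c12 a else 0) := by
    have h1 := S_tri_ab n (fun a _ _ _ => c12 a)
    have h2 := S_tri_xy n (fun a _ _ _ => c12 a)
    have h3 := S_shift' n (fun a _ _ _ => c12 a)
    linarith
  have e4 : 2 * S n (fun a b x y => if a = b then c12 a else 0) = 2 * A2 n - 2 * D c12 (fun _ => 1) n := by
    rw [S_diag_ab, A2, D, D, Finset.mul_sum, Finset.mul_sum, Finset.mul_sum,
      ← Finset.sum_sub_distrib]
    refine Finset.sum_congr rfl fun p hp => ?_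
    rw [mem_P] at hp
    have : ((Finset.Ioo 0 p.2).card : ℤ) = p.2 - 1 := by
      rw [Int.card_Ioo]; omega
    rw [Finset.sum_const, nsmul_eq_mul, this]; ring
  have e5 : S n (fun a b x y => if x = y then c12 (a + b) else 0) = A1 n - D c12 (fun _ => 1) n := by
    rw [S_diag_xy, A1, D, D, ← Finset.sum_sub_distrib]
    refine Finset.sum_congr rfl fun p hp => ?_
    rw [mem_P] at hp
    have : ((Finset.Ioo 0 p.1).card : ℤ) = p.1 - 1 := by
      rw [Int.card_Ioo]; omega
    simp only [add_sub_cancel]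
    rw [Finset.sum_const, nsmul_eq_mul, this]; ring
  have e6 : 2 * S n (fun a b x y => if x = y then c12 a else 0) =
      G1 n + 2 * dil 2 H1 n - D c12 (fun _ => 1) n := by
    rw [S_diag_xy, G1, H1, ← D_dil_left (by norm_num), ← D_mul_left, ← D_add_left, ← D_sub_left, D,
      Finset.mul_sum]
    refine Finset.sum_congr rfl fun p hp => ?_
    rw [mem_P] at hp
    rw [← sum_c12 hp.1]; ring
  rw [S_sub, e1, e2] at e0
  linarith

/-- The factor depending on `x` in `c3 (x + y) - c3 (x - y)`. -/
def k3 (x : ℤ) : ℤ := if x % 3 = 0 then 2 else -1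

lemma c3_add_sub (x y : ℤ) : c3 (x + y) - c3 (x - y) = k3 x * c3 y := by
  refine per2 (m := 3) (by norm_num)
    (Q := fun x y => c3 (x + y) - c3 (x - y) = k3 x * c3 y) ?_ (by decide +kernel) x y
  intro a b h
  push_cast at h
  rw [c3_congr (by omega : (a % 3 + b % 3) % 3 = (a + b) % 3),
    c3_congr (by omega : (a % 3 - b % 3) % 3 = (a - b) % 3),
    c3_congr (by omega : b % 3 % 3 = b % 3)] at h
  have : k3 (a % 3) = k3 a := by simp [k3]
  rwa [this] at h

/-- The sign `(-1) ^ (b / 2)` at even `b`, extended by zero. -/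
def s2 (b : ℤ) : ℤ := if b % 4 = 0 then 1 else if b % 4 = 2 then -1 else 0

/-- Indicator of the residue class of `2` modulo `3`. -/
def t3 (s : ℤ) : ℤ := if s % 3 = 2 then 1 else 0

/-- The boundary weight `[s ≡ 2] - [s ≡ 3]` modulo `4`. -/
def t4 (s : ℤ) : ℤ := if s % 4 = 2 then 1 else if s % 4 = 3 then -1 else 0

lemma D_c4_k3 (n : ℤ) : D c4 k3 n = 3 * dil 3 A4 n - A4 n := by
  rw [A4, ← D_dil_right (by norm_num), D_comm c4 k3, D_comm c4 (dil _ _), D_comm c4 (fun _ => 1),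
    ← D_mul_left, ← D_sub_left]
  refine D_congr fun a x _ _ _ => ?_
  simp only [k3, dil]
  by_cases h : (3 : ℤ) ∣ a
  · rw [if_pos h, if_pos (by omega)]; ring
  · rw [if_neg h, if_neg (by omega)]; ring

lemma D_s2_c3 (n : ℤ) : D s2 c3 n = 2 * dil 4 A3 n - dil 2 A3 n := by
  have : A3 = D (fun _ => 1) c3 := funext fun m => D_comm _ _ m
  rw [this, ← D_dil_left (by norm_num), ← D_dil_left (by norm_num),
    ← D_mul_left, ← D_sub_left]
  refine D_congr fun a x _ _ _ => ?_
  simp only [s2, dil]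
  congr 1
  split_ifs <;> omega

lemma D_sg_c3 (n : ℤ) : D sg c3 n = 2 * dil 2 A3 n - A3 n := by
  have : A3 = D (fun _ => 1) c3 := funext fun m => D_comm _ _ m
  rw [this, ← D_dil_left (by norm_num),
    ← D_mul_left, ← D_sub_left]
  refine D_congr fun a x _ _ _ => ?_
  simp only [sg, dil]
  congr 1
  split_ifs <;> omega

/-- Liouville's identity for the function `c4 u * c3 v`, restricted to odd `a` and even `b`. -/
lemma liouville_odd (n : ℤ) :
    cv (D c4 k3) (D s2 c3) n = 2 * cv A4 (D sg c3) n + D c4 t3 n + D t4 c3 n := by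
  -- `p` and `od` are the indicators of the even and the odd integers; `sg` is their difference
  set p : ℤ → ℤ := fun b => if b % 2 = 0 then 1 else 0 with hp
  have hsg : ∀ b, sg b = p b - od b := by
    intro b; simp only [sg, hp, od]; split_ifs <;> omega
  have e0 : S n (fun a b x y => p b * (c4 (a - b) * c3 (x + y) - c4 (a + b) * c3 (x - y))) =
      cv (D c4 k3) (D s2 c3) n := by
    rw [← S_prod]
    refine S_congr fun a b x y _ _ _ _ _ => ?_
    have h := c3_add_sub x y
    have h4 : b % 4 = 0 ∨ b % 4 = 2 ∨ b % 2 = 1 := by omega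
    rcases h4 with h4 | h4 | h4
    · rw [c4_congr (by omega : (a - b) % 4 = a % 4), c4_congr (by omega : (a + b) % 4 = a % 4),
        ← mul_sub, h]
      have : b % 2 = 0 := by omega
      simp only [hp, s2, h4, this, if_true]; ring
    · rw [c4_congr (by omega : (a - b) % 4 = (a + 2) % 4),
        c4_congr (by omega : (a + b) % 4 = (a + 2) % 4), ← mul_sub, h]
      have : b % 2 = 0 := by omega
      have h5 : c4 (a + 2) = - c4 a := by simp only [c4]; split_ifs <;> omega
      simp only [hp, s2, h4, this, h5, if_true]; norm_num; ring
    · have h6 : b % 4 ≠ 0 := by omega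
      have h7 : b % 4 ≠ 2 := by omega
      simp [hp, s2, h4, h6, h7]
  have e1 : S n (fun a b x y => p b * (c4 (a - b) * c3 (x + y))) =
      S n (fun a b x y => if x < y then sg b * (c4 a * c3 y) else 0) := by
    rw [S_tri_ab, S_shift n (fun a b x y => p b * (c4 a * c3 y))]
    have h2 : S n (fun a b x y => if a < b then p b * (c4 (a - b) * c3 (x + y)) else 0) =
        S n (fun a b x y => if x < y then - (od b * (c4 a * c3 y)) else 0) := by
      rw [S_swap n (fun a b x y => if x < y then - (od b * (c4 a * c3 y)) else 0),
        ← S_shift' n (fun a b x y => - (od a * (c4 b * c3 x)))]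
      refine S_congr fun a b x y _ _ _ _ _ => ?_
      rw [show a - b = - (b - a) by ring, c4_neg]
      by_cases h : (b - a) % 2 = 0
      · rw [c4_even h]; simp
      · have : p b = od a := by simp only [hp, od]; split_ifs <;> omega
        rw [this]; split_ifs <;> ring
    have h3 : S n (fun a b x y => if a = b then p b * (c4 (a - b) * c3 (x + y)) else 0) = 0 := by
      refine S_zero fun a b x y _ _ _ _ _ => ?_
      split_ifs with h
      · subst h; rw [sub_self]; simp [c4]
      · rfl
    rw [h2, h3, add_zero, ← S_add]
    refine S_congr fun a b x y _ _ _ _ _ => ?_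
    rw [hsg]
    split_ifs <;> ring
  have e2 : S n (fun a b x y => p b * (c4 (a + b) * c3 (x - y))) =
      - S n (fun a b x y => if b < a then sg b * (c4 a * c3 y) else 0) := by
    rw [S_tri_xy, ← S_shift n (fun a b x y => p b * (c4 (a + b) * c3 (x - y))),
      ← S_shift' n (fun a b x y => p b * (c4 (a + b) * c3 (x - y))),
      S_swap n (fun a b x y => if a < b then _ else 0)]
    have h3 : S n (fun a b x y => if x = y then p b * (c4 (a + b) * c3 (x - y)) else 0) = 0 := by
      refine S_zero fun a b x y _ _ _ _ _ => ?_
      split_ifs with h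
      · subst h; rw [sub_self]; simp [c3]
      · rfl
    rw [h3, add_zero, ← S_add, neg_eq_neg_one_mul, ← S_mul]
    refine S_congr fun a b x y _ _ _ _ _ => ?_
    simp only [add_sub_cancel, sub_add_cancel, hsg]
    rw [show y + x - x = y by ring, show x - (x + y) = -y by ring, c3_neg]
    by_cases h : a % 2 = 0
    · rw [c4_even h]; simp
    · have : p (a - b) = od b := by simp only [hp, od]; split_ifs <;> omega
      rw [this]; split_ifs <;> ring
  have e3 : S n (fun a b x y => if a < b then sg b * (c4 a * c3 y) else 0) +
      S n (fun a b x y => if y < x then sg b * (c4 a * c3 y) else 0) = 0 := by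
    rw [← S_shift' n (fun a b x y => sg b * (c4 a * c3 y)), ← S_add]
    refine S_zero fun a b x y _ _ _ _ _ => ?_
    by_cases h : a % 2 = 0
    · rw [c4_even h]; simp
    · have : sg (b - a) = - sg b := by simp only [sg]; split_ifs <;> omega
      rw [this]; split_ifs <;> ring
  have e4 : S n (fun a b x y => if a = b then sg b * (c4 a * c3 y) else 0) = - D c4 t3 n := by
    rw [S_diag_ab, D, ← Finset.sum_neg_distrib]
    refine Finset.sum_congr rfl fun q hq => ?_
    rw [mem_P] at hq
    rw [← Finset.mul_sum, ← Finset.mul_sum, sum_c3 hq.2.1, t3]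
    by_cases h : q.1 % 2 = 0
    · rw [c4_even h]; simp
    · rw [sg, if_neg h]; ring
  have e5 : S n (fun a b x y => if x = y then sg b * (c4 a * c3 y) else 0) = - D t4 c3 n := by
    rw [S_diag_xy, D, ← Finset.sum_neg_distrib]
    refine Finset.sum_congr rfl fun q hq => ?_
    rw [mem_P] at hq
    have h1 : ∀ l, sg (q.1 - l) * (c4 l * c3 q.2) = (- sg q.1 * c3 q.2) * c4 l := by
      intro l
      by_cases h : l % 2 = 0
      · rw [c4_even h]; ring
      · have : sg (q.1 - l) = - sg q.1 := by simp only [sg]; split_ifs <;> omega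
        rw [this]; ring
    simp only [h1]
    rw [← Finset.mul_sum, sum_c4 hq.1, t4, sg]
    split_ifs <;> omega
  have e6 : S n (fun a b x y => sg b * (c4 a * c3 y)) = cv A4 (D sg c3) n := by
    rw [A4, ← S_prod]
    refine S_congr fun a b x y _ _ _ _ _ => ?_
    ring
  have e7 : S n (fun a b x y => p b * (c4 (a - b) * c3 (x + y) - c4 (a + b) * c3 (x - y))) =
      S n (fun a b x y => p b * (c4 (a - b) * c3 (x + y)))
        - S n (fun a b x y => p b * (c4 (a + b) * c3 (x - y))) := by
    rw [← S_sub]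
    exact S_congr fun a b x y _ _ _ _ _ => by ring
  have h1 := S_tri_ab n (fun a b x y => sg b * (c4 a * c3 y))
  have h2 := S_tri_xy n (fun a b x y => sg b * (c4 a * c3 y))
  linarith

/-- Liouville's identity for `χ = c12`, restricted to odd `a`, to `b` congruent to `2` modulo `4`
and to odd `y`, with an even weight `ε` in `x` supported on the multiples of `4`. -/
lemma liouville_weighted (n : ℤ) (ε : ℤ → ℤ) (h4 : ∀ x, ¬ (4 : ℤ) ∣ x → ε x = 0)
    (hev : ∀ x, ε (-x) = ε x) :
    S n (fun a b x y => od a * t2 b * od y * ε x * (c12 (a - b) - c12 (a + b))) =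
      S n (fun a b x y => od a * t2 (a + b) * od y * ε (x - y) * c12 a)
      - S n (fun a b x y => od a * t2 (b - a) * od y * ε (x + y) * c12 a)
      - S n (fun a b x y => if x = y then od a * t2 (a + b) * od y * ε (x - y) * c12 a else 0) := by
  have hp : ∀ a b x y, od (a - b) * t2 b * od (x + y) * ε x = od a * t2 b * od y * ε x := by
    intro a b x y
    by_cases h : (4 : ℤ) ∣ x
    · rw [od_congr (by omega : (x + y) % 2 = y % 2)]
      by_cases h' : b % 4 = 2
      · rw [od_congr (by omega : (a - b) % 2 = a % 2)]
      · simp [t2, h']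
    · rw [h4 x h]; ring
  have hq1 : ∀ a b x y, od b * t2 (b + a) * od x * ε (y - x) =
      od a * t2 (a + b) * od y * ε (x - y) := by
    intro a b x y
    rw [← hev (y - x), neg_sub, add_comm b a]
    by_cases h : (4 : ℤ) ∣ x - y
    · rw [od_congr (by omega : x % 2 = y % 2)]
      by_cases h' : (a + b) % 4 = 2
      · rw [od_congr (by omega : b % 2 = a % 2)]
      · simp [t2, h']
    · rw [h4 _ h]; ring
  have hq2 : ∀ a b x y, od b * t2 (a - b) * od x * ε (y + x) =
      od a * t2 (b - a) * od y * ε (x + y) := by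
    intro a b x y
    rw [add_comm y x]
    by_cases h : (4 : ℤ) ∣ x + y
    · rw [od_congr (by omega : x % 2 = y % 2)]
      by_cases h' : (a - b) % 4 = 2
      · rw [od_congr (by omega : b % 2 = a % 2)]
        have : t2 (b - a) = t2 (a - b) := by simp only [t2]; split_ifs <;> omega
        rw [this]
      · have h'' : (b - a) % 4 ≠ 2 := by omega
        simp [t2, h', h'']
    · rw [h4 _ h]; ring
  have e1 : S n (fun a b x y => od a * t2 b * od y * ε x * c12 (a - b)) =
      S n (fun a b x y => if x < y then od a * t2 b * od y * ε x * c12 a else 0) +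
      S n (fun a b x y => if x < y then od a * t2 (a + b) * od y * ε (x - y) * c12 a else 0) := by
    rw [S_tri_ab, ← S_shift n (fun a b x y => od a * t2 b * od y * ε x * c12 a)]
    have h2 : S n (fun a b x y => if a < b then od a * t2 b * od y * ε x * c12 (a - b) else 0) =
        S n (fun a b x y => if x < y then od a * t2 (a + b) * od y * ε (x - y) * c12 a else 0) := by
      rw [S_swap n (fun a b x y => if x < y then _ else 0),
        ← S_shift' n (fun a b x y => od b * t2 (b + a) * od x * ε (y - x) * c12 b)]
      refine S_congr fun a b x y _ _ _ _ _ => ?_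
      rw [hq1, ← c12_neg (a - b), neg_sub, add_sub_cancel, add_sub_cancel_right]
    have h3 : S n (fun a b x y => if a = b then od a * t2 b * od y * ε x * c12 (a - b) else 0) = 0 := by
      refine S_zero fun a b x y _ _ _ _ _ => ?_
      split_ifs with h
      · subst h; rw [sub_self]; simp [c12, c3]
      · rfl
    rw [h2, h3]
    simp only [hp]
    ring
  have e2 : S n (fun a b x y => od a * t2 b * od y * ε x * c12 (a + b)) =
      S n (fun a b x y => if b < a then od a * t2 b * od y * ε x * c12 a else 0) +
      S n (fun a b x y => if b < a then od a * t2 (b - a) * od y * ε (x + y) * c12 a else 0) := by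
    rw [S_tri_xy, ← S_shift n (fun a b x y => od a * t2 b * od y * ε x * c12 (a + b)),
      ← S_shift' n (fun a b x y => od a * t2 b * od y * ε x * c12 (a + b)),
      S_swap n (fun a b x y => if a < b then _ else 0)]
    have h3 : S n (fun a b x y => if x = y then od a * t2 b * od y * ε x * c12 (a + b) else 0) = 0 := by
      refine S_zero fun a b x y _ _ _ _ _ => ?_
      split_ifs with h
      · subst h
        by_cases h : (4 : ℤ) ∣ x
        · have : ¬ x % 2 = 1 := by omega
          simp [od, this]
        · rw [h4 x h]; ring
      · rfl
    rw [h3]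
    simp only [hp, hq2, add_sub_cancel, sub_add_cancel]
    ring
  have z1 : S n (fun a b x y => if x = y then od a * t2 b * od y * ε x * c12 a else 0) = 0 := by
    refine S_zero fun a b x y _ _ _ _ _ => ?_
    split_ifs with h
    · subst h
      by_cases h : (4 : ℤ) ∣ x
      · have : ¬ x % 2 = 1 := by omega
        simp [od, this]
      · rw [h4 x h]; ring
    · rfl
  have z2 : S n (fun a b x y => if a = b then od a * t2 b * od y * ε x * c12 a else 0) = 0 := by
    refine S_zero fun a b x y _ _ _ _ _ => ?_
    split_ifs with h
    · subst h
      by_cases h : a % 4 = 2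
      · have : ¬ a % 2 = 1 := by omega
        simp [od, this]
      · simp [t2, h]
    · rfl
  have z3 : S n (fun a b x y => if a = b then od a * t2 (b - a) * od y * ε (x + y) * c12 a else 0)
      = 0 := by
    refine S_zero fun a b x y _ _ _ _ _ => ?_
    split_ifs with h
    · subst h; simp [t2]
    · rfl
  have s1 : S n (fun a b x y => if a < b then od a * t2 b * od y * ε x * c12 a else 0) =
      S n (fun a b x y => if y < x then od a * t2 (a + b) * od y * ε (x - y) * c12 a else 0) := by
    rw [← S_shift' n (fun a b x y => od a * t2 (a + b) * od y * ε (x - y) * c12 a)]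
    simp only [add_sub_cancel, add_sub_cancel_right]
  have s2 : S n (fun a b x y => if a < b then od a * t2 (b - a) * od y * ε (x + y) * c12 a else 0) =
      S n (fun a b x y => if y < x then od a * t2 b * od y * ε x * c12 a else 0) := by
    rw [← S_shift' n (fun a b x y => od a * t2 b * od y * ε x * c12 a)]
  have t1 := S_tri_ab n (fun a b x y => od a * t2 b * od y * ε x * c12 a)
  have t2' := S_tri_xy n (fun a b x y => od a * t2 b * od y * ε x * c12 a)
  have t3' := S_tri_xy n (fun a b x y => od a * t2 (a + b) * od y * ε (x - y) * c12 a)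
  have t4' := S_tri_ab n (fun a b x y => od a * t2 (b - a) * od y * ε (x + y) * c12 a)
  have e3 : S n (fun a b x y => od a * t2 b * od y * ε x * (c12 (a - b) - c12 (a + b))) =
      S n (fun a b x y => od a * t2 b * od y * ε x * c12 (a - b)) -
      S n (fun a b x y => od a * t2 b * od y * ε x * c12 (a + b)) := by
    rw [← S_sub]
    exact S_congr fun a b x y _ _ _ _ _ => by ring
  linarith

/-! ### Weighted Liouville identities at twice an odd number -/

lemma od_one {a : ℤ} (h : a % 2 = 1) : od a = 1 := by simp [od, h]
lemma od_zero {a : ℤ} (h : a % 2 = 0) : od a = 0 := by simp [od, h]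

lemma t2_dil_h1 (b : ℤ) : t2 b * dil 2 h1 b = dil 2 (fun c => od c * c3 c) b := by
  simp only [dil]
  by_cases h : (2 : ℤ) ∣ b
  · rw [if_pos h, if_pos h]
    obtain ⟨c, rfl⟩ := h
    rw [Int.mul_ediv_cancel_left _ two_ne_zero]
    by_cases hc : c % 2 = 0
    · rw [od_zero hc, t2, if_neg (by omega)]; ring
    · rw [od_one (by omega), t2, if_pos (by omega), h1, if_neg hc]
  · rw [if_neg h, if_neg h]; ring

lemma D_od_c3_od (j : ℤ) : D (fun c => od c * c3 c) od j = od j * A3 j := by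
  by_cases hj : j % 2 = 1
  · rw [od_one hj, one_mul, A3]
    refine D_congr fun a x _ _ h => ?_
    obtain ⟨ha, hx⟩ := odd_of_mul hj h
    rw [od_one ha, od_one hx]; ring
  · rw [od_zero (by omega), zero_mul, D]
    refine Finset.sum_eq_zero fun p hp => ?_
    rw [mem_P] at hp
    by_cases h1 : p.1 % 2 = 1
    · by_cases h2 : p.2 % 2 = 1
      · have : p.1 * p.2 % 2 = 1 := by rw [Int.mul_emod, h1, h2]; norm_num
        rw [hp.2.2] at this
        omega
      · rw [od_zero (by omega : p.2 % 2 = 0)]; ring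
    · rw [od_zero (by omega : p.1 % 2 = 0)]; ring

/-- `liouville_weighted` at twice an odd number, with the products evaluated. -/
lemma weighted_eval {N : ℤ} (hN : N % 2 = 1) (ε ψ : ℤ → ℤ) (h4 : ∀ x, ¬ (4 : ℤ) ∣ x → ε x = 0)
    (hev : ∀ x, ε (-x) = ε x) (h0 : ε 0 = 1) (hψ : ∀ x, x % 2 = 0 → ψ x = 0)
    (key : ∀ a b x y, a % 2 = 1 → b % 2 = 1 → x % 2 = 1 → y % 2 = 1 → (a * x + b * y) % 4 = 2 →
      t2 (a + b) * ε (x - y) - t2 (b - a) * ε (x + y) = ψ x * ψ y) :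
    cv (fun i => D g1 ε (2 * i)) (fun j => od j * A3 j) N =
      cv (D c12 ψ) (D od ψ) (2 * N) - A3 N := by
  have e0 : S (2 * N) (fun a b x y => od a * t2 b * od y * ε x * (c12 (a - b) - c12 (a + b))) =
      cv (fun i => D g1 ε (2 * i)) (fun j => od j * A3 j) N := by
    have hY : (fun j => od j * A3 j) = D (fun c => od c * c3 c) od :=
      funext fun j => (D_od_c3_od j).symm
    rw [← cv_dil_right two_pos (D g1 ε), hY]
    have : dil 2 (D (fun c => od c * c3 c) od) = D (dil 2 (fun c => od c * c3 c)) od :=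
      funext fun j => (D_dil_left two_pos _ _ j).symm
    rw [this, ← S_prod]
    refine S_congr fun a b x y _ _ _ _ _ => ?_
    rw [← t2_dil_h1, K1]
    by_cases hb : b % 2 = 0
    · rw [g1_even hb]
      by_cases ha : a % 2 = 1
      · rw [od_one ha]; ring
      · rw [g1_even (by omega : a % 2 = 0)]; ring
    · have : t2 b = 0 := by rw [t2, if_neg (by omega)]
      rw [this]; ring
  have e1 : S (2 * N) (fun a b x y => od a * t2 (a + b) * od y * ε (x - y) * c12 a)
      - S (2 * N) (fun a b x y => od a * t2 (b - a) * od y * ε (x + y) * c12 a) =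
      cv (D c12 ψ) (D od ψ) (2 * N) := by
    rw [← S_prod, ← S_sub]
    refine S_congr fun a b x y _ _ _ _ h => ?_
    by_cases ha : a % 2 = 1
    · by_cases hy : y % 2 = 1
      · have hpar : (a * x + b * y) % 2 = 0 := by omega
        have e : (a * x + b * y) % 2 = (x + b) % 2 := by
          rw [Int.add_emod, Int.mul_emod a, Int.mul_emod b, ha, hy]; simp
        by_cases hx : x % 2 = 1
        · have := key a b x y ha (by omega) hx hy (by omega)
          rw [od_one ha, od_one hy, od_one (by omega : b % 2 = 1)]
          linear_combination c12 a * this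
        · rw [hψ x (by omega), h4 (x - y) (by omega), h4 (x + y) (by omega)]; ring
      · rw [od_zero (by omega : y % 2 = 0), hψ y (by omega)]; ring
    · rw [od_zero (by omega : a % 2 = 0), c12_even (by omega)]; ring
  have e2 : S (2 * N) (fun a b x y =>
      if x = y then od a * t2 (a + b) * od y * ε (x - y) * c12 a else 0) = A3 N := by
    have hY : A3 N = D (dil 2 (fun c => od c * c3 c)) od (2 * N) := by
      rw [D_dil_left two_pos, dil_mul_self two_ne_zero, D_od_c3_od, od_one hN, one_mul]
    rw [S_diag_xy, hY, D]
    refine Finset.sum_congr rfl fun p hp => ?_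
    rw [mem_P] at hp
    have hs : ∀ l, od l * t2 (l + (p.1 - l)) * od p.2 * ε (p.2 - p.2) * c12 l =
        (t2 p.1 * od p.2) * c12 l := by
      intro l
      rw [sub_self, h0, add_sub_cancel]
      by_cases hl : l % 2 = 1
      · rw [od_one hl]; ring
      · rw [c12_even (by omega)]; ring
    simp only [hs]
    rw [← Finset.mul_sum, ← t2_dil_h1]
    have h2 := sum_c12 hp.1
    by_cases h3 : p.1 % 4 = 2
    · rw [c12_even (by omega), g1_even (by omega)] at h2
      have h2' : ∑ l ∈ Finset.Ioo 0 p.1, c12 l = dil 2 h1 p.1 := by linarith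
      rw [h2']; ring
    · rw [t2, if_neg h3]; ring
  have := liouville_weighted (2 * N) ε h4 hev
  linarith

/-- An odd argument makes the weight `od` redundant in a convolution with an even dilation. -/
lemma cv_dil_two_od {N : ℤ} (hN : N % 2 = 1) (f g : ℤ → ℤ) :
    cv (dil 2 f) (fun j => od j * g j) N = cv (dil 2 f) g N := by
  refine cv_congr fun i j _ _ h => ?_
  by_cases hi : (2 : ℤ) ∣ i
  · rw [od_one (by omega)]; ring
  · rw [dil_of_not_dvd hi]; ring

/-- The convolution sum of `A3` and `A4` over odd arguments. -/
noncomputable def oddConv (N : ℤ) : ℤ := cv (fun i => od i * A3 i) A4 (2 * N)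

/-- `weighted_eval` with the weight `ε = [4 ∣ x]`; then `ψ = c4`. -/
lemma identity_O {N : ℤ} (hN : N % 4 = 3) :
    cv (dil 2 G1) A3 N = oddConv N - A3 N := by
  have h := weighted_eval (N := N) (by omega) (fun x => if (4 : ℤ) ∣ x then 1 else 0) c4
    (fun x hx => if_neg hx) (fun x => by simp only [dvd_neg]) (by simp) (fun x => c4_even)
    (by
      intro a b x y ha hb hx hy h
      have ha' : a % 4 = 1 ∨ a % 4 = 3 := by omega
      have hb' : b % 4 = 1 ∨ b % 4 = 3 := by omega
      have hx' : x % 4 = 1 ∨ x % 4 = 3 := by omega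
      have hy' : y % 4 = 1 ∨ y % 4 = 3 := by omega
      rw [Int.add_emod, Int.mul_emod a, Int.mul_emod b] at h
      have d1 : (4 : ℤ) ∣ x - y ↔ x % 4 = y % 4 := by omega
      have d2 : (4 : ℤ) ∣ x + y ↔ x % 4 + y % 4 = 4 := by omega
      have d3 : (a + b) % 4 = 2 ↔ a % 4 = b % 4 := by omega
      have d4 : (b - a) % 4 = 2 ↔ a % 4 + b % 4 = 4 := by omega
      simp only [t2, c4, d1, d2, d3, d4]
      rcases ha' with ha' | ha' <;> rcases hb' with hb' | hb' <;> rcases hx' with hx' | hx' <;>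
        rcases hy' with hy' | hy' <;> simp [ha', hb', hx', hy'] at h ⊢)
  have e1 : (fun i => D g1 (fun x => if (4 : ℤ) ∣ x then 1 else 0) (2 * i)) = dil 2 G1 := by
    funext i
    have : (fun x : ℤ => if (4 : ℤ) ∣ x then (1 : ℤ) else 0) = dil 4 (fun _ => 1) := rfl
    rw [this, D_dil_right (by norm_num), show (4 : ℤ) = 2 * 2 by norm_num,
      ← dil_dil two_ne_zero, dil_mul_self two_ne_zero]
    rfl
  rw [e1, cv_dil_two_od (by omega)] at h
  rw [h, oddConv]
  congr 1
  refine cv_congr fun i j _ _ hij => ?_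
  by_cases hi : i % 2 = 1
  · have hj : j % 2 = 1 := by omega
    have e2 : D od c4 j = A4 j := by
      rw [A4, D_comm]
      refine D_congr fun a x _ _ h => ?_
      rw [od_one (odd_of_mul hj h).2]
    have e3 : D c12 c4 i = c4 i * A3 i := by
      rw [A3, ← D_mul_left]
      refine D_congr fun a x _ _ h => ?_
      rw [← h, c4_mul, c12]; ring
    rw [e2, e3, od_one hi]
    by_cases hj4 : j % 4 = 3
    · rw [A4_three_mod_four hj4]; ring
    · have : c4 i = 1 := by rw [c4, if_pos (by omega)]
      rw [this]
  · have e3 : D c12 c4 i = 0 := by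
      rw [D]
      refine Finset.sum_eq_zero fun p hp => ?_
      rw [mem_P] at hp
      by_cases h1 : p.1 % 2 = 1
      · by_cases h2 : p.2 % 2 = 1
        · have : p.1 * p.2 % 2 = 1 := by rw [Int.mul_emod, h1, h2]; norm_num
          rw [hp.2.2] at this
          omega
        · rw [c4_even (by omega : p.2 % 2 = 0)]; ring
      · rw [c12_even (by omega : p.1 % 2 = 0)]; ring
    rw [e3, od_zero (by omega)]; ring

/-- The sum of `c8` over the positive divisors of `n`. -/
noncomputable def B8 : ℤ → ℤ := D c8 (fun _ => 1)

/-- The sum of `c24` over the positive divisors of `n`. -/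
noncomputable def B24 : ℤ → ℤ := D c24 (fun _ => 1)

/-- The signed convolution sum attached to the forms `2 x² + 3 y²` and `z² + 2 t²`. -/
noncomputable def twoFormConv (N : ℤ) : ℤ :=
  cv (fun i => c8 i * B24 i) (fun j => od j * B8 j) (2 * N)

/-- `weighted_eval` with the weight `ε = (-1) ^ (x / 4)` on the multiples of `4`; then `ψ = c8`. -/
lemma identity_Z {N : ℤ} (hN : N % 4 = 3) :
    cv (dil 2 (fun i => sg i * G1 i)) A3 N = twoFormConv N - A3 N := by
  have h := weighted_eval (N := N) (by omega) (dil 4 sg) c8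
    (fun x hx => dil_of_not_dvd hx _)
    (fun x => by
      simp only [dil, dvd_neg]
      by_cases hx : (4 : ℤ) ∣ x
      · rw [if_pos hx, if_pos hx, sg_congr (by omega : -x / 4 % 2 = x / 4 % 2)]
      · rw [if_neg hx, if_neg hx])
    (by simp [dil, sg]) (fun x => c8_even)
    (by
      intro a b x y ha hb hx hy h
      have ha' : a % 4 = 1 ∨ a % 4 = 3 := by omega
      have hb' : b % 4 = 1 ∨ b % 4 = 3 := by omega
      have hx' : x % 8 = 1 ∨ x % 8 = 3 ∨ x % 8 = 5 ∨ x % 8 = 7 := by omega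
      have hy' : y % 8 = 1 ∨ y % 8 = 3 ∨ y % 8 = 5 ∨ y % 8 = 7 := by omega
      have ex : x % 4 = x % 8 % 4 := by omega
      have ey : y % 4 = y % 8 % 4 := by omega
      rw [Int.add_emod, Int.mul_emod a, Int.mul_emod b, ex, ey] at h
      have d3 : (a + b) % 4 = 2 ↔ a % 4 = b % 4 := by omega
      have d4 : (b - a) % 4 = 2 ↔ a % 4 + b % 4 = 4 := by omega
      have f1 : dil 4 sg (x - y) = if (x % 8 - y % 8) % 8 = 0 then 1 else
          if (x % 8 - y % 8) % 8 = 4 then -1 else 0 := by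
        simp only [dil, sg]
        split_ifs <;> omega
      have f2 : dil 4 sg (x + y) = if (x % 8 + y % 8) % 8 = 0 then 1 else
          if (x % 8 + y % 8) % 8 = 4 then -1 else 0 := by
        simp only [dil, sg]
        split_ifs <;> omega
      rw [f1, f2]
      simp only [t2, c8, d3, d4]
      rcases ha' with ha' | ha' <;> rcases hb' with hb' | hb' <;>
        rcases hx' with hx' | hx' | hx' | hx' <;> rcases hy' with hy' | hy' | hy' | hy' <;>
        simp [ha', hb', hx', hy'] at h ⊢)
  have e1 : (fun i => D g1 (dil 4 sg) (2 * i)) = dil 2 (fun i => sg i * G1 i) := by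
    funext i
    rw [D_dil_right (by norm_num), show (4 : ℤ) = 2 * 2 by norm_num,
      ← dil_dil two_ne_zero, dil_mul_self two_ne_zero]
    congr 1
    funext j
    rw [G1, ← D_mul_left]
    refine D_congr fun a x _ _ h => ?_
    by_cases ha : a % 2 = 1
    · have : j % 2 = x % 2 := by
        rw [← h, Int.mul_emod, ha]; simp
      rw [sg_congr this]; ring
    · rw [g1_even (by omega)]; ring
  rw [e1, cv_dil_two_od (by omega)] at h
  rw [h, twoFormConv]
  congr 1
  refine cv_congr fun i j _ _ hij => ?_
  by_cases hi : i % 2 = 1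
  · have hj : j % 2 = 1 := by omega
    have e2 : D od c8 j = B8 j := by
      rw [B8, D_comm]
      refine D_congr fun a x _ _ h => ?_
      rw [od_one (odd_of_mul hj h).2]
    have e3 : D c12 c8 i = c8 i * B24 i := by
      rw [B24, ← D_mul_left]
      refine D_congr fun a x _ _ h => ?_
      rw [← h, c8_mul, c24]
      linear_combination (- c12 a * c8 x) * c8_sq (odd_of_mul hi h).1
    rw [e2, e3, od_one hj]; ring
  · rw [c8_even (by omega : i % 2 = 0), od_zero (by omega : j % 2 = 0)]
    have e3 : D c12 c8 i = 0 := by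
      rw [D]
      refine Finset.sum_eq_zero fun p hp => ?_
      rw [mem_P] at hp
      by_cases h1 : p.1 % 2 = 1
      · by_cases h2 : p.2 % 2 = 1
        · have : p.1 * p.2 % 2 = 1 := by rw [Int.mul_emod, h1, h2]; norm_num
          rw [hp.2.2] at this
          omega
        · rw [c8_even (by omega : p.2 % 2 = 0)]; ring
      · rw [c12_even (by omega : p.1 % 2 = 0)]; ring
    rw [e3]; ring

/-! ### Linear combinations of the convolution identities -/

lemma dil_three_A4_two_mul (m : ℤ) : dil 3 A4 (2 * m) = dil 3 A4 m := by
  simp only [dil]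
  by_cases h : (3 : ℤ) ∣ m
  · obtain ⟨k, rfl⟩ := h
    rw [if_pos (by omega), if_pos (by omega), show 2 * (3 * k) / 3 = 2 * k by omega,
      show 3 * k / 3 = k by omega, A4_two_mul]
  · rw [if_neg (by omega), if_neg h]

lemma dil_four (f : ℤ → ℤ) : dil 4 f = dil 2 (dil 2 f) := by
  rw [dil_dil two_ne_zero]; norm_num

lemma dil_two_three (f : ℤ → ℤ) : dil 2 (dil 3 f) = dil 6 f := by
  rw [dil_dil two_ne_zero]; norm_num

lemma dil_two_odd {N : ℤ} (h : N % 2 = 1) (f : ℤ → ℤ) : dil 2 f N = 0 :=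
  dil_of_not_dvd (by omega) f

lemma dil_four_odd {N : ℤ} (h : N % 2 = 1) (f : ℤ → ℤ) : dil 4 f N = 0 :=
  dil_of_not_dvd (by omega) f

/-- A convolution at `2 m` with an even dilation, for a first factor insensitive to `2`. -/
lemma cv_two_mul {f : ℤ → ℤ} (hf : ∀ i, f (2 * i) = f i) (g : ℤ → ℤ) (m : ℤ) :
    cv f (dil 2 g) (2 * m) = cv f g m := by
  rw [cv_dil_right two_pos]
  exact cv_congr fun i j _ _ _ => by rw [hf]

lemma G1_fun : G1 = fun i => A4 i + 3 * dil 3 A4 i := funext G1_eq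

lemma dil_two_H1_fun : dil 2 H1 = fun i => dil 2 A3 i + 2 * dil 4 A3 i := by
  funext i
  rw [dil_four]
  simp only [dil]
  by_cases h : (2 : ℤ) ∣ i
  · rw [if_pos h, if_pos h, if_pos h, H1_eq]; rfl
  · rw [if_neg h, if_neg h, if_neg h]; ring

lemma cv_G1_H1 (n : ℤ) : cv G1 (dil 2 H1) n = cv A4 (dil 2 A3) n + 2 * cv A4 (dil 4 A3) n +
    3 * cv (dil 3 A4) (dil 2 A3) n + 6 * cv (dil 3 A4) (dil 4 A3) n := by
  rw [G1_fun, dil_two_H1_fun, cv_add_left, cv_mul_left, cv_add_right, cv_add_right, cv_mul_right,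
    cv_mul_right]
  ring

lemma D_c4_t3 (n : ℤ) : 2 * D c4 t3 n = A4 n - dil 3 A4 n - D c4 c3 n := by
  rw [A4, ← D_dil_right (by norm_num), D_comm c4 t3, D_comm c4 (dil _ _), D_comm c4 (fun _ => 1),
    D_comm c4 c3, ← D_mul_left, ← D_sub_left, ← D_sub_left]
  refine D_congr fun a x _ _ _ => ?_
  congr 1
  simp only [t3, c3, dil]
  split_ifs <;> omega

lemma D_t4_c3 (n : ℤ) :
    2 * D t4 c3 n = 3 * dil 2 A3 n - 2 * dil 4 A3 n - A3 n + D c4 c3 n := by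
  have : A3 = D (fun _ => 1) c3 := funext fun m => D_comm _ _ m
  rw [this, ← D_dil_left (by norm_num), ← D_dil_left (by norm_num), ← D_mul_left, ← D_mul_left,
    ← D_mul_left, ← D_sub_left, ← D_sub_left, ← D_add_left]
  refine D_congr fun a x _ _ _ => ?_
  congr 1
  simp only [t4, c4, dil]
  split_ifs <;> omega

/-- `liouville_odd` expressed through `A4` and `A3`. -/
lemma cv_M (n : ℤ) : 2 * (6 * cv (dil 3 A4) (dil 4 A3) n - 3 * cv (dil 3 A4) (dil 2 A3) n -
    2 * cv A4 (dil 4 A3) n - 3 * cv A4 (dil 2 A3) n + 2 * cv A4 A3 n) =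
    A4 n - dil 3 A4 n + 3 * dil 2 A3 n - 2 * dil 4 A3 n - A3 n := by
  have h := liouville_odd n
  have e1 : D c4 k3 = fun i => 3 * dil 3 A4 i - A4 i := funext D_c4_k3
  have e2 : D s2 c3 = fun i => 2 * dil 4 A3 i - dil 2 A3 i := funext D_s2_c3
  have e3 : D sg c3 = fun i => 2 * dil 2 A3 i - A3 i := funext D_sg_c3
  rw [e1, e2, e3, cv_sub_left, cv_mul_left, cv_sub_right, cv_sub_right, cv_sub_right,
    cv_mul_right, cv_mul_right, cv_mul_right] at h
  linarith [D_c4_t3 n, D_t4_c3 n]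

lemma A3_split (i : ℤ) : A3 i = od i * A3 i + dil 4 A3 i := by
  by_cases h : i % 2 = 1
  · rw [od_one h, dil_four_odd h]; ring
  · obtain ⟨m, rfl⟩ : (2 : ℤ) ∣ i := by omega
    rw [od_zero (by omega), A3_two_mul, dil_four, dil_mul_self two_ne_zero]; ring

lemma A3_split_fun : A3 = fun i => od i * A3 i + dil 4 A3 i := funext A3_split

/-- Consequences of the Liouville identities for `N ≡ 3 (mod 4)`, after discarding the products that
vanish because `A4` and `A3` are zero on suitable residue classes. -/
lemma combination {N : ℤ} (hN : N % 4 = 3) :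
    2 * (cv (dil 2 A4) A3 N + cv (dil 6 A4) A3 N) = A2 N - A3 N ∧
    2 * (cv (dil 2 A4) A3 N + 3 * cv (dil 6 A4) A3 N - 9 * cv (dil 3 A4) (dil 4 A3) N) =
      A1 N + 3 * dil 3 A4 N - 2 * A3 N := by
  have hodd : N % 2 = 1 := by omega
  have hA4 : A4 N = 0 := A4_three_mod_four hN
  have f0 : cv A4 A3 N = cv (dil 2 A4) A3 N := by
    refine cv_congr fun i j _ _ h => ?_
    by_cases hi : i % 2 = 0
    · obtain ⟨m, rfl⟩ : (2 : ℤ) ∣ i := by omega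
      rw [dil_mul_self two_ne_zero, A4_two_mul]
    · rw [dil_two_odd (by omega)]
      by_cases h1 : i % 4 = 3
      · rw [A4_three_mod_four h1]
      · rw [A3_two_mod_four (by omega : j % 4 = 2)]; ring
  have f2 : cv A4 (dil 4 A3) N = 0 := by
    rw [cv_congr (f' := fun _ => 0) (g' := fun _ => 0)]
    · simp [cv]
    · intro i j _ _ h
      by_cases hj : (4 : ℤ) ∣ j
      · rw [A4_three_mod_four (by omega)]; ring
      · rw [dil_of_not_dvd hj]; ring
  have g0 : cv (dil 3 A4) A3 N = cv (dil 6 A4) A3 N + cv (dil 3 A4) (dil 4 A3) N := by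
    conv_lhs => rw [A3_split_fun]
    rw [cv_add_right]
    congr 1
    refine cv_congr fun i j _ _ h => ?_
    by_cases hi : i % 2 = 0
    · obtain ⟨m, rfl⟩ : (2 : ℤ) ∣ i := by omega
      rw [← dil_two_three, dil_mul_self two_ne_zero, dil_three_A4_two_mul, od_one (by omega)]; ring
    · rw [od_zero (by omega), dil_of_not_dvd (by omega : ¬ (6 : ℤ) ∣ i)]; ring
  have o2 : cv A4 A3 (2 * N) = oddConv N + cv A4 (dil 2 A3) N := by
    conv_lhs => rw [A3_split_fun]
    rw [cv_add_right, oddConv, cv_comm (fun i => od i * A3 i), dil_four, cv_two_mul A4_two_mul]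
  have L1 := liouville_even N
  have L2 := liouville_even (2 * N)
  have M1 := cv_M N
  have M2 := cv_M (2 * N)
  have O := identity_O hN
  have e1 : A2 (2 * N) = 2 * A2 N := by
    rw [A2, D_two_mul_odd _ _ hodd, ← A2]
    have h1 : D (fun d => c12 (2 * d)) (fun e => e) N = 0 * D c12 (fun e => e) N := by
      rw [← D_mul_left]
      exact D_congr fun a x _ _ _ => by rw [c12_even (by omega)]; ring
    have h2 : D c12 (fun e => 2 * e) N = 2 * A2 N := by
      rw [A2, ← D_mul_left]
      exact D_congr fun a x _ _ _ => by ring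
    rw [h1, h2]; ring
  have e2 : A1 (2 * N) = A1 N := by
    rw [A1, D_two_mul_odd _ _ hodd]
    have h1 : D (fun d => c12 (2 * d) * (2 * d)) (fun _ => 1) N =
        0 * D c12 (fun e => e) N := by
      rw [← D_mul_left]
      refine D_congr fun a x _ _ _ => by rw [c12_even (by omega)]; ring
    rw [h1]; ring
  have e3 : dil 2 H1 N = 0 := dil_two_odd hodd _
  have e4 : dil 2 H1 (2 * N) = A3 N := by
    rw [dil_mul_self two_ne_zero, H1_eq, dil_two_odd hodd]; ring
  rw [cv_G1_H1, G1_eq, e3, hA4, f2] at L1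
  rw [cv_G1_H1, G1_eq, e1, e2, e4, A4_two_mul, hA4, dil_three_A4_two_mul, dil_four,
    cv_two_mul A4_two_mul, cv_two_mul A4_two_mul, cv_two_mul dil_three_A4_two_mul,
    cv_two_mul dil_three_A4_two_mul, f0, g0] at L2
  rw [f0, f2, hA4, dil_two_odd hodd, dil_four_odd hodd] at M1
  rw [A4_two_mul, hA4, dil_three_A4_two_mul, dil_four, dil_mul_self two_ne_zero,
    dil_mul_self two_ne_zero, A3_two_mul, dil_two_odd hodd, o2,
    cv_two_mul A4_two_mul, cv_two_mul A4_two_mul, cv_two_mul dil_three_A4_two_mul,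
    cv_two_mul dil_three_A4_two_mul, f0, g0] at M2
  have O' : cv (dil 2 A4) A3 N + 3 * cv (dil 6 A4) A3 N = oddConv N - A3 N := by
    have e : dil 2 G1 = fun i => dil 2 A4 i + 3 * dil 6 A4 i := by
      funext i
      rw [← dil_two_three]
      simp only [dil]
      by_cases h : (2 : ℤ) ∣ i
      · rw [if_pos h, if_pos h, if_pos h, G1_eq]; rfl
      · rw [if_neg h, if_neg h, if_neg h]; ring
    rw [← O, e, cv_add_left, cv_mul_left]
  constructor <;> linarith

/-! ### Binary forms and Hecke recursions -/

/-- The integral solutions of `a x² + b y² = n`, for positive `a` and `b`. -/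
noncomputable def Rp (a b n : ℤ) : Finset (ℤ × ℤ) :=
  (Finset.Icc (-n) n ×ˢ Finset.Icc (-n) n).filter fun p => a * p.1 ^ 2 + b * p.2 ^ 2 = n

/-- The number of integral solutions of `a x² + b y² = n`, for positive `a` and `b`. -/
noncomputable def R (a b n : ℤ) : ℤ := (Rp a b n).card

lemma abs_le_of_sq_le {x n : ℤ} (h : x ^ 2 ≤ n) : -n ≤ x ∧ x ≤ n := by
  constructor <;> nlinarith [Int.le_self_sq x, Int.le_self_sq (-x)]

lemma mem_Rp {a b : ℤ} (ha : 0 < a) (hb : 0 < b) {n : ℤ} {p : ℤ × ℤ} :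
    p ∈ Rp a b n ↔ a * p.1 ^ 2 + b * p.2 ^ 2 = n := by
  simp only [Rp, Finset.mem_filter, Finset.mem_product, Finset.mem_Icc]
  refine ⟨fun h => h.2, fun h => ⟨⟨abs_le_of_sq_le ?_, abs_le_of_sq_le ?_⟩, h⟩⟩ <;>
    nlinarith [sq_nonneg p.1, sq_nonneg p.2]

/-- If composition with a prime value `p` maps the form `⟨a', b'⟩` to `⟨a, b⟩`, the representations
of `p m` by `⟨a, b⟩` come from those of `m` by `⟨a', b'⟩` in two ways, which overlap in the
representations divisible by `p`. -/
lemma rep_split {a b a' b' p A B C E : ℤ} (ha : 0 < a) (hb : 0 < b) (ha' : 0 < a') (hb' : 0 < b')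
    (hp : Prime p) (hp2 : ¬ p ∣ 2) (hpa : ¬ p ∣ a) (hpA : ¬ p ∣ A) (hdet : A * E - B * C = p)
    (h1 : a * A ^ 2 + b * C ^ 2 = p * a') (h2 : a * B ^ 2 + b * E ^ 2 = p * b')
    (h3 : a * A * B + b * C * E = 0) (m : ℤ) :
    R a b (p * m) + dil p (R a b) m = 2 * R a' b' m := by
  have hp0 : p ≠ 0 := hp.ne_zero
  have hpC : ¬ p ∣ C := by
    intro h
    have : p ∣ a * A ^ 2 := by
      have e : a * A ^ 2 = p * a' - b * C ^ 2 := by linarith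
      rw [e]
      exact dvd_sub (dvd_mul_right _ _) (dvd_mul_of_dvd_right (dvd_pow h two_ne_zero) _)
    rcases hp.dvd_or_dvd this with h | h
    · exact hpa h
    · exact hpA (hp.dvd_of_dvd_pow h)
  have inj : ∀ x y x' y' : ℤ, A * x + B * y = A * x' + B * y' → C * x + E * y = C * x' + E * y' →
      x = x' ∧ y = y' := by
    intro x y x' y' e1 e2
    constructor <;> apply mul_left_cancel₀ hp0 <;> rw [← hdet]
    · linear_combination E * e1 - B * e2
    · linear_combination A * e2 - C * e1
  have comp : ∀ x y : ℤ, a * (A * x + B * y) ^ 2 + b * (C * x + E * y) ^ 2 =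
      p * (a' * x ^ 2 + b' * y ^ 2) := by
    intro x y
    linear_combination x ^ 2 * h1 + y ^ 2 * h2 + 2 * x * y * h3
  have surj : ∀ X Y : ℤ, p ∣ A * Y - C * X → ∃ x y, X = A * x + B * y ∧ Y = C * x + E * y := by
    intro X Y h
    have h' : p ∣ A * (E * X - B * Y) := by
      have e : A * (E * X - B * Y) = p * X - B * (A * Y - C * X) := by rw [← hdet]; ring
      rw [e]
      exact dvd_sub (dvd_mul_right _ _) (dvd_mul_of_dvd_right h _)
    obtain ⟨x, hx⟩ := (hp.dvd_or_dvd h').resolve_left hpA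
    obtain ⟨y, hy⟩ := h
    refine ⟨x, y, ?_, ?_⟩ <;> apply mul_left_cancel₀ hp0
    · have : p * X = A * (E * X - B * Y) + B * (A * Y - C * X) := by rw [← hdet]; ring
      rw [this, hx, hy]; ring
    · have : p * Y = C * (E * X - B * Y) + E * (A * Y - C * X) := by rw [← hdet]; ring
      rw [this, hx, hy]; ring
  set X1 := (Rp a b (p * m)).filter fun q => p ∣ A * q.2 - C * q.1 with hX1
  set X2 := (Rp a b (p * m)).filter fun q => p ∣ A * q.2 + C * q.1 with hX2
  have c1 : (Rp a' b' m).card = X1.card := by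
    refine Finset.card_bij (fun q _ => (A * q.1 + B * q.2, C * q.1 + E * q.2)) ?_ ?_ ?_
    · rintro ⟨x, y⟩ h
      rw [mem_Rp ha' hb'] at h
      rw [hX1, Finset.mem_filter, mem_Rp ha hb]
      simp only at h ⊢
      exact ⟨by rw [comp, h], y, by rw [← hdet]; ring⟩
    · rintro ⟨x, y⟩ _ ⟨x', y'⟩ _ h
      rw [Prod.mk.injEq] at h
      obtain ⟨e1, e2⟩ := inj _ _ _ _ h.1 h.2
      exact Prod.ext e1 e2
    · rintro ⟨X, Y⟩ h
      rw [hX1, Finset.mem_filter, mem_Rp ha hb] at h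
      obtain ⟨x, y, rfl, rfl⟩ := surj X Y h.2
      refine ⟨(x, y), ?_, rfl⟩
      rw [mem_Rp ha' hb']
      exact mul_left_cancel₀ hp0 (by rw [← comp]; exact h.1)
  have c2 : X1.card = X2.card := by
    refine Finset.card_bij (fun q _ => (q.1, -q.2)) ?_ ?_ ?_
    · rintro ⟨x, y⟩ h
      rw [hX1, Finset.mem_filter, mem_Rp ha hb] at h
      rw [hX2, Finset.mem_filter, mem_Rp ha hb]
      simp only at h ⊢
      refine ⟨by rw [← h.1]; ring, ?_⟩
      have := (dvd_neg).2 h.2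
      rwa [show -(A * y - C * x) = A * -y + C * x by ring] at this
    · rintro ⟨x, y⟩ _ ⟨x', y'⟩ _ h
      rw [Prod.mk.injEq] at h
      exact Prod.ext h.1 (neg_injective h.2)
    · rintro ⟨x, y⟩ h
      rw [hX2, Finset.mem_filter, mem_Rp ha hb] at h
      refine ⟨(x, -y), ?_, by simp⟩
      rw [hX1, Finset.mem_filter, mem_Rp ha hb]
      simp only at h ⊢
      refine ⟨by rw [← h.1]; ring, ?_⟩
      have := (dvd_neg).2 h.2
      rwa [show -(A * y + C * x) = A * -y - C * x by ring] at this
  have hU : X1 ∪ X2 = Rp a b (p * m) := by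
    ext ⟨X, Y⟩
    rw [Finset.mem_union, hX1, hX2, Finset.mem_filter, Finset.mem_filter, ← and_or_left]
    refine ⟨fun h => h.1, fun h => ⟨h, ?_⟩⟩
    rw [mem_Rp ha hb] at h
    simp only at h ⊢
    have : p ∣ a * ((A * Y - C * X) * (A * Y + C * X)) := by
      refine ⟨a' * Y ^ 2 - C ^ 2 * m, ?_⟩
      linear_combination Y ^ 2 * h1 - C ^ 2 * h
    exact hp.dvd_or_dvd ((hp.dvd_or_dvd this).resolve_left hpa)
  have hI : ((X1 ∩ X2).card : ℤ) = dil p (R a b) m := by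
    have hdiv : ∀ q : ℤ × ℤ, q ∈ X1 ∩ X2 ↔
        p ∣ q.1 ∧ p ∣ q.2 ∧ a * q.1 ^ 2 + b * q.2 ^ 2 = p * m := by
      rintro ⟨X, Y⟩
      rw [Finset.mem_inter, hX1, hX2, Finset.mem_filter, Finset.mem_filter, mem_Rp ha hb]
      simp only
      constructor
      · rintro ⟨⟨h, d1⟩, _, d2⟩
        have e1 : p ∣ 2 * (A * Y) := by
          have := dvd_add d1 d2
          rwa [show A * Y - C * X + (A * Y + C * X) = 2 * (A * Y) by ring] at this
        have e2 : p ∣ 2 * (C * X) := by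
          have := dvd_sub d2 d1
          rwa [show A * Y + C * X - (A * Y - C * X) = 2 * (C * X) by ring] at this
        have e1 := (hp.dvd_or_dvd ((hp.dvd_or_dvd e1).resolve_left hp2)).resolve_left hpA
        have e2 := (hp.dvd_or_dvd ((hp.dvd_or_dvd e2).resolve_left hp2)).resolve_left hpC
        exact ⟨e2, e1, h⟩
      · rintro ⟨e2, e1, h⟩
        exact ⟨⟨h, dvd_sub (dvd_mul_of_dvd_right e1 _) (dvd_mul_of_dvd_right e2 _)⟩, h,
          dvd_add (dvd_mul_of_dvd_right e1 _) (dvd_mul_of_dvd_right e2 _)⟩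
    by_cases hm : p ∣ m
    · obtain ⟨l, rfl⟩ := hm
      rw [dil_mul_self hp0, R, Nat.cast_inj, eq_comm]
      refine Finset.card_bij (fun q _ => (p * q.1, p * q.2)) ?_ ?_ ?_
      · rintro ⟨x, y⟩ h
        rw [mem_Rp ha hb] at h
        rw [hdiv]
        exact ⟨dvd_mul_right _ _, dvd_mul_right _ _, by rw [← h]; ring⟩
      · rintro ⟨x, y⟩ _ ⟨x', y'⟩ _ h
        rw [Prod.mk.injEq] at h
        exact Prod.ext (mul_left_cancel₀ hp0 h.1) (mul_left_cancel₀ hp0 h.2)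
      · rintro ⟨X, Y⟩ h
        rw [hdiv] at h
        obtain ⟨⟨x, rfl⟩, ⟨y, rfl⟩, h⟩ := h
        refine ⟨(x, y), ?_, rfl⟩
        rw [mem_Rp ha hb]
        apply mul_left_cancel₀ hp0
        apply mul_left_cancel₀ hp0
        rw [← h]; ring
    · rw [dil_of_not_dvd hm, Nat.cast_eq_zero, Finset.card_eq_zero, Finset.eq_empty_iff_forall_notMem]
      rintro ⟨X, Y⟩ h
      rw [hdiv] at h
      obtain ⟨⟨x, rfl⟩, ⟨y, rfl⟩, h⟩ := h
      exact hm ⟨a * x ^ 2 + b * y ^ 2, mul_left_cancel₀ hp0 (by rw [← h]; ring)⟩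
  have := Finset.card_union_add_card_inter X1 X2
  rw [hU] at this
  rw [← hI, R, R, c1]
  rw [← c2] at this
  rw [← Nat.cast_add, this]
  push_cast; ring

/-- If `p` divides a value only when it divides both variables, the representations of `p m` come
from those of `m / p`. -/
lemma rep_inert {a b p : ℤ} (ha : 0 < a) (hb : 0 < b) (hp0 : p ≠ 0)
    (h : ∀ X Y : ℤ, p ∣ a * X ^ 2 + b * Y ^ 2 → p ∣ X ∧ p ∣ Y) (m : ℤ) :
    R a b (p * m) = dil p (R a b) m := by
  by_cases hm : p ∣ m
  · obtain ⟨l, rfl⟩ := hm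
    rw [dil_mul_self hp0, R, R, Nat.cast_inj, eq_comm]
    refine Finset.card_bij (fun q _ => (p * q.1, p * q.2)) ?_ ?_ ?_
    · rintro ⟨x, y⟩ h
      rw [mem_Rp ha hb] at h ⊢
      rw [← h]; ring
    · rintro ⟨x, y⟩ _ ⟨x', y'⟩ _ h
      rw [Prod.mk.injEq] at h
      exact Prod.ext (mul_left_cancel₀ hp0 h.1) (mul_left_cancel₀ hp0 h.2)
    · rintro ⟨X, Y⟩ hXY
      rw [mem_Rp ha hb] at hXY
      obtain ⟨⟨x, rfl⟩, y, rfl⟩ := h X Y ⟨_, hXY⟩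
      refine ⟨(x, y), ?_, rfl⟩
      rw [mem_Rp ha hb]
      apply mul_left_cancel₀ hp0
      apply mul_left_cancel₀ hp0
      rw [← hXY]; ring
  · rw [dil_of_not_dvd hm, R, Nat.cast_eq_zero, Finset.card_eq_zero,
      Finset.eq_empty_iff_forall_notMem]
    rintro ⟨X, Y⟩ hXY
    rw [mem_Rp ha hb] at hXY
    obtain ⟨⟨x, rfl⟩, y, rfl⟩ := h X Y ⟨_, hXY⟩
    exact hm ⟨a * x ^ 2 + b * y ^ 2, mul_left_cancel₀ hp0 (by rw [← hXY]; ring)⟩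

/-- In a representation of `p m` by `a X² + p b Y²` the prime `p` divides `X`. -/
lemma rep_ramified {a b p : ℤ} (ha : 0 < a) (hb : 0 < b) (hp : Prime p) (hp0 : 0 < p)
    (hpa : ¬ p ∣ a) (m : ℤ) : R a (p * b) (p * m) = R b (p * a) m := by
  rw [R, R, Nat.cast_inj, eq_comm]
  refine Finset.card_bij (fun q _ => (p * q.2, q.1)) ?_ ?_ ?_
  · rintro ⟨x, y⟩ h
    rw [mem_Rp hb (by positivity)] at h
    rw [mem_Rp ha (by positivity), ← h]; ring
  · rintro ⟨x, y⟩ _ ⟨x', y'⟩ _ h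
    rw [Prod.mk.injEq] at h
    exact Prod.ext h.2 (mul_left_cancel₀ hp.ne_zero h.1)
  · rintro ⟨X, Y⟩ h
    rw [mem_Rp ha (by positivity)] at h
    have : p ∣ a * X ^ 2 := ⟨m - b * Y ^ 2, by linear_combination h⟩
    obtain ⟨x, rfl⟩ := hp.dvd_of_dvd_pow ((hp.dvd_or_dvd this).resolve_left hpa)
    refine ⟨(Y, x), ?_, rfl⟩
    rw [mem_Rp hb (by positivity)]
    apply mul_left_cancel₀ hp.ne_zero
    rw [← h]; ring

/-- A function on the odd positive integers satisfying the Hecke recursion of a divisor sum is a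
multiple of it. -/
lemma uniq {χ : ℤ → ℤ} (hχ : ∀ a b, χ (a * b) = χ a * χ b) (hχ1 : χ 1 = 1) {F : ℤ → ℤ} {c : ℤ}
    (h1 : F 1 = c)
    (h : ∀ p : ℕ, p.Prime → p ≠ 2 → ∀ m : ℤ,
      F (p * m) = (1 + χ p) * F m - χ p * dil p F m) {n : ℤ} (hn : 0 < n) (hodd : n % 2 = 1) :
    F n = c * D χ (fun _ => 1) n := by
  obtain ⟨k, rfl⟩ := Int.eq_ofNat_of_zero_le hn.le
  induction k using Nat.strong_induction_on with
  | _ k ih =>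
    by_cases hk : k = 1
    · subst hk
      have : P 1 = {(1, 1)} := by decide +kernel
      simp [D, this, hχ1, h1]
    · obtain ⟨p, hp, m, rfl⟩ := Nat.exists_prime_and_dvd hk
      have hm : 0 < m := by
        rcases Nat.eq_zero_or_pos m with h | h
        · simp [h] at hn
        · exact h
      have hpi := Nat.prime_iff_prime_int.1 hp
      have hodd' := odd_of_mul hodd (Nat.cast_mul p m).symm
      have hp2 : p ≠ 2 := by rintro rfl; simp at hodd'
      have hlt : m < p * m := by nlinarith [hp.two_le]
      have e1 := ih m hlt (by exact_mod_cast hm) hodd'.2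
      have e2 : dil p F m = c * dil p (D χ (fun _ => 1)) m := by
        by_cases hd : p ∣ m
        · obtain ⟨l, rfl⟩ := hd
          have hl : 0 < l := Nat.pos_of_mul_pos_left hm
          push_cast
          rw [dil_mul_self hpi.ne_zero, dil_mul_self hpi.ne_zero]
          refine ih l ?_ (by exact_mod_cast hl) (odd_of_mul hodd'.2 (Nat.cast_mul p l).symm).2
          nlinarith [hp.two_le]
        · have hd' : ¬ (p : ℤ) ∣ m := by exact_mod_cast hd
          rw [dil_of_not_dvd hd', dil_of_not_dvd hd']; ring
      have hp0 : (0 : ℤ) < p := by exact_mod_cast hp.pos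
      push_cast
      rw [h p hp hp2, D_prime_mul hχ hpi hp0, e1, e2]
      ring

/-! ### Jacobi symbols and the lemma of Thue -/

/-- A function with the period `4 |a|` of the Jacobi symbol `(a / ·)` agrees with it on odd
arguments as soon as it does on a system of residues. -/
lemma jacobi_aux {a : ℤ} {c : ℤ → ℤ} (m : ℕ) (hm : 4 * a.natAbs = m)
    (hc : ∀ b b' : ℤ, b % m = b' % m → c b = c b')
    (h : ∀ r < m, r % 2 = 1 → jacobiSym a r = c r) {b : ℕ} (hb : b % 2 = 1) (hm0 : 0 < m) :
    jacobiSym a b = c b := by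
  rw [jacobiSym.mod_right a (Nat.odd_iff.2 hb), hm,
    h _ (Nat.mod_lt _ hm0) (by rw [Nat.mod_mod_of_dvd _ (by omega : 2 ∣ m), hb])]
  refine hc _ _ ?_
  push_cast
  rw [Int.emod_emod]

lemma jacobi_neg_one {b : ℕ} (hb : b % 2 = 1) : jacobiSym (-1) b = c4 b := by
  refine jacobi_aux (c := c4) 4 (by norm_num) (fun b b' h => c4_congr (by exact_mod_cast h)) ?_ hb
    (by norm_num)
  intro r hr ho
  interval_cases r <;> simp at ho <;> norm_num [c4]

lemma jacobi_neg_two {b : ℕ} (hb : b % 2 = 1) : jacobiSym (-2) b = c8 b := by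
  refine jacobi_aux (c := c8) 8 (by norm_num) (fun b b' h => c8_congr (by exact_mod_cast h)) ?_ hb
    (by norm_num)
  intro r hr ho
  interval_cases r <;> simp at ho <;> norm_num [c8]

lemma jacobi_neg_three {b : ℕ} (hb : b % 2 = 1) : jacobiSym (-3) b = c3 b := by
  refine jacobi_aux (c := c3) 12 (by norm_num) (fun b b' h => c3_congr (by push_cast at h; omega)) ?_ hb
    (by norm_num)
  intro r hr ho
  interval_cases r <;> simp at ho <;> norm_num [c3]

lemma jacobi_three {b : ℕ} (hb : b % 2 = 1) : jacobiSym 3 b = c12 b := by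
  refine jacobi_aux (c := c12) 12 (by norm_num) (fun b b' h => c12_congr (by exact_mod_cast h)) ?_ hb
    (by norm_num)
  intro r hr ho
  interval_cases r <;> simp at ho <;> norm_num [c12, c4, c3]

lemma jacobi_neg_six {b : ℕ} (hb : b % 2 = 1) : jacobiSym (-6) b = c24 b := by
  refine jacobi_aux (c := c24) 24 (by norm_num) (fun b b' h => ?_) ?_ hb (by norm_num)
  · push_cast at h
    rw [c24, c24, c12_congr (by omega : b % 12 = b' % 12), c8_congr (by omega : b % 8 = b' % 8)]
  · intro r hr ho
    interval_cases r <;> simp at ho <;> norm_num [c24, c12, c8, c4, c3]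

/-- Thue's lemma: if `-k` is a square modulo the prime `p`, some multiple `c p` with `0 < c ≤ k` is
represented by `x² + k y²`. -/
lemma thue {p : ℕ} [Fact p.Prime] {k : ℕ} (hk : 0 < k) (h : IsSquare (-(k : ZMod p))) :
    ∃ x y c : ℤ, 0 < c ∧ c ≤ k ∧ x ^ 2 + k * y ^ 2 = c * p := by
  obtain ⟨s, hs⟩ := h
  have hp : p.Prime := Fact.out
  set r := p.sqrt with hr
  have hr1 : p < (r + 1) * (r + 1) := Nat.lt_succ_sqrt p
  have hr2 : r * r < p := by
    refine lt_of_le_of_ne (Nat.sqrt_le p) fun h => ?_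
    exact hp.prime.irreducible.not_isSquare ⟨r, h.symm⟩
  obtain ⟨⟨a, b⟩, ⟨a', b'⟩, hne, heq⟩ := Fintype.exists_ne_map_eq_of_card_lt
    (fun q : Fin (r + 1) × Fin (r + 1) => ((q.1 : ℕ) : ZMod p) - s * ((q.2 : ℕ) : ZMod p))
    (by rw [ZMod.card, Fintype.card_prod, Fintype.card_fin]; exact hr1)
  simp only at heq
  set x : ℤ := (a : ℕ) - (a' : ℕ) with hx
  set y : ℤ := (b : ℕ) - (b' : ℕ) with hy
  have hx2 : x ^ 2 ≤ (r : ℤ) * r := by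
    have h1 := a.isLt
    have h2 := a'.isLt
    have : -(r : ℤ) ≤ x ∧ x ≤ r := by omega
    nlinarith
  have hy2 : y ^ 2 ≤ (r : ℤ) * r := by
    have h1 := b.isLt
    have h2 := b'.isLt
    have : -(r : ℤ) ≤ y ∧ y ≤ r := by omega
    nlinarith
  have hpos : 0 < x ^ 2 + k * y ^ 2 := by
    have hk' : (0 : ℤ) < k := by exact_mod_cast hk
    by_contra hcon
    have hx0 : x = 0 := by
      have : x ^ 2 = 0 := by nlinarith [sq_nonneg x, mul_nonneg hk'.le (sq_nonneg y)]
      exact pow_eq_zero_iff two_ne_zero |>.1 this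
    have hy0 : y = 0 := by
      have : (k : ℤ) * y ^ 2 = 0 := by nlinarith [sq_nonneg x, mul_nonneg hk'.le (sq_nonneg y)]
      exact pow_eq_zero_iff two_ne_zero |>.1 ((mul_eq_zero.1 this).resolve_left hk'.ne')
    apply hne
    ext
    · simp only; omega
    · simp only; omega
  have hdvd : (p : ℤ) ∣ x ^ 2 + k * y ^ 2 := by
    rw [← ZMod.intCast_zmod_eq_zero_iff_dvd _ p, ]
    push_cast
    have e : (x : ZMod p) = s * y := by
      rw [hx, hy]; push_cast
      linear_combination heq
    rw [e]
    linear_combination (- (y : ZMod p) ^ 2) * hs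
  obtain ⟨c, hc⟩ := hdvd
  have hp0 : (0 : ℤ) < p := by exact_mod_cast hp.pos
  have hr2' : (r : ℤ) * r < p := by exact_mod_cast hr2
  refine ⟨x, y, c, ?_, ?_, by rw [hc]; ring⟩
  · by_contra hcon
    nlinarith
  · have : c < (k : ℤ) + 1 := by
      by_contra hcon
      push Not at hcon
      have hk' : (0 : ℤ) < k := by exact_mod_cast hk
      nlinarith
    omega

lemma isSquare_of_jacobi {p : ℕ} [Fact p.Prime] {k : ℕ} (h : jacobiSym (-k) p = 1) :
    IsSquare (-(k : ZMod p)) := by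
  rw [← jacobiSym.legendreSym.to_jacobiSym] at h
  have h0 : ((-(k : ℤ) : ℤ) : ZMod p) ≠ 0 := by
    intro h0
    rw [(legendreSym.eq_zero_iff p _).2 h0] at h
    exact absurd h (by norm_num)
  have := (legendreSym.eq_one_iff p h0).1 h
  push_cast at this
  exact this

lemma dvd_of_jacobi {p : ℕ} [Fact p.Prime] {a b : ℕ} (h : jacobiSym (-(a * b : ℕ)) p = -1)
    (X Y : ℤ) (hd : (p : ℤ) ∣ a * X ^ 2 + b * Y ^ 2) : (p : ℤ) ∣ X ∧ (p : ℤ) ∣ Y := by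
  rw [← jacobiSym.legendreSym.to_jacobiSym, legendreSym.eq_neg_one_iff] at h
  simp only [← ZMod.intCast_zmod_eq_zero_iff_dvd] at hd ⊢
  push_cast at h hd ⊢
  have hY : (Y : ZMod p) = 0 := by
    by_contra hY
    refine h ⟨a * X / Y, ?_⟩
    field_simp
    linear_combination (-(a : ZMod p)) * hd
  refine ⟨?_, hY⟩
  by_contra hX
  rw [hY] at hd
  have ha : (a : ZMod p) = 0 := by
    simpa [hX] using hd
  refine h ⟨0, by rw [ha]; ring⟩

/-! ### Representation numbers of binary forms -/

lemma dvd_of_jacobi_eq_zero {p : ℕ} [Fact p.Prime] {k : ℕ} (h : jacobiSym (-k) p = 0) : p ∣ k := by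
  rw [← jacobiSym.legendreSym.to_jacobiSym, legendreSym.eq_zero_iff,
    ZMod.intCast_zmod_eq_zero_iff_dvd, dvd_neg] at h
  exact_mod_cast h

lemma not_dvd_two {p : ℕ} (hp : p.Prime) (h2 : p ≠ 2) : ¬ (p : ℤ) ∣ 2 := by
  intro h
  exact h2 ((Nat.prime_dvd_prime_iff_eq hp Nat.prime_two).1 (by exact_mod_cast h))

lemma not_dvd_of_rep {p k u v : ℤ} {c : ℤ} (hp : Prime p) (hk : ¬ p ∣ k)
    (h : c * u ^ 2 + k * v ^ 2 = p) : ¬ p ∣ u := by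
  intro hu
  have h1 : p ∣ k * v ^ 2 := by
    have e : k * v ^ 2 = p - c * u ^ 2 := by linarith
    rw [e]
    exact dvd_sub dvd_rfl (dvd_mul_of_dvd_right (dvd_pow hu two_ne_zero) _)
  have hv := hp.dvd_of_dvd_pow ((hp.dvd_or_dvd h1).resolve_left hk)
  obtain ⟨u', hu⟩ := hu
  obtain ⟨v', hv⟩ := hv
  refine hp.not_isUnit (IsUnit.of_mul_eq_one (c * u' ^ 2 + k * v' ^ 2) ?_)
  apply mul_left_cancel₀ hp.ne_zero
  rw [hu, hv] at h
  linear_combination h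

/-- The composition of `rep_split` with a prime represented by the principal form `u² + a b v²`, which
preserves the class of `a x² + b y²`. -/
lemma step_split {a b u v p : ℤ} (ha : 0 < a) (hb : 0 < b) (hp : Prime p) (hp2 : ¬ p ∣ 2)
    (hab : ¬ p ∣ a * b) (h : u ^ 2 + a * b * v ^ 2 = p) (m : ℤ) :
    R a b (p * m) + dil p (R a b) m = 2 * R a b m := by
  refine rep_split (A := u) (B := -(b * v)) (C := a * v) (E := u) ha hb ha hb hp hp2
    (fun h => hab (dvd_mul_of_dvd_left h _)) ?_ ?_ ?_ ?_ ?_ m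
  · exact not_dvd_of_rep (c := 1) (v := v) hp hab (by linarith)
  · linear_combination h
  · linear_combination a * h
  · linear_combination b * h
  · ring

/-- The Hecke recursion for `x² + k y²`, when every split prime is represented by that form. -/
lemma hecke_principal {k : ℕ} (hk : 0 < k) {χ : ℤ → ℤ} {p : ℕ} (hp : p.Prime) (hp2 : p ≠ 2)
    (hχ : jacobiSym (-k) p = χ p)
    (hrep : χ p = 1 → ∃ u v : ℤ, u ^ 2 + k * v ^ 2 = p)
    (hram : (p : ℤ) ∣ k → ∀ m, R 1 k (p * m) = R 1 k m) (m : ℤ) :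
    R 1 k (p * m) = (1 + χ p) * R 1 k m - χ p * dil p (R 1 k) m := by
  have : Fact p.Prime := ⟨hp⟩
  have hpi := Nat.prime_iff_prime_int.1 hp
  have hk' : (0 : ℤ) < k := by exact_mod_cast hk
  rcases jacobiSym.trichotomy (-k) p with h | h | h
  · have h3 := dvd_of_jacobi_eq_zero h
    rw [← hχ, h, hram (by exact_mod_cast h3)]; ring
  · obtain ⟨u, v, huv⟩ := hrep (hχ ▸ h)
    have hnd : ¬ (p : ℤ) ∣ 1 * k := by
      rw [one_mul]
      intro hd
      have h0 : jacobiSym (-k) p = 0 := by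
        rw [← jacobiSym.legendreSym.to_jacobiSym, legendreSym.eq_zero_iff,
          ZMod.intCast_zmod_eq_zero_iff_dvd, dvd_neg]
        exact hd
      rw [h0] at h; exact absurd h (by norm_num)
    have := step_split one_pos hk' hpi (not_dvd_two hp hp2) hnd (by rw [one_mul]; exact huv) m
    rw [← hχ, h]; linarith
  · have := rep_inert one_pos hk' hpi.ne_zero (fun X Y hd => dvd_of_jacobi (a := 1) (b := k)
      (by rw [one_mul]; exact h) X Y (by push_cast; exact hd)) m
    rw [← hχ, h, this]; ring

lemma odd_prime {p : ℕ} (hp : p.Prime) (h2 : p ≠ 2) : p % 2 = 1 :=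
  (hp.eq_two_or_odd).resolve_left h2

lemma R11_odd {n : ℤ} (hn : 0 < n) (hodd : n % 2 = 1) : R 1 1 n = 4 * A4 n := by
  refine uniq c4_mul (by decide) ?_ ?_ hn hodd
  · have : (Rp 1 1 1).card = 4 := by decide +kernel
    rw [R, this]; rfl
  · intro p hp hp2 m
    have : Fact p.Prime := ⟨hp⟩
    have hχ := jacobi_neg_one (odd_prime hp hp2)
    refine hecke_principal (k := 1) one_pos hp hp2 hχ ?_ ?_ m
    · intro h
      obtain ⟨x, y, c, h0, h1, h2⟩ := thue (p := p) (k := 1) one_pos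
        (isSquare_of_jacobi (by rw [← h, ← hχ]; rfl))
      obtain rfl : c = 1 := by push_cast at h1; omega
      exact ⟨x, y, by linarith⟩
    · intro h
      exact absurd (Nat.dvd_one.1 (by exact_mod_cast h)) hp.one_lt.ne'

lemma R11_two_mul (n : ℤ) : R 1 1 (2 * n) = R 1 1 n := by
  rw [R, R, Nat.cast_inj, eq_comm]
  refine Finset.card_bij (fun q _ => (q.1 + q.2, q.1 - q.2)) ?_ ?_ ?_
  · rintro ⟨x, y⟩ h
    rw [mem_Rp one_pos one_pos] at h ⊢
    rw [← h]; ring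
  · rintro ⟨x, y⟩ _ ⟨x', y'⟩ _ h
    rw [Prod.mk.injEq] at h
    simp only at h
    exact Prod.ext (by simp only; omega) (by simp only; omega)
  · rintro ⟨X, Y⟩ h
    rw [mem_Rp one_pos one_pos] at h
    simp only [one_mul] at h
    have : (X + Y) % 2 = 0 := by
      have e : (X + Y) ^ 2 % 2 = 0 := by
        have : (X + Y) ^ 2 = 2 * (n + X * Y) := by linear_combination h
        omega
      rcases Int.emod_two_eq_zero_or_one (X + Y) with h | h
      · exact h
      · rw [pow_two, Int.mul_emod, h] at e; norm_num at e
    refine ⟨((X + Y) / 2, (X - Y) / 2), ?_, Prod.ext (by simp only; omega) (by simp only; omega)⟩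
    obtain ⟨s, hs⟩ : (2 : ℤ) ∣ X + Y := by omega
    have e1 : (X + Y) / 2 = s := by omega
    have e2 : (X - Y) / 2 = s - Y := by omega
    rw [mem_Rp one_pos one_pos, e1, e2]
    obtain rfl : X = 2 * s - Y := by omega
    simp only
    linarith

lemma R11_eq {n : ℤ} (hn : 0 < n) : R 1 1 n = 4 * A4 n := by
  obtain ⟨k, rfl⟩ := Int.eq_ofNat_of_zero_le hn.le
  induction k using Nat.strong_induction_on with
  | _ k ih =>
    by_cases hk : (k : ℤ) % 2 = 1
    · exact R11_odd hn hk
    · obtain ⟨m, rfl⟩ : 2 ∣ k := by omega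
      push_cast at hn ⊢
      rw [R11_two_mul, A4_two_mul]
      exact ih m (by omega) (by omega)

lemma R12_odd {n : ℤ} (hn : 0 < n) (hodd : n % 2 = 1) : R 1 2 n = 2 * B8 n := by
  refine uniq c8_mul (by decide) ?_ ?_ hn hodd
  · have : (Rp 1 2 1).card = 2 := by decide +kernel
    rw [R, this]; rfl
  · intro p hp hp2 m
    have : Fact p.Prime := ⟨hp⟩
    have hχ := jacobi_neg_two (odd_prime hp hp2)
    refine hecke_principal (k := 2) two_pos hp hp2 hχ ?_ ?_ m
    · intro h
      obtain ⟨x, y, c, h0, h1, h2⟩ := thue (p := p) (k := 2) two_pos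
        (isSquare_of_jacobi (by rw [← h, ← hχ]; rfl))
      push_cast at h1 h2 ⊢
      have : c = 1 ∨ c = 2 := by omega
      rcases this with rfl | rfl
      · exact ⟨x, y, by linarith⟩
      · have : (2 : ℤ) ∣ x ^ 2 := ⟨p - y ^ 2, by linarith⟩
        obtain ⟨x, rfl⟩ := Int.prime_two.dvd_of_dvd_pow this
        exact ⟨y, x, by linarith⟩
    · intro h
      exact absurd h (not_dvd_two hp hp2)

lemma sq_mod_four (x : ℤ) : x ^ 2 % 4 = x % 2 := by
  rcases Int.emod_two_eq_zero_or_one x with h | h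
  · obtain ⟨k, rfl⟩ : (2 : ℤ) ∣ x := by omega
    have : (2 * k) ^ 2 = 4 * k ^ 2 := by ring
    omega
  · obtain ⟨k, rfl⟩ : ∃ k, x = 2 * k + 1 := ⟨x / 2, by omega⟩
    have : (2 * k + 1) ^ 2 = 4 * (k ^ 2 + k) + 1 := by ring
    omega

lemma hecke_R13 {p : ℕ} (hp : p.Prime) (hp2 : p ≠ 2) (m : ℤ) :
    R 1 3 (p * m) = (1 + c3 p) * R 1 3 m - c3 p * dil p (R 1 3) m := by
  have : Fact p.Prime := ⟨hp⟩
  have hχ := jacobi_neg_three (odd_prime hp hp2)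
  refine hecke_principal (k := 3) three_pos hp hp2 hχ ?_ ?_ m
  · intro h
    obtain ⟨x, y, c, h0, h1, h2⟩ := thue (p := p) (k := 3) three_pos
      (isSquare_of_jacobi (by rw [← h, ← hχ]; rfl))
    push_cast at h1 h2 ⊢
    have : c = 1 ∨ c = 2 ∨ c = 3 := by omega
    rcases this with rfl | rfl | rfl
    · exact ⟨x, y, by linarith⟩
    · have := odd_prime hp hp2
      have := sq_mod_four x
      have := sq_mod_four y
      rcases Int.emod_two_eq_zero_or_one x with h | h <;>
        rcases Int.emod_two_eq_zero_or_one y with h' | h' <;> omega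
    · have : (3 : ℤ) ∣ x ^ 2 := ⟨p - y ^ 2, by linarith⟩
      obtain ⟨x, rfl⟩ := Int.prime_three.dvd_of_dvd_pow this
      exact ⟨y, x, by linarith⟩
  · intro h m
    obtain rfl : p = 3 := (Nat.prime_dvd_prime_iff_eq hp Nat.prime_three).1 (by exact_mod_cast h)
    have := rep_ramified (a := 1) (b := 1) (p := 3) one_pos one_pos Int.prime_three three_pos
      (by norm_num) m
    norm_num at this ⊢
    exact this

lemma R13_odd {n : ℤ} (hn : 0 < n) (hodd : n % 2 = 1) : R 1 3 n = 2 * A3 n := by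
  refine uniq c3_mul (by decide) ?_ (fun p hp hp2 m => hecke_R13 hp hp2 m) hn hodd
  have : (Rp 1 3 1).card = 2 := by decide +kernel
  rw [R, this]; rfl

lemma R13_four_mul_odd {n : ℤ} (hn : 0 < n) (hodd : n % 2 = 1) : R 1 3 (4 * n) = 6 * A3 n := by
  refine uniq (F := fun n => R 1 3 (4 * n)) c3_mul (by decide) ?_ ?_ hn hodd
  · have : (Rp 1 3 4).card = 6 := by decide +kernel
    simp only [mul_one]
    rw [R, this]; rfl
  · intro p hp hp2 m
    have hpi := Nat.prime_iff_prime_int.1 hp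
    have e : dil p (R 1 3) (4 * m) = dil p (fun n => R 1 3 (4 * n)) m := by
      by_cases h : (p : ℤ) ∣ m
      · obtain ⟨l, rfl⟩ := h
        rw [show 4 * (p * l : ℤ) = p * (4 * l) by ring, dil_mul_self hpi.ne_zero,
          dil_mul_self hpi.ne_zero]
      · rw [dil_of_not_dvd h, dil_of_not_dvd]
        intro h'
        rw [show (4 : ℤ) * m = 2 * (2 * m) by ring] at h'
        have n2 := not_dvd_two hp hp2
        exact h ((hpi.dvd_or_dvd ((hpi.dvd_or_dvd h').resolve_left n2)).resolve_left n2)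
    rw [show 4 * (p * m : ℤ) = p * (4 * m) by ring, hecke_R13 hp hp2, e]

lemma R13_eight_mul (m : ℤ) : R 1 3 (4 * (2 * m)) = R 1 3 (2 * m) := by
  rw [R, R, Nat.cast_inj, eq_comm]
  refine Finset.card_bij (fun q _ => (2 * q.1, 2 * q.2)) ?_ ?_ ?_
  · rintro ⟨x, y⟩ h
    rw [mem_Rp one_pos three_pos] at h ⊢
    rw [← h]; ring
  · rintro ⟨x, y⟩ _ ⟨x', y'⟩ _ h
    rw [Prod.mk.injEq] at h
    simp only at h
    exact Prod.ext (by simp only; omega) (by simp only; omega)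
  · rintro ⟨X, Y⟩ h
    rw [mem_Rp one_pos three_pos] at h
    simp only [one_mul] at h
    have hX := sq_mod_four X
    have hY := sq_mod_four Y
    have : X % 2 = 0 ∧ Y % 2 = 0 := by
      by_cases h1 : X % 2 = 1
      · exfalso
        obtain ⟨s, rfl⟩ : ∃ k, X = 2 * k + 1 := ⟨X / 2, by omega⟩
        obtain ⟨t, rfl⟩ : ∃ k, Y = 2 * k + 1 := ⟨Y / 2, by omega⟩
        have e1 := Int.even_mul_succ_self s
        have e2 := Int.even_mul_succ_self t
        rw [Int.even_iff] at e1 e2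
        have : (2 * s + 1) ^ 2 + 3 * (2 * t + 1) ^ 2 =
          4 * (s * (s + 1)) + 12 * (t * (t + 1)) + 4 := by ring
        omega
      · omega
    obtain ⟨x, rfl⟩ : (2 : ℤ) ∣ X := by omega
    obtain ⟨y, rfl⟩ : (2 : ℤ) ∣ Y := by omega
    refine ⟨(x, y), ?_, rfl⟩
    rw [mem_Rp one_pos three_pos]
    simp only
    linarith

lemma R13_two_mul_odd {m : ℤ} (hm : m % 2 = 1) : R 1 3 (2 * m) = 0 := by
  rw [R, Nat.cast_eq_zero, Finset.card_eq_zero, Finset.eq_empty_iff_forall_notMem]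
  rintro ⟨X, Y⟩ h
  rw [mem_Rp one_pos three_pos] at h
  simp only [one_mul] at h
  have hX := sq_mod_four X
  have hY := sq_mod_four Y
  rcases Int.emod_two_eq_zero_or_one X with h | h <;>
    rcases Int.emod_two_eq_zero_or_one Y with h' | h' <;> omega

lemma R13_four_mul {n : ℤ} (hn : 0 < n) : R 1 3 (4 * n) = 6 * A3 n := by
  obtain ⟨k, rfl⟩ := Int.eq_ofNat_of_zero_le hn.le
  induction k using Nat.strong_induction_on with
  | _ k ih =>
    by_cases hk : (k : ℤ) % 2 = 1
    · exact R13_four_mul_odd hn hk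
    · obtain ⟨m, rfl⟩ : 2 ∣ k := by omega
      push_cast at hn ⊢
      rw [R13_eight_mul, A3_two_mul]
      by_cases hm : (m : ℤ) % 2 = 1
      · rw [R13_two_mul_odd hm, dil_two_odd hm]; ring
      · obtain ⟨l, rfl⟩ : 2 ∣ m := by omega
        push_cast at hn ⊢
        rw [dil_mul_self two_ne_zero, show (2 * (2 * l) : ℤ) = 4 * l by ring]
        exact ih l (by omega) (by omega)

/-- The two classes in the genus of `x² + 6 y²` together. -/
lemma hecke_six {p : ℕ} (hp : p.Prime) (hp2 : p ≠ 2) (m : ℤ) :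
    R 1 6 (p * m) + R 2 3 (p * m) =
      (1 + c24 p) * (R 1 6 m + R 2 3 m) - c24 p * (dil p (R 1 6) m + dil p (R 2 3) m) := by
  have : Fact p.Prime := ⟨hp⟩
  have hpi := Nat.prime_iff_prime_int.1 hp
  have hχ := jacobi_neg_six (odd_prime hp hp2)
  have n2 := not_dvd_two hp hp2
  rcases jacobiSym.trichotomy (-6) p with h | h | h
  · have h6 := dvd_of_jacobi_eq_zero (k := 6) h
    have h3 : p ∣ 3 := (Nat.Coprime.dvd_of_dvd_mul_left
      ((Nat.coprime_primes hp Nat.prime_two).2 hp2) (by simpa using h6))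
    obtain rfl : p = 3 := (Nat.prime_dvd_prime_iff_eq hp Nat.prime_three).1 h3
    have e1 := rep_ramified (a := 1) (b := 2) (p := 3) one_pos two_pos Int.prime_three three_pos
      (by norm_num) m
    have e2 := rep_ramified (a := 2) (b := 1) (p := 3) two_pos one_pos Int.prime_three three_pos
      (by norm_num) m
    rw [← hχ, h]
    norm_num at e1 e2 ⊢
    rw [e1, e2]; ring
  · have hnd : ∀ a b : ℕ, a * b = 6 → ¬ (p : ℤ) ∣ (a * b : ℤ) := by
      intro a b hab hd
      have h0 : jacobiSym (-6) p = 0 := by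
        rw [← jacobiSym.legendreSym.to_jacobiSym, legendreSym.eq_zero_iff,
          ZMod.intCast_zmod_eq_zero_iff_dvd, dvd_neg]
        have : ((a * b : ℕ) : ℤ) = 6 := by rw [hab]; rfl
        rw [← this]; exact_mod_cast hd
      rw [h0] at h; exact absurd h (by norm_num)
    have n6 : ¬ (p : ℤ) ∣ 1 * 6 := by simpa using hnd 1 6 rfl
    have n23 : ¬ (p : ℤ) ∣ 2 * 3 := by simpa using hnd 2 3 rfl
    have n3 : ¬ (p : ℤ) ∣ 3 := fun h => n23 (dvd_mul_of_dvd_right h _)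
    have case1 : (∃ u v : ℤ, u ^ 2 + 6 * v ^ 2 = p) → R 1 6 (p * m) + R 2 3 (p * m) =
        2 * (R 1 6 m + R 2 3 m) - (dil p (R 1 6) m + dil p (R 2 3) m) := by
      rintro ⟨u, v, huv⟩
      have e1 := step_split (a := 1) (b := 6) one_pos (by norm_num) hpi n2 n6
        (by rw [one_mul]; exact huv) m
      have e2 := step_split (a := 2) (b := 3) two_pos (by norm_num) hpi n2 n23
        (by norm_num; exact huv) m
      linarith
    have case2 : (∃ u v : ℤ, 2 * u ^ 2 + 3 * v ^ 2 = p) → R 1 6 (p * m) + R 2 3 (p * m) =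
        2 * (R 1 6 m + R 2 3 m) - (dil p (R 1 6) m + dil p (R 2 3) m) := by
      rintro ⟨u, v, huv⟩
      have hu := not_dvd_of_rep hpi n3 huv
      have e1 := rep_split (a := 1) (b := 6) (a' := 2) (b' := 3) (A := 2 * u) (B := 3 * v)
        (C := -v) (E := u) one_pos (by norm_num) two_pos (by norm_num) hpi n2
        (fun h => n2 (h.trans (one_dvd _))) (fun h => (hpi.dvd_or_dvd h).elim n2 hu)
        (by rw [← huv]; ring) (by rw [← huv]; ring) (by rw [← huv]; ring) (by ring) m
      have e2 := rep_split (a := 2) (b := 3) (a' := 1) (b' := 6) (A := u) (B := -(3 * v))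
        (C := v) (E := 2 * u) two_pos (by norm_num) one_pos (by norm_num) hpi n2 n2 hu
        (by rw [← huv]; ring) (by rw [← huv]; ring) (by rw [← huv]; ring) (by ring) m
      linarith
    rw [← hχ, h]
    obtain ⟨x, y, c, h0, h1, h2⟩ := thue (p := p) (k := 6) (by norm_num)
      (isSquare_of_jacobi (by exact_mod_cast h))
    push_cast at h1 h2
    have : c = 1 ∨ c = 2 ∨ c = 3 ∨ c = 4 ∨ c = 5 ∨ c = 6 := by omega
    rcases this with rfl | rfl | rfl | rfl | rfl | rfl
    · rw [case1 ⟨x, y, by linarith⟩]; ring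
    · have : (2 : ℤ) ∣ x ^ 2 := ⟨p - 3 * y ^ 2, by linarith⟩
      obtain ⟨x, rfl⟩ := Int.prime_two.dvd_of_dvd_pow this
      rw [case2 ⟨x, y, by linarith⟩]; ring
    · have : (3 : ℤ) ∣ x ^ 2 := ⟨p - 2 * y ^ 2, by linarith⟩
      obtain ⟨x, rfl⟩ := Int.prime_three.dvd_of_dvd_pow this
      rw [case2 ⟨y, x, by linarith⟩]; ring
    · have hx := sq_mod_four x
      have hy := sq_mod_four y
      obtain ⟨x, rfl⟩ : (2 : ℤ) ∣ x := by omega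
      obtain ⟨y, rfl⟩ : (2 : ℤ) ∣ y := by
        have : (2 * x) ^ 2 = 4 * x ^ 2 := by ring
        omega
      rw [case1 ⟨x, y, by linarith⟩]; ring
    · have : (5 : ℤ) ∣ (x - 2 * y) * (x + 2 * y) := ⟨p - 2 * y ^ 2, by linarith⟩
      rcases (by norm_num : Prime (5 : ℤ)).dvd_or_dvd this with ⟨w, hw⟩ | ⟨w, hw⟩
      · obtain rfl : x = 2 * y + 5 * w := by linarith
        rw [case2 ⟨y + w, w, by linarith⟩]; ring
      · obtain rfl : x = -(2 * y) + 5 * w := by linarith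
        rw [case2 ⟨-y + w, w, by linarith⟩]; ring
    · have hd2 : (2 : ℤ) ∣ x ^ 2 := ⟨3 * p - 3 * y ^ 2, by linarith⟩
      obtain ⟨x, rfl⟩ := Int.prime_two.dvd_of_dvd_pow hd2
      have hd3 : (3 : ℤ) ∣ (2 * x) ^ 2 := ⟨2 * p - 2 * y ^ 2, by linarith⟩
      have hd3' := Int.prime_three.dvd_of_dvd_pow hd3
      obtain ⟨x, rfl⟩ : (3 : ℤ) ∣ x := by omega
      rw [case1 ⟨y, x, by linarith⟩]; ring
  · have e1 := rep_inert (a := 1) (b := 6) one_pos (by norm_num) hpi.ne_zero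
      (fun X Y hd => dvd_of_jacobi (a := 1) (b := 6) h X Y (by exact_mod_cast hd)) m
    have e2 := rep_inert (a := 2) (b := 3) two_pos (by norm_num) hpi.ne_zero
      (fun X Y hd => dvd_of_jacobi (a := 2) (b := 3) h X Y (by exact_mod_cast hd)) m
    rw [← hχ, h, e1, e2]; ring

/-- The discriminant `-24` has two classes, so the divisor sum counts representations by both. -/
lemma R16_add_R23 {n : ℤ} (hn : 0 < n) (hodd : n % 2 = 1) : R 1 6 n + R 2 3 n = 2 * B24 n := by
  refine uniq (F := fun n => R 1 6 n + R 2 3 n) c24_mul (by decide) ?_ ?_ hn hodd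
  · have h1 : (Rp 1 6 1).card = 2 := by decide +kernel
    have h2 : (Rp 2 3 1).card = 0 := by decide +kernel
    simp only [R, h1, h2]; rfl
  · intro p hp hp2 m
    rw [hecke_six hp hp2]
    congr 2
    simp only [dil]
    split_ifs <;> simp

/-- On these residue classes modulo `8` the form `x² + 6 y²` has no values: the two classes lie in
different genera. -/
lemma R23_odd {n : ℤ} (hn : 0 < n) (h : n % 8 = 3 ∨ n % 8 = 5) : R 2 3 n = 2 * B24 n := by
  rw [← R16_add_R23 hn (by omega)]
  have : R 1 6 n = 0 := by
    rw [R, Nat.cast_eq_zero, Finset.card_eq_zero, Finset.eq_empty_iff_forall_notMem]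
    rintro ⟨X, Y⟩ hXY
    rw [mem_Rp one_pos (by norm_num)] at hXY
    simp only [one_mul] at hXY
    have hX := sq_mod_four X
    have hY := sq_mod_four Y
    obtain ⟨s, rfl⟩ : ∃ k, X = 2 * k + 1 := ⟨X / 2, by omega⟩
    have e1 := Int.even_mul_succ_self s
    rw [Int.even_iff] at e1
    have : (2 * s + 1) ^ 2 = 4 * (s * (s + 1)) + 1 := by ring
    omega
  rw [this, zero_add]

/-! ### Quaternary forms -/

/-- The integral solutions of `a x² + b y² + c z² + d w² = n`, for positive coefficients. -/
noncomputable def Q (a b c d n : ℤ) : Finset (ℤ × ℤ × ℤ × ℤ) :=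
  (Finset.Icc (-n) n ×ˢ Finset.Icc (-n) n ×ˢ Finset.Icc (-n) n ×ˢ Finset.Icc (-n) n).filter
    fun q => a * q.1 ^ 2 + b * q.2.1 ^ 2 + c * q.2.2.1 ^ 2 + d * q.2.2.2 ^ 2 = n

lemma mem_Q {a b c d : ℤ} (ha : 0 < a) (hb : 0 < b) (hc : 0 < c) (hd : 0 < d) {n x y z w : ℤ} :
    (x, y, z, w) ∈ Q a b c d n ↔ a * x ^ 2 + b * y ^ 2 + c * z ^ 2 + d * w ^ 2 = n := by
  simp only [Q, Finset.mem_filter, Finset.mem_product, Finset.mem_Icc]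
  refine ⟨fun h => h.2, fun h => ⟨?_, h⟩⟩
  have h1 := sq_nonneg x
  have h2 := sq_nonneg y
  have h3 := sq_nonneg z
  have h4 := sq_nonneg w
  have k1 := mul_nonneg ha.le h1
  have k2 := mul_nonneg hb.le h2
  have k3 := mul_nonneg hc.le h3
  have k4 := mul_nonneg hd.le h4
  refine ⟨abs_le_of_sq_le ?_, abs_le_of_sq_le ?_, abs_le_of_sq_le ?_, abs_le_of_sq_le ?_⟩ <;>
    nlinarith

/-- Weighted sums over quaternary representations are convolutions of binary ones. -/
lemma sum_Q {a b c d : ℤ} (ha : 0 < a) (hb : 0 < b) (hc : 0 < c) (hd : 0 < d) (n : ℤ)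
    (w1 w2 : ℤ → ℤ → ℤ) :
    ∑ q ∈ Q a b c d n, w1 q.1 q.2.1 * w2 q.2.2.1 q.2.2.2 =
      ∑ i ∈ Finset.Icc 0 n, (∑ p ∈ Rp a b i, w1 p.1 p.2) * ∑ p ∈ Rp c d (n - i), w2 p.1 p.2 := by
  simp only [Finset.sum_mul_sum]
  simp only [← Finset.sum_product']
  rw [Finset.sum_sigma']
  refine Finset.sum_bij' (fun q _ => ⟨a * q.1 ^ 2 + b * q.2.1 ^ 2, (q.1, q.2.1), q.2.2.1, q.2.2.2⟩)
    (fun s _ => (s.2.1.1, s.2.1.2, s.2.2.1, s.2.2.2)) ?_ ?_ ?_ ?_ ?_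
  · rintro ⟨x, y, z, w⟩ h
    rw [mem_Q ha hb hc hd] at h
    have := mul_nonneg ha.le (sq_nonneg x)
    have := mul_nonneg hb.le (sq_nonneg y)
    have := mul_nonneg hc.le (sq_nonneg z)
    have := mul_nonneg hd.le (sq_nonneg w)
    rw [Finset.mem_sigma, Finset.mem_product, mem_Rp ha hb, mem_Rp hc hd, Finset.mem_Icc]
    simp only
    refine ⟨⟨?_, ?_⟩, trivial, ?_⟩ <;> linarith
  · rintro ⟨i, ⟨x, y⟩, z, w⟩ h
    rw [Finset.mem_sigma, Finset.mem_product, mem_Rp ha hb, mem_Rp hc hd, Finset.mem_Icc] at h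
    rw [mem_Q ha hb hc hd]
    simp only at h ⊢
    linarith
  · rintro ⟨x, y, z, w⟩ _
    rfl
  · rintro ⟨i, ⟨x, y⟩, z, w⟩ h
    rw [Finset.mem_sigma, Finset.mem_product, mem_Rp ha hb, mem_Rp hc hd, Finset.mem_Icc] at h
    simp only at h ⊢
    rw [h.2.1]
  · rintro ⟨x, y, z, w⟩ _
    rfl

lemma sum_Icc_ends {n : ℤ} (hn : 0 < n) (F : ℤ → ℤ) :
    ∑ i ∈ Finset.Icc 0 n, F i = F 0 + ∑ i ∈ Finset.Ioo 0 n, F i + F n := by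
  rw [← Finset.sum_Ioc_add_eq_sum_Icc hn.le, ← Finset.sum_Ioo_add_eq_sum_Ioc hn]
  ring

lemma sum_one_Rp (a b n : ℤ) : ∑ _p ∈ Rp a b n, (1 : ℤ) = R a b n := by simp [R]

lemma R_zero {a b : ℤ} (ha : 0 < a) (hb : 0 < b) : R a b 0 = 1 := by
  have : Rp a b 0 = {(0, 0)} := by
    ext ⟨x, y⟩
    rw [mem_Rp ha hb, Finset.mem_singleton, Prod.mk.injEq]
    simp only
    constructor
    · intro h
      have h1 := mul_nonneg ha.le (sq_nonneg x)
      have h2 := mul_nonneg hb.le (sq_nonneg y)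
      have e1 : a * x ^ 2 = 0 := by linarith
      have e2 : b * y ^ 2 = 0 := by linarith
      exact ⟨pow_eq_zero_iff two_ne_zero |>.1 ((mul_eq_zero.1 e1).resolve_left ha.ne'),
        pow_eq_zero_iff two_ne_zero |>.1 ((mul_eq_zero.1 e2).resolve_left hb.ne')⟩
    · rintro ⟨rfl, rfl⟩; ring
  rw [R, this]; rfl

lemma R33 (n : ℤ) : R 3 3 n = dil 3 (R 1 1) n := by
  by_cases h : (3 : ℤ) ∣ n
  · obtain ⟨m, rfl⟩ := h
    rw [dil_mul_self three_ne_zero, R, R, Nat.cast_inj]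
    congr 1
    ext ⟨x, y⟩
    rw [mem_Rp three_pos three_pos, mem_Rp one_pos one_pos]
    constructor <;> intro h <;> simp only at h ⊢ <;> linarith
  · rw [dil_of_not_dvd h, R, Nat.cast_eq_zero, Finset.card_eq_zero,
      Finset.eq_empty_iff_forall_notMem]
    rintro ⟨x, y⟩ hxy
    rw [mem_Rp three_pos three_pos] at hxy
    exact h ⟨x ^ 2 + y ^ 2, by simp only at hxy; linarith⟩

lemma dil_three_R11 {i : ℤ} (hi : 0 < i) : dil 3 (R 1 1) i = 4 * dil 3 A4 i := by
  by_cases h : (3 : ℤ) ∣ i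
  · obtain ⟨m, rfl⟩ := h
    rw [dil_mul_self three_ne_zero, dil_mul_self three_ne_zero, R11_eq (by omega)]
  · rw [dil_of_not_dvd h, dil_of_not_dvd h]; ring

lemma sq_mod_two (x : ℤ) : x ^ 2 % 2 = x % 2 := by
  have := sq_mod_four x
  omega

/-- Indicator of equal parity. -/
def eqp (u v : ℤ) : ℤ := if u % 2 = v % 2 then 1 else 0

lemma sum_eqp (i : ℤ) : ∑ p ∈ Rp 3 3 i, eqp p.1 p.2 = (1 - od i) * dil 3 (R 1 1) i := by
  rw [← R33, ← sum_one_Rp, Finset.mul_sum]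
  refine Finset.sum_congr rfl ?_
  rintro ⟨x, y⟩ h
  rw [mem_Rp three_pos three_pos] at h
  simp only at h ⊢
  have hx := sq_mod_two x
  have hy := sq_mod_two y
  by_cases hxy : x % 2 = y % 2
  · rw [eqp, if_pos hxy, od_zero (by omega)]; ring
  · rw [eqp, if_neg hxy, od_one (by omega)]; ring

lemma sum_neqp (i : ℤ) : ∑ p ∈ Rp 3 3 i, (1 - eqp p.1 p.2) = od i * dil 3 (R 1 1) i := by
  rw [Finset.sum_sub_distrib, sum_eqp, sum_one_Rp, R33]; ring

lemma count_eqp {N : ℤ} (hN : N % 4 = 3) (hpos : 0 < N) :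
    ∑ q ∈ Q 3 3 1 3 N, eqp q.1 q.2.1 = 2 * A3 N + 8 * cv (dil 6 A4) A3 N := by
  have h := sum_Q three_pos three_pos one_pos three_pos N eqp (fun _ _ => 1)
  simp only [mul_one, sum_one_Rp, sum_eqp] at h
  rw [h, sum_Icc_ends hpos]
  have e0 : dil 3 (R 1 1) 0 = 1 := by
    rw [dil, if_pos (dvd_zero _)]; exact R_zero one_pos one_pos
  rw [e0, od_one (by omega : N % 2 = 1), od_zero (by norm_num : (0 : ℤ) % 2 = 0), sub_zero, sub_zero,
    R13_odd hpos (by omega), cv, Finset.mul_sum]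
  have : ∑ i ∈ Finset.Ioo 0 N, (1 - od i) * dil 3 (R 1 1) i * R 1 3 (N - i) =
      ∑ i ∈ Finset.Ioo 0 N, 8 * (dil 6 A4 i * A3 (N - i)) := by
    refine Finset.sum_congr rfl fun i hi => ?_
    rw [Finset.mem_Ioo] at hi
    rw [dil_three_R11 hi.1]
    by_cases h2 : i % 2 = 1
    · rw [od_one h2, dil_of_not_dvd (by omega : ¬ (6 : ℤ) ∣ i)]; ring
    · obtain ⟨m, rfl⟩ : (2 : ℤ) ∣ i := by omega
      rw [od_zero (by omega), dil_three_A4_two_mul, ← dil_two_three, dil_mul_self two_ne_zero,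
        R13_odd (by omega) (by omega)]
      ring
  rw [this]; ring

lemma count_neqp {N : ℤ} (hN : N % 4 = 3) (hpos : 0 < N) :
    ∑ q ∈ Q 3 3 1 3 N, (1 - eqp q.1 q.2.1) =
      4 * dil 3 A4 N + 24 * cv (dil 3 A4) (dil 4 A3) N := by
  have h := sum_Q three_pos three_pos one_pos three_pos N (fun u v => 1 - eqp u v) (fun _ _ => 1)
  simp only [mul_one, sum_one_Rp, sum_neqp] at h
  rw [h, sum_Icc_ends hpos]
  rw [od_one (by omega : N % 2 = 1), od_zero (by norm_num : (0 : ℤ) % 2 = 0), sub_self,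
    R_zero one_pos three_pos, dil_three_R11 hpos, cv, Finset.mul_sum]
  have : ∑ i ∈ Finset.Ioo 0 N, od i * dil 3 (R 1 1) i * R 1 3 (N - i) =
      ∑ i ∈ Finset.Ioo 0 N, 24 * (dil 3 A4 i * dil 4 A3 (N - i)) := by
    refine Finset.sum_congr rfl fun i hi => ?_
    rw [Finset.mem_Ioo] at hi
    rw [dil_three_R11 hi.1]
    by_cases h2 : i % 2 = 1
    · rw [od_one h2]
      by_cases h4 : (4 : ℤ) ∣ N - i
      · obtain ⟨j, hj⟩ := h4
        rw [hj, dil_mul_self four_ne_zero, R13_four_mul (by omega)]; ring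
      · obtain ⟨j, hj⟩ : (2 : ℤ) ∣ N - i := by omega
        rw [dil_of_not_dvd h4, hj, R13_two_mul_odd (by omega)]; ring
    · rw [od_zero (by omega), dil_of_not_dvd (by omega : ¬ (4 : ℤ) ∣ N - i)]; ring
  rw [this]; ring

/-- In a representation of `N ≡ 7 (mod 8)` by `3 u² + 3 v² + e² + 3 f²`, exactly one of `u`, `v`,
`f` has a parity different from the other two. -/
lemma count_rel {N : ℤ} (hN : N % 8 = 7) :
    ∑ q ∈ Q 3 3 1 3 N, (1 - eqp q.1 q.2.1) = 2 * ∑ q ∈ Q 3 3 1 3 N, eqp q.1 q.2.1 := by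
  have e1 : ∑ q ∈ Q 3 3 1 3 N, eqp q.1 q.2.2.2 = ∑ q ∈ Q 3 3 1 3 N, eqp q.1 q.2.1 := by
    refine Finset.sum_nbij' (fun q => (q.1, q.2.2.2, q.2.2.1, q.2.1))
      (fun q => (q.1, q.2.2.2, q.2.2.1, q.2.1)) ?_ ?_ ?_ ?_ ?_
    · rintro ⟨x, y, z, w⟩ h
      rw [mem_Q three_pos three_pos one_pos three_pos] at h ⊢
      simp only; linarith
    · rintro ⟨x, y, z, w⟩ h
      rw [mem_Q three_pos three_pos one_pos three_pos] at h ⊢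
      simp only; linarith
    · rintro ⟨x, y, z, w⟩ _; rfl
    · rintro ⟨x, y, z, w⟩ _; rfl
    · rintro ⟨x, y, z, w⟩ _; rfl
  have e2 : ∑ q ∈ Q 3 3 1 3 N, eqp q.2.2.2 q.2.1 = ∑ q ∈ Q 3 3 1 3 N, eqp q.1 q.2.1 := by
    refine Finset.sum_nbij' (fun q => (q.2.2.2, q.2.1, q.2.2.1, q.1))
      (fun q => (q.2.2.2, q.2.1, q.2.2.1, q.1)) ?_ ?_ ?_ ?_ ?_
    · rintro ⟨x, y, z, w⟩ h
      rw [mem_Q three_pos three_pos one_pos three_pos] at h ⊢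
      simp only; linarith
    · rintro ⟨x, y, z, w⟩ h
      rw [mem_Q three_pos three_pos one_pos three_pos] at h ⊢
      simp only; linarith
    · rintro ⟨x, y, z, w⟩ _; rfl
    · rintro ⟨x, y, z, w⟩ _; rfl
    · rintro ⟨x, y, z, w⟩ _; rfl
  have e3 : ∑ q ∈ Q 3 3 1 3 N, (1 - eqp q.1 q.2.1) =
      ∑ q ∈ Q 3 3 1 3 N, (eqp q.1 q.2.2.2 + eqp q.2.2.2 q.2.1) := by
    refine Finset.sum_congr rfl ?_
    rintro ⟨u, v, e, f⟩ h
    rw [mem_Q three_pos three_pos one_pos three_pos] at h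
    have key : ¬ (u % 2 = v % 2 ∧ v % 2 = f % 2) := by
      rintro ⟨h1, h2⟩
      rcases Int.emod_two_eq_zero_or_one u with h0 | h0
      · have := sq_mod_four u
        have := sq_mod_four v
        have := sq_mod_four f
        have := sq_mod_four e
        rcases Int.emod_two_eq_zero_or_one e with h0 | h0 <;> omega
      · have a1 := Int.sq_mod_four_eq_one_of_odd (Int.odd_iff.2 h0)
        have b1 := Int.sq_mod_four_eq_one_of_odd (Int.odd_iff.2 (h1 ▸ h0))
        have c1 := Int.sq_mod_four_eq_one_of_odd (Int.odd_iff.2 (h2 ▸ h1 ▸ h0))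
        have := sq_mod_four e
        rcases Int.emod_two_eq_zero_or_one e with h0 | h0 <;> omega
    simp only [eqp]
    split_ifs <;> omega
  rw [e3, Finset.sum_add_distrib, e1, e2]; ring

/-- The unsigned convolution. -/
lemma conv_c1 {N : ℤ} (hN : N % 8 = 7) (hpos : 0 < N) :
    8 * cv (dil 2 A4) A3 N = 3 * A2 N + A1 N - 2 * A3 N := by
  obtain ⟨h1, h2⟩ := combination (N := N) (by omega)
  have h3 := count_rel hN
  rw [count_eqp (by omega) hpos, count_neqp (by omega) hpos] at h3
  linarith

lemma sq_mod_eight {x : ℤ} (h : x % 2 = 1) : x ^ 2 % 8 = 1 := by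
  obtain ⟨s, rfl⟩ : ∃ k, x = 2 * k + 1 := ⟨x / 2, by omega⟩
  have e1 := Int.even_mul_succ_self s
  rw [Int.even_iff] at e1
  have : (2 * s + 1) ^ 2 = 4 * (s * (s + 1)) + 1 := by ring
  omega

/-- Four times `twoFormConv` counts the solutions of `2 x² + 3 y² + z² + 2 t² = 2 N` with `y` and `z` odd, with the
sign `(-1) ^ x`. Modulo `8`, `x` and `t` have opposite parities, so exchanging them reverses the
sign. -/
lemma twoFormConv_eq_zero {N : ℤ} (hN : N % 8 = 7) (hpos : 0 < N) : twoFormConv N = 0 := by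
  have h := sum_Q two_pos three_pos one_pos two_pos (2 * N) (fun x y => od y * sg x)
    (fun z _ => od z)
  have hz : ∑ q ∈ Q 2 3 1 2 (2 * N), od q.2.1 * sg q.1 * od q.2.2.1 = 0 := by
    have e1 : ∑ q ∈ Q 2 3 1 2 (2 * N), od q.2.1 * sg q.1 * od q.2.2.1 =
        ∑ q ∈ Q 2 3 1 2 (2 * N), od q.2.1 * sg q.2.2.2 * od q.2.2.1 := by
      refine Finset.sum_nbij' (fun q => (q.2.2.2, q.2.1, q.2.2.1, q.1))
        (fun q => (q.2.2.2, q.2.1, q.2.2.1, q.1)) ?_ ?_ ?_ ?_ ?_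
      · rintro ⟨x, y, z, w⟩ h
        rw [mem_Q two_pos three_pos one_pos two_pos] at h ⊢
        simp only; linarith
      · rintro ⟨x, y, z, w⟩ h
        rw [mem_Q two_pos three_pos one_pos two_pos] at h ⊢
        simp only; linarith
      · rintro ⟨x, y, z, w⟩ _; rfl
      · rintro ⟨x, y, z, w⟩ _; rfl
      · rintro ⟨x, y, z, w⟩ _; rfl
    have e2 : ∑ q ∈ Q 2 3 1 2 (2 * N), od q.2.1 * sg q.2.2.2 * od q.2.2.1 =
        - ∑ q ∈ Q 2 3 1 2 (2 * N), od q.2.1 * sg q.1 * od q.2.2.1 := by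
      rw [← Finset.sum_neg_distrib]
      refine Finset.sum_congr rfl ?_
      rintro ⟨x, y, z, t⟩ h
      rw [mem_Q two_pos three_pos one_pos two_pos] at h
      simp only
      by_cases hy : y % 2 = 1
      · by_cases hz : z % 2 = 1
        · have := sq_mod_eight hy
          have := sq_mod_eight hz
          have hx := sq_mod_four x
          have ht := sq_mod_four t
          have : sg t = - sg x := by
            simp only [sg]
            rcases Int.emod_two_eq_zero_or_one x with h | h <;>
              rcases Int.emod_two_eq_zero_or_one t with h' | h' <;> simp [h, h'] <;> omega
          rw [this]; ring
        · rw [od_zero (by omega : z % 2 = 0)]; ring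
      · rw [od_zero (by omega : y % 2 = 0)]; ring
    linarith
  rw [hz, sum_Icc_ends (by omega)] at h
  have f1 : ∀ i : ℤ, i % 2 = 0 → ∑ p ∈ Rp 2 3 i, od p.2 * sg p.1 = 0 := by
    intro i hi
    refine Finset.sum_eq_zero ?_
    rintro ⟨x, y⟩ hxy
    rw [mem_Rp two_pos three_pos] at hxy
    have := sq_mod_two y
    simp only at hxy ⊢
    rw [od_zero (by omega)]; ring
  have f2 : ∀ i : ℤ, i % 8 = 1 ∨ i % 8 = 7 → ∑ p ∈ Rp 2 3 i, od p.2 * sg p.1 = 0 := by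
    intro i hi
    refine Finset.sum_eq_zero ?_
    rintro ⟨x, y⟩ hxy
    rw [mem_Rp two_pos three_pos] at hxy
    have := sq_mod_two y
    have := sq_mod_four x
    simp only at hxy ⊢
    exfalso
    have := sq_mod_eight (x := y) (by omega)
    rcases Int.emod_two_eq_zero_or_one x with h | h <;> omega
  have f3 : ∀ i : ℤ, 0 < i → i % 8 = 3 ∨ i % 8 = 5 →
      ∑ p ∈ Rp 2 3 i, od p.2 * sg p.1 = 2 * (c8 i * B24 i) := by
    intro i hi0 hi
    have e : 2 * (c8 i * B24 i) = c8 i * R 2 3 i := by rw [R23_odd hi0 hi]; ring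
    rw [e, ← sum_one_Rp, Finset.mul_sum]
    refine Finset.sum_congr rfl ?_
    rintro ⟨x, y⟩ hxy
    rw [mem_Rp two_pos three_pos] at hxy
    have := sq_mod_two y
    have := sq_mod_four x
    simp only at hxy ⊢
    have := sq_mod_eight (x := y) (by omega)
    rw [od_one (by omega)]
    rcases Int.emod_two_eq_zero_or_one x with h | h
    · have : i % 8 = 3 := by omega
      simp [sg, c8, h, this]
    · have : i % 8 = 5 := by omega
      simp [sg, c8, h, this]
  have f4 : ∀ j : ℤ, 0 < j → j % 2 = 1 → ∑ p ∈ Rp 1 2 j, od p.1 = 2 * (od j * B8 j) := by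
    intro j hj0 hj
    have e : 2 * (od j * B8 j) = od j * R 1 2 j := by rw [R12_odd hj0 hj]; ring
    rw [e, ← sum_one_Rp, Finset.mul_sum]
    refine Finset.sum_congr rfl ?_
    rintro ⟨x, y⟩ hxy
    rw [mem_Rp one_pos two_pos] at hxy
    have := sq_mod_two x
    simp only at hxy ⊢
    rw [od_congr (by omega : x % 2 = j % 2)]; ring
  rw [f1 0 rfl, f1 (2 * N) (by omega)] at h
  have : ∑ i ∈ Finset.Ioo 0 (2 * N), (∑ p ∈ Rp 2 3 i, od p.2 * sg p.1) *
      ∑ p ∈ Rp 1 2 (2 * N - i), od p.1 = 4 * twoFormConv N := by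
    rw [twoFormConv, cv, Finset.mul_sum]
    refine Finset.sum_congr rfl fun i hi => ?_
    rw [Finset.mem_Ioo] at hi
    by_cases h2 : i % 2 = 0
    · rw [f1 i h2, c8_even h2]; ring
    · rcases (by omega : i % 8 = 1 ∨ i % 8 = 7 ∨ i % 8 = 3 ∨ i % 8 = 5) with h8 | h8 | h8
      · have : B8 (2 * N - i) = 0 :=
          D_eq_zero_of_neg c8_mul (by rw [c8, if_neg (by omega), if_pos (by omega)])
        rw [f2 i (by omega), this]; ring
      · have : B8 (2 * N - i) = 0 :=
          D_eq_zero_of_neg c8_mul (by rw [c8, if_neg (by omega), if_pos (by omega)])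
        rw [f2 i (by omega), this]; ring
      · rw [f3 i hi.1 h8, f4 _ (by omega) (by omega)]; ring
  rw [this] at h
  linarith

/-! ### A theta function identity of Jacobi type -/

/-- The solutions of `a² + 3 c² + 24 d e = 4 N` with `a`, `c`, `d` odd and `d`, `e` positive. -/
noncomputable def Om4 (N : ℤ) : Finset (ℤ × ℤ × ℤ × ℤ) :=
  (Finset.Icc (-(4 * N)) (4 * N) ×ˢ Finset.Icc (-(4 * N)) (4 * N) ×ˢ Finset.Icc 1 (4 * N) ×ˢ
    Finset.Icc 1 (4 * N)).filter fun q =>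
      q.1 % 2 = 1 ∧ q.2.1 % 2 = 1 ∧ q.2.2.1 % 2 = 1 ∧
        q.1 ^ 2 + 3 * q.2.1 ^ 2 + 24 * (q.2.2.1 * q.2.2.2) = 4 * N

lemma mem_Om4 {N a c d e : ℤ} : (a, c, d, e) ∈ Om4 N ↔ (a % 2 = 1 ∧ c % 2 = 1 ∧ d % 2 = 1) ∧
    0 < d ∧ 0 < e ∧ a ^ 2 + 3 * c ^ 2 + 24 * (d * e) = 4 * N := by
  simp only [Om4, Finset.mem_filter, Finset.mem_product, Finset.mem_Icc]
  constructor
  · rintro ⟨⟨_, _, ⟨h1, _⟩, h2, _⟩, h3, h4, h5, h6⟩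
    exact ⟨⟨h3, h4, h5⟩, h1, h2, h6⟩
  · rintro ⟨⟨h3, h4, h5⟩, h1, h2, h6⟩
    have hde : 0 < d * e := mul_pos h1 h2
    have ha := sq_nonneg a
    have hc := sq_nonneg c
    have hd : d ≤ d * e := by nlinarith
    have he : e ≤ d * e := by nlinarith
    exact ⟨⟨abs_le_of_sq_le (by linarith), abs_le_of_sq_le (by linarith), ⟨h1, by linarith⟩,
      h2, by linarith⟩, h3, h4, h5, h6⟩

/-- The weight `sg e * c4 d`, increased by `sg e * c4 c`. The additional term is odd in `c`, so it does
not change the sum over `Om4`; it makes the weight change sign under the involutions below. -/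
def wt (q : ℤ × ℤ × ℤ × ℤ) : ℤ := sg q.2.2.2 * (c4 q.2.2.1 + c4 q.2.1)

lemma sum_wt (N : ℤ) : ∑ q ∈ Om4 N, sg q.2.2.2 * c4 q.2.2.1 = ∑ q ∈ Om4 N, wt q := by
  have h0 : ∑ q ∈ Om4 N, sg q.2.2.2 * c4 q.2.1 = -∑ q ∈ Om4 N, sg q.2.2.2 * c4 q.2.1 := by
    rw [← Finset.sum_neg_distrib]
    refine Finset.sum_nbij' (fun q => (q.1, -q.2.1, q.2.2)) (fun q => (q.1, -q.2.1, q.2.2))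
      ?_ ?_ ?_ ?_ ?_
    · rintro ⟨a, c, d, e⟩ h
      rw [mem_Om4] at h ⊢
      rw [neg_sq]
      have hc := h.1.2.1
      refine ⟨⟨h.1.1, ?_, h.1.2.2⟩, h.2⟩
      change (-c) % 2 = 1; omega
    · rintro ⟨a, c, d, e⟩ h
      rw [mem_Om4] at h ⊢
      rw [neg_sq]
      have hc := h.1.2.1
      refine ⟨⟨h.1.1, ?_, h.1.2.2⟩, h.2⟩
      change (-c) % 2 = 1; omega
    · rintro ⟨a, c, d, e⟩ _; simp
    · rintro ⟨a, c, d, e⟩ _; simp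
    · rintro ⟨a, c, d, e⟩ _; simp [c4_neg]
  have h1 : ∑ q ∈ Om4 N, wt q =
      ∑ q ∈ Om4 N, sg q.2.2.2 * c4 q.2.2.1 + ∑ q ∈ Om4 N, sg q.2.2.2 * c4 q.2.1 := by
    rw [← Finset.sum_add_distrib]
    exact Finset.sum_congr rfl fun q _ => by rw [wt]; ring
  omega

/-- A weight reversed by an involution of `s` sums to zero. -/
lemma wt_cancel (s : Finset (ℤ × ℤ × ℤ × ℤ)) (g : ℤ × ℤ × ℤ × ℤ → ℤ × ℤ × ℤ × ℤ)
    (h1 : ∀ x ∈ s, wt x + wt (g x) = 0) (h2 : ∀ x ∈ s, g x ∈ s) (h3 : ∀ x ∈ s, g (g x) = x) :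
    ∑ x ∈ s, wt x = 0 := by
  refine Finset.sum_involution (fun x _ => g x) h1 ?_ h2 h3
  intro x hx hne e
  have := h1 x hx
  rw [e] at this
  omega

lemma c4_one {a : ℤ} (h : a % 4 = 1) : c4 a = 1 := by rw [c4, if_pos h]
lemma c4_three {a : ℤ} (h : a % 4 = 3) : c4 a = -1 := by
  rw [c4, if_neg (by omega), if_pos h]
lemma sg_even {a : ℤ} (h : a % 2 = 0) : sg a = 1 := by rw [sg, if_pos h]
lemma sg_odd {a : ℤ} (h : a % 2 = 1) : sg a = -1 := by rw [sg, if_neg (by omega)]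

lemma odd_cases {a : ℤ} (h : a % 2 = 1) : a % 4 = 1 ∨ a % 4 = 3 := by omega

/-- The involution `(c, d, e) ↦ (8 e - c, d + 2 c - 8 e, e)` preserves `c² + 8 d e`. It and the two
involutions below act on the regions into which `Om4` is cut by the planes `d + 2 c = 8 e`, which
contains no point with `d` odd, and `d + c = 2 e`. -/
lemma wt_region_one (N : ℤ) :
    ∑ q ∈ (Om4 N).filter (fun q => 0 < q.2.2.1 + 2 * q.2.1 - 8 * q.2.2.2), wt q = 0 := by
  refine wt_cancel _ (fun q => (q.1, 8 * q.2.2.2 - q.2.1,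
    q.2.2.1 + 2 * q.2.1 - 8 * q.2.2.2, q.2.2.2)) ?_ ?_ ?_
  · rintro ⟨a, c, d, e⟩ h
    rw [Finset.mem_filter, mem_Om4] at h
    obtain ⟨⟨⟨_, hc, hd⟩, _⟩, _⟩ := h
    simp only [wt]
    rcases odd_cases hc with hc | hc <;> rcases odd_cases hd with hd | hd
    · rw [c4_one hc, c4_one hd, c4_three (by omega), c4_three (by omega)]; ring
    · rw [c4_one hc, c4_three hd, c4_one (by omega), c4_three (by omega)]; ring
    · rw [c4_three hc, c4_one hd, c4_three (by omega), c4_one (by omega)]; ring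
    · rw [c4_three hc, c4_three hd, c4_one (by omega), c4_one (by omega)]; ring
  · rintro ⟨a, c, d, e⟩ h
    rw [Finset.mem_filter, mem_Om4] at h ⊢
    obtain ⟨⟨⟨ha, hc, hd⟩, hd', he, hq⟩, hr⟩ := h
    simp only at hr ⊢
    refine ⟨⟨⟨ha, by omega, by omega⟩, hr, he, ?_⟩, by omega⟩
    rw [← hq]; ring
  · rintro ⟨a, c, d, e⟩ _
    simp only [Prod.mk.injEq]
    refine ⟨trivial, ?_, ?_, trivial⟩ <;> ring

lemma wt_region_two (N : ℤ) :
    ∑ q ∈ (Om4 N).filter (fun q => 0 < q.2.2.1 + q.2.1 - 2 * q.2.2.2 ∧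
      q.2.2.1 + 2 * q.2.1 - 8 * q.2.2.2 < 0), wt q = 0 := by
  refine wt_cancel _ (fun q => (q.1,
    2 * q.2.2.1 + 3 * q.2.1 - 8 * q.2.2.2, 8 * q.2.2.2 - 2 * q.2.1 - q.2.2.1,
    (q.2.2.1 + q.2.1) / 2 - q.2.2.2)) ?_ ?_ ?_
  · rintro ⟨a, c, d, e⟩ h
    rw [Finset.mem_filter, mem_Om4] at h
    obtain ⟨⟨⟨_, hc, hd⟩, _⟩, _⟩ := h
    simp only [wt]
    rcases odd_cases hc with hc | hc <;> rcases odd_cases hd with hd | hd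
    · rw [c4_one hc, c4_one hd, c4_one (by omega), c4_one (by omega)]
      rcases Int.emod_two_eq_zero_or_one e with he | he
      · rw [sg_even he, sg_odd (by omega)]; ring
      · rw [sg_odd he, sg_even (by omega)]; ring
    · rw [c4_one hc, c4_three hd, c4_three (by omega), c4_one (by omega)]; ring
    · rw [c4_three hc, c4_one hd, c4_one (by omega), c4_three (by omega)]; ring
    · rw [c4_three hc, c4_three hd, c4_three (by omega), c4_three (by omega)]
      rcases Int.emod_two_eq_zero_or_one e with he | he
      · rw [sg_even he, sg_odd (by omega)]; ring
      · rw [sg_odd he, sg_even (by omega)]; ring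
  · rintro ⟨a, c, d, e⟩ h
    rw [Finset.mem_filter, mem_Om4] at h ⊢
    obtain ⟨⟨⟨ha, hc, hd⟩, hd', he, hq⟩, hr1, hr2⟩ := h
    simp only at hr1 hr2 ⊢
    obtain ⟨t, ht⟩ : (2 : ℤ) ∣ d + c := by omega
    rw [ht, Int.mul_ediv_cancel_left _ two_ne_zero]
    refine ⟨⟨⟨ha, by omega, by omega⟩, by omega, by omega, ?_⟩, by omega, by omega⟩
    obtain rfl : c = 2 * t - d := by omega
    rw [← hq]; ring
  · rintro ⟨a, c, d, e⟩ h
    rw [Finset.mem_filter, mem_Om4] at h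
    obtain ⟨⟨⟨_, hc, hd⟩, _⟩, _⟩ := h
    simp only [Prod.mk.injEq]
    refine ⟨trivial, ?_, ?_, ?_⟩ <;> omega

lemma wt_region_three (N : ℤ) :
    ∑ q ∈ (Om4 N).filter (fun q => q.2.2.1 + q.2.1 - 2 * q.2.2.2 < 0), wt q = 0 := by
  refine wt_cancel _ (fun q => (q.1, -q.2.1 - 2 * q.2.2.1, q.2.2.1,
    q.2.2.2 - (q.2.2.1 + q.2.1) / 2)) ?_ ?_ ?_
  · rintro ⟨a, c, d, e⟩ h
    rw [Finset.mem_filter, mem_Om4] at h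
    obtain ⟨⟨⟨_, hc, hd⟩, _⟩, _⟩ := h
    simp only [wt]
    rcases odd_cases hc with hc | hc <;> rcases odd_cases hd with hd | hd
    · rw [c4_one hc, c4_one hd, c4_one (by omega)]
      rcases Int.emod_two_eq_zero_or_one e with he | he
      · rw [sg_even he, sg_odd (by omega)]; ring
      · rw [sg_odd he, sg_even (by omega)]; ring
    · rw [c4_one hc, c4_three hd, c4_one (by omega)]; ring
    · rw [c4_three hc, c4_one hd, c4_three (by omega)]; ring
    · rw [c4_three hc, c4_three hd, c4_three (by omega)]
      rcases Int.emod_two_eq_zero_or_one e with he | he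
      · rw [sg_even he, sg_odd (by omega)]; ring
      · rw [sg_odd he, sg_even (by omega)]; ring
  · rintro ⟨a, c, d, e⟩ h
    rw [Finset.mem_filter, mem_Om4] at h ⊢
    obtain ⟨⟨⟨ha, hc, hd⟩, hd', he, hq⟩, hr⟩ := h
    simp only at hr ⊢
    obtain ⟨t, ht⟩ : (2 : ℤ) ∣ d + c := by omega
    rw [ht, Int.mul_ediv_cancel_left _ two_ne_zero]
    refine ⟨⟨⟨ha, by omega, hd⟩, hd', by omega, ?_⟩, by omega⟩
    obtain rfl : c = 2 * t - d := by omega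
    rw [← hq]; ring
  · rintro ⟨a, c, d, e⟩ h
    rw [Finset.mem_filter, mem_Om4] at h
    obtain ⟨⟨⟨_, hc, hd⟩, _⟩, _⟩ := h
    simp only [Prod.mk.injEq]
    refine ⟨trivial, ?_, trivial, ?_⟩ <;> omega

/-- The three involutions leave the contribution of the plane `d + c = 2 e`. -/
lemma sum_wt_boundary (N : ℤ) : ∑ q ∈ Om4 N, wt q =
    ∑ q ∈ (Om4 N).filter (fun q => q.2.2.1 + q.2.1 = 2 * q.2.2.2), wt q := by
  have h1 := wt_region_one N
  have h2 := wt_region_two N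
  have h3 := wt_region_three N
  rw [Finset.sum_filter] at h1 h2 h3 ⊢
  have key : ∑ q ∈ Om4 N, wt q =
      ∑ q ∈ Om4 N, (if q.2.2.1 + q.2.1 = 2 * q.2.2.2 then wt q else 0) +
      ∑ q ∈ Om4 N, (if 0 < q.2.2.1 + 2 * q.2.1 - 8 * q.2.2.2 then wt q else 0) +
      ∑ q ∈ Om4 N, (if 0 < q.2.2.1 + q.2.1 - 2 * q.2.2.2 ∧
        q.2.2.1 + 2 * q.2.1 - 8 * q.2.2.2 < 0 then wt q else 0) +
      ∑ q ∈ Om4 N, (if q.2.2.1 + q.2.1 - 2 * q.2.2.2 < 0 then wt q else 0) := by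
    simp only [← Finset.sum_add_distrib]
    refine Finset.sum_congr rfl ?_
    rintro ⟨a, c, d, e⟩ h
    rw [mem_Om4] at h
    obtain ⟨⟨_, hc, hd⟩, hd', he, _⟩ := h
    simp only
    split_ifs <;> omega
  rw [key, h1, h2, h3]; ring

/-- The representations of `4 j` by `x² + 3 y²` with `x` and `y` odd. -/
noncomputable def OP (j : ℤ) : Finset (ℤ × ℤ) := (Rp 1 3 (4 * j)).filter fun p => p.1 % 2 = 1

lemma mem_OP {j a b : ℤ} :
    (a, b) ∈ OP j ↔ a % 2 = 1 ∧ b % 2 = 1 ∧ a ^ 2 + 3 * b ^ 2 = 4 * j := by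
  rw [OP, Finset.mem_filter, mem_Rp one_pos three_pos]
  simp only [one_mul]
  constructor
  · rintro ⟨h1, h2⟩
    have := sq_mod_four a
    have := sq_mod_four b
    exact ⟨h2, by omega, h1⟩
  · rintro ⟨h1, _, h2⟩
    exact ⟨h2, h1⟩

/-- Representations of `4 j` in even variables are doubles of those of `j`. -/
lemma card_OP {j : ℤ} (hj : 0 < j) (hodd : j % 2 = 1) : ((OP j).card : ℤ) = 4 * A3 j := by
  have h1 := Finset.card_filter_add_card_filter_not (s := Rp 1 3 (4 * j)) (fun p => p.1 % 2 = 1)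
  have h2 : ((Rp 1 3 (4 * j)).filter fun p => ¬ p.1 % 2 = 1).card = (Rp 1 3 j).card := by
    refine Finset.card_nbij' (fun p => (p.1 / 2, p.2 / 2)) (fun p => (2 * p.1, 2 * p.2))
      ?_ ?_ ?_ ?_
    · rintro ⟨x, y⟩ h
      simp only [Finset.coe_filter, Set.mem_ofPred_eq, Finset.mem_coe] at h ⊢
      rw [mem_Rp one_pos three_pos] at h ⊢
      obtain ⟨h, hx⟩ := h
      simp only at h ⊢
      have e1 := sq_mod_four x
      have e2 := sq_mod_four y
      obtain ⟨u, rfl⟩ : (2 : ℤ) ∣ x := by omega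
      obtain ⟨v, rfl⟩ : (2 : ℤ) ∣ y := by omega
      rw [Int.mul_ediv_cancel_left _ two_ne_zero, Int.mul_ediv_cancel_left _ two_ne_zero]
      linarith
    · rintro ⟨x, y⟩ h
      simp only [Finset.coe_filter, Set.mem_ofPred_eq, Finset.mem_coe] at h ⊢
      rw [mem_Rp one_pos three_pos] at h ⊢
      simp only at h ⊢
      exact ⟨by linarith, by omega⟩
    · rintro ⟨x, y⟩ h
      simp only [Finset.coe_filter, Set.mem_ofPred_eq] at h
      rw [mem_Rp one_pos three_pos] at h
      obtain ⟨h, hx⟩ := h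
      simp only at h hx
      have e1 := sq_mod_four x
      have e2 := sq_mod_four y
      simp only [Prod.mk.injEq]
      constructor <;> omega
    · rintro ⟨x, y⟩ h
      simp
  have h3 := R13_four_mul hj
  have h4 := R13_odd hj hodd
  rw [R] at h3 h4
  rw [h2] at h1
  rw [OP]
  omega

lemma sum_c4_lt {b : ℤ} (hb : 0 < b) (hodd : b % 2 = 1) :
    2 * ∑ d ∈ (Finset.Ioo 0 b).filter (fun d => d % 2 = 1), (c4 b - c4 d) = c4 b * b - 1 := by
  obtain ⟨t, rfl⟩ : ∃ t : ℕ, b = 2 * t + 1 := ⟨((b - 1) / 2).toNat, by omega⟩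
  have key : ∀ t : ℕ, ∀ x : ℤ, 2 * ∑ d ∈ (Finset.Ioo 0 (2 * (t : ℤ) + 1)).filter
      (fun d => d % 2 = 1), (x - c4 d) = 2 * x * t - (1 - c4 (2 * t + 1)) := by
    intro t x
    induction t with
    | zero =>
      have e : Finset.Ioo 0 (2 * ((0 : ℕ) : ℤ) + 1) = ∅ := by decide
      rw [e, Finset.filter_empty, Finset.sum_empty, c4_one (by norm_num)]; simp
    | succ t ih =>
      have e : (Finset.Ioo 0 (2 * ((t + 1 : ℕ) : ℤ) + 1)).filter (fun d => d % 2 = 1) =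
          insert (2 * (t : ℤ) + 1)
            ((Finset.Ioo 0 (2 * (t : ℤ) + 1)).filter (fun d => d % 2 = 1)) := by
        ext d
        simp only [Finset.mem_filter, Finset.mem_insert, Finset.mem_Ioo]
        push_cast
        omega
      rw [e, Finset.sum_insert (by simp), mul_add, ih]
      push_cast
      rcases odd_cases (by omega : (2 * (t : ℤ) + 1) % 2 = 1) with h | h
      · rw [c4_one h, c4_three (by omega)]; ring
      · rw [c4_three h, c4_one (by omega)]; ring
  rw [key]
  rcases odd_cases (by omega : (2 * (t : ℤ) + 1) % 2 = 1) with h | h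
  · rw [c4_one h]; ring
  · rw [c4_three h]; ring

/-- On the plane `d + c = 2 e` the form `c² + 8 d e` is the square of `b = c + 2 d`. -/
lemma sum_boundary (N : ℤ) :
    2 * ∑ q ∈ (Om4 N).filter (fun q => q.2.2.1 + q.2.1 = 2 * q.2.2.2), wt q =
      ∑ p ∈ (OP N).filter (fun p => 0 < p.2), (c4 p.2 * p.2 - 1) := by
  have e : ∑ p ∈ (OP N).filter (fun p => 0 < p.2), (c4 p.2 * p.2 - 1) =
      2 * ∑ p ∈ (OP N).filter (fun p => 0 < p.2),
        ∑ d ∈ (Finset.Ioo 0 p.2).filter (fun d => d % 2 = 1), (c4 p.2 - c4 d) := by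
    rw [Finset.mul_sum]
    refine Finset.sum_congr rfl ?_
    rintro ⟨a, b⟩ h
    rw [Finset.mem_filter, mem_OP] at h
    rw [sum_c4_lt h.2 h.1.2.1]
  rw [e, Finset.sum_sigma']
  congr 1
  refine Finset.sum_bij' (fun q _ => ⟨(q.1, q.2.1 + 2 * q.2.2.1), q.2.2.1⟩)
    (fun s _ => (s.1.1, s.1.2 - 2 * s.2, s.2, (s.1.2 - s.2) / 2)) ?_ ?_ ?_ ?_ ?_
  · rintro ⟨a, c, d, e⟩ h
    rw [Finset.mem_filter, mem_Om4] at h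
    obtain ⟨⟨⟨ha, hc, hd⟩, hd', he, hq⟩, hb⟩ := h
    simp only at hb
    rw [Finset.mem_sigma, Finset.mem_filter, mem_OP, Finset.mem_filter, Finset.mem_Ioo]
    simp only
    refine ⟨⟨⟨ha, by omega, ?_⟩, by omega⟩, ⟨hd', by omega⟩, hd⟩
    obtain rfl : c = 2 * e - d := by omega
    rw [← hq]; ring
  · rintro ⟨⟨a, b⟩, d⟩ h
    rw [Finset.mem_sigma, Finset.mem_filter, mem_OP, Finset.mem_filter, Finset.mem_Ioo] at h
    simp only at h
    obtain ⟨⟨⟨ha, hb, hq⟩, hb'⟩, ⟨hd', hdb⟩, hd⟩ := h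
    rw [Finset.mem_filter, mem_Om4]
    simp only
    obtain ⟨t, ht⟩ : (2 : ℤ) ∣ b - d := by omega
    rw [ht, Int.mul_ediv_cancel_left _ two_ne_zero]
    refine ⟨⟨⟨ha, by omega, hd⟩, hd', by omega, ?_⟩, by omega⟩
    obtain rfl : b = 2 * t + d := by omega
    rw [← hq]; ring
  · rintro ⟨a, c, d, e⟩ h
    rw [Finset.mem_filter] at h
    simp only [Prod.mk.injEq] at h ⊢
    refine ⟨trivial, ?_, trivial, ?_⟩ <;> omega
  · rintro ⟨⟨a, b⟩, d⟩ h
    simp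
  · rintro ⟨a, c, d, e⟩ h
    rw [Finset.mem_filter, mem_Om4] at h
    obtain ⟨⟨⟨ha, hc, hd⟩, hd', he, hq⟩, hb⟩ := h
    simp only [wt] at hb ⊢
    rcases odd_cases hc with hc | hc <;> rcases odd_cases hd with hd | hd
    · rw [c4_one hc, c4_one hd, c4_three (by omega), sg_odd (by omega)]; ring
    · rw [c4_one hc, c4_three hd, c4_three (by omega)]; ring
    · rw [c4_three hc, c4_one hd, c4_one (by omega)]; ring
    · rw [c4_three hc, c4_three hd, c4_one (by omega), sg_odd (by omega)]; ring

/-! ### The number of representations by odd variables -/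

lemma D_c4_sg (k : ℤ) : D c4 sg k = sg k * A4 k := by
  unfold D A4 D
  rw [Finset.mul_sum]
  refine Finset.sum_congr rfl ?_
  rintro ⟨d, e⟩ h
  rw [mem_P] at h
  simp only at h ⊢
  rcases Int.emod_two_eq_zero_or_one d with hd | hd
  · rw [c4_even hd]; ring
  · have : e % 2 = k % 2 := by
      rw [← h.2.2, Int.mul_emod, hd, one_mul, Int.emod_emod]
    rw [sg_congr this]; ring

lemma cv_dil_left {k : ℤ} (hk : 0 < k) (f g : ℤ → ℤ) (n : ℤ) : cv (dil k f) g n =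
    ∑ i ∈ (Finset.Ioo 0 n).filter (fun i => k * i < n), f i * g (n - k * i) := by
  have e : cv (dil k f) g n =
      ∑ i ∈ (Finset.Ioo 0 n).filter (fun i => k ∣ i), f (i / k) * g (n - i) := by
    rw [Finset.sum_filter, cv]
    refine Finset.sum_congr rfl fun i _ => ?_
    rw [dil]; split_ifs <;> simp
  rw [e]
  refine Finset.sum_nbij' (fun i => i / k) (fun i => k * i) ?_ ?_ ?_ ?_ ?_
  · intro i hi
    rw [Finset.mem_filter, Finset.mem_Ioo] at hi ⊢
    obtain ⟨⟨h1, h2⟩, m, rfl⟩ := hi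
    rw [Int.mul_ediv_cancel_left _ hk.ne']
    have hm : 0 < m := pos_of_mul_pos_right h1 hk.le
    exact ⟨⟨hm, by nlinarith⟩, h2⟩
  · intro i hi
    rw [Finset.mem_filter, Finset.mem_Ioo] at hi ⊢
    exact ⟨⟨mul_pos hk hi.1.1, hi.2⟩, dvd_mul_right _ _⟩
  · intro i hi
    rw [Finset.mem_filter] at hi
    exact Int.mul_ediv_cancel' hi.2
  · intro i _
    exact Int.mul_ediv_cancel_left _ hk.ne'
  · intro i hi
    rw [Finset.mem_filter] at hi
    rw [Int.mul_ediv_cancel' hi.2]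

/-- Grouping by `k = d e`: the sum of `sg e * c4 d` is `sg k * A4 k`, and `a² + 3 c² = 4 (N - 6 k)` has
`4 A3 (N - 6 k)` odd solutions. -/
lemma sum_Om4 {N : ℤ} (hN : N % 2 = 1) : ∑ q ∈ Om4 N, sg q.2.2.2 * c4 q.2.2.1 =
    4 * cv (dil 6 (fun k => sg k * A4 k)) A3 N := by
  have e1 : 4 * cv (dil 6 (fun k => sg k * A4 k)) A3 N =
      ∑ k ∈ (Finset.Ioo 0 N).filter (fun k => 6 * k < N), ∑ p ∈ OP (N - 6 * k),
        ∑ r ∈ (P k).filter (fun r => r.1 % 2 = 1), sg r.2 * c4 r.1 := by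
    rw [cv_dil_left (by norm_num), Finset.mul_sum]
    refine Finset.sum_congr rfl fun k hk => ?_
    rw [Finset.mem_filter] at hk
    rw [Finset.sum_const, nsmul_eq_mul, card_OP (by omega) (by omega), ← D_c4_sg, D,
      Finset.sum_filter_of_ne]
    · rw [Finset.sum_congr rfl fun p _ => mul_comm (c4 p.1) (sg p.2)]; ring
    · intro p _ hne
      by_contra h
      exact hne (by rw [c4_even (by omega), mul_zero])
  rw [e1]
  simp only [← Finset.sum_product']
  rw [Finset.sum_sigma']
  refine Finset.sum_bij' (fun q _ => ⟨q.2.2.1 * q.2.2.2, (q.1, q.2.1), q.2.2⟩)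
    (fun s _ => (s.2.1.1, s.2.1.2, s.2.2)) ?_ ?_ ?_ ?_ ?_
  · rintro ⟨a, c, d, e⟩ h
    rw [mem_Om4] at h
    obtain ⟨⟨ha, hc, hd⟩, hd', he, hq⟩ := h
    have hde := mul_pos hd' he
    have h1 : 0 < c ^ 2 := by have : c ≠ 0 := by omega
                              positivity
    have h2 := sq_nonneg a
    rw [Finset.mem_sigma, Finset.mem_product, Finset.mem_filter, Finset.mem_filter, mem_OP, mem_P,
      Finset.mem_Ioo]
    simp only
    exact ⟨⟨⟨hde, by linarith⟩, by linarith⟩, ⟨ha, hc, by linarith⟩, ⟨hd', he, trivial⟩, hd⟩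
  · rintro ⟨k, ⟨a, c⟩, d, e⟩ h
    rw [Finset.mem_sigma, Finset.mem_product, Finset.mem_filter, Finset.mem_filter, mem_OP, mem_P,
      Finset.mem_Ioo] at h
    simp only at h
    obtain ⟨_, ⟨ha, hc, hq⟩, ⟨hd', he, hk⟩, hd⟩ := h
    rw [mem_Om4]
    exact ⟨⟨ha, hc, hd⟩, hd', he, by rw [hk]; linarith⟩
  · rintro ⟨a, c, d, e⟩ _
    rfl
  · rintro ⟨k, ⟨a, c⟩, d, e⟩ h
    rw [Finset.mem_sigma, Finset.mem_product, Finset.mem_filter, Finset.mem_filter, mem_P] at h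
    simp only at h ⊢
    rw [h.2.2.1.2.2]
  · rintro ⟨a, c, d, e⟩ _
    rfl

lemma card_OP_pos {N : ℤ} (hpos : 0 < N) (hN : N % 2 = 1) :
    (((OP N).filter (fun p => 0 < p.2)).card : ℤ) = 2 * A3 N := by
  have h1 := Finset.card_filter_add_card_filter_not (s := OP N) (fun p => 0 < p.2)
  have h2 : ((OP N).filter (fun p => ¬ 0 < p.2)).card =
      ((OP N).filter (fun p => 0 < p.2)).card := by
    refine Finset.card_nbij' (fun p => (p.1, -p.2)) (fun p => (p.1, -p.2)) ?_ ?_ ?_ ?_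
    · rintro ⟨x, y⟩ h
      simp only [Finset.coe_filter, Set.mem_ofPred_eq] at h ⊢
      rw [mem_OP] at h ⊢
      rw [neg_sq]
      exact ⟨⟨h.1.1, by omega, h.1.2.2⟩, by omega⟩
    · rintro ⟨x, y⟩ h
      simp only [Finset.coe_filter, Set.mem_ofPred_eq] at h ⊢
      rw [mem_OP] at h ⊢
      rw [neg_sq]
      exact ⟨⟨h.1.1, by omega, h.1.2.2⟩, by omega⟩
    · rintro ⟨x, y⟩ _; simp
    · rintro ⟨x, y⟩ _; simp
  have h3 := card_OP hpos hN
  omega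

/-- The sum of `c4 b * b` over the solutions of `a² + 3 b² = 4 N` in odd integers with `b > 0`. -/
noncomputable def C2 (N : ℤ) : ℤ := ∑ p ∈ (OP N).filter (fun p => 0 < p.2), c4 p.2 * p.2

/-- A form of Jacobi's derivative formula, multiplied by a theta series. -/
lemma jacobi_identity {N : ℤ} (hpos : 0 < N) (hN : N % 2 = 1) :
    8 * cv (dil 6 (fun k => sg k * A4 k)) A3 N = C2 N - 2 * A3 N := by
  have h1 := sum_Om4 hN
  have h2 := sum_boundary N
  rw [← sum_wt_boundary, ← sum_wt, h1, Finset.sum_sub_distrib, Finset.sum_const, nsmul_eq_mul,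
    mul_one, card_OP_pos hpos hN] at h2
  rw [C2, ← h2]; ring

/-- The signed convolution, up to the one evaluated in `jacobi_identity`. -/
lemma conv_sign {N : ℤ} (hN : N % 8 = 7) (hpos : 0 < N) :
    cv (dil 2 (fun i => sg i * A4 i)) A3 N + 3 * cv (dil 6 (fun k => sg k * A4 k)) A3 N =
      -A3 N := by
  have h := identity_Z (N := N) (by omega)
  rw [twoFormConv_eq_zero hN hpos, zero_sub] at h
  rw [← h, ← cv_mul_left, ← cv_add_left]
  refine cv_congr fun i j _ _ _ => ?_
  congr 1
  by_cases h2 : (2 : ℤ) ∣ i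
  · obtain ⟨m, rfl⟩ := h2
    rw [dil_mul_self two_ne_zero, dil_mul_self two_ne_zero, G1_eq, ← dil_two_three,
      dil_mul_self two_ne_zero]
    by_cases h3 : (3 : ℤ) ∣ m
    · obtain ⟨k, rfl⟩ := h3
      rw [dil_mul_self three_ne_zero, dil_mul_self three_ne_zero,
        sg_congr (by omega : 3 * k % 2 = k % 2)]
      ring
    · rw [dil_of_not_dvd h3, dil_of_not_dvd h3]; ring
  · rw [dil_of_not_dvd h2, dil_of_not_dvd h2, dil_of_not_dvd (by omega : ¬ (6 : ℤ) ∣ i)]; ring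

/-- A sum of two odd squares is `2` modulo `4`, and every representation of such a number by two
squares has odd entries. -/
lemma sum_odd_sq (i : ℤ) (hi : 0 < i) :
    ∑ p ∈ Rp 1 1 i, od p.1 * od p.2 = 2 * dil 2 (fun k => A4 k - sg k * A4 k) i := by
  by_cases h2 : i % 4 = 2
  · obtain ⟨k, rfl⟩ : (2 : ℤ) ∣ i := by omega
    rw [dil_mul_self two_ne_zero, sg_odd (by omega)]
    have e : ∑ p ∈ Rp 1 1 (2 * k), od p.1 * od p.2 = R 1 1 (2 * k) := by
      rw [← sum_one_Rp]
      refine Finset.sum_congr rfl ?_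
      rintro ⟨x, y⟩ h
      rw [mem_Rp one_pos one_pos] at h
      simp only at h ⊢
      have := sq_mod_four x
      have := sq_mod_four y
      rw [od_one (by omega), od_one (by omega)]; rfl
    rw [e, R11_eq hi, A4_two_mul]; ring
  · have e : ∑ p ∈ Rp 1 1 i, od p.1 * od p.2 = 0 := by
      refine Finset.sum_eq_zero ?_
      rintro ⟨x, y⟩ h
      rw [mem_Rp one_pos one_pos] at h
      simp only at h ⊢
      have := sq_mod_four x
      have := sq_mod_four y
      rcases Int.emod_two_eq_zero_or_one x with hx | hx
      · rw [od_zero hx, zero_mul]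
      · rw [od_zero (by omega : y % 2 = 0), mul_zero]
    rw [e]
    by_cases h : (2 : ℤ) ∣ i
    · obtain ⟨k, rfl⟩ := h
      rw [dil_mul_self two_ne_zero, sg_even (by omega)]; ring
    · rw [dil_of_not_dvd h, mul_zero]

/-- For `j ≡ 5 (mod 8)` every representation `x² + 3 v² = j` has `x` odd and `v` twice an odd number. -/
lemma sum_odd_twelve {j : ℤ} (hj : j % 8 = 5) (hpos : 0 < j) :
    ∑ p ∈ Rp 1 12 j, od p.1 * od p.2 = 2 * A3 j := by
  rw [← R13_odd hpos (by omega), R, Finset.card_eq_sum_ones]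
  push_cast
  refine Finset.sum_nbij' (fun p => (p.1, 2 * p.2)) (fun p => (p.1, p.2 / 2)) ?_ ?_ ?_ ?_ ?_
  · rintro ⟨x, y⟩ h
    rw [mem_Rp one_pos (by norm_num)] at h ⊢
    simp only at h ⊢
    linarith
  · rintro ⟨x, y⟩ h
    rw [mem_Rp one_pos (by norm_num)] at h ⊢
    simp only at h ⊢
    have e1 := sq_mod_four x
    have e2 := sq_mod_four y
    obtain ⟨v, rfl⟩ : (2 : ℤ) ∣ y := by
      by_contra hy
      have := sq_mod_eight (x := y) (by omega)
      obtain ⟨u, rfl⟩ : (2 : ℤ) ∣ x := by omega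
      ring_nf at h
      omega
    rw [Int.mul_ediv_cancel_left _ two_ne_zero]
    linarith
  · rintro ⟨x, y⟩ _; simp
  · rintro ⟨x, y⟩ h
    rw [mem_Rp one_pos three_pos] at h
    simp only [Prod.mk.injEq, true_and] at h ⊢
    have e1 := sq_mod_four x
    have e2 := sq_mod_four y
    have hy : y % 2 = 0 := by
      by_contra hy
      have := sq_mod_eight (x := y) (by omega)
      obtain ⟨u, rfl⟩ : (2 : ℤ) ∣ x := by omega
      ring_nf at h
      omega
    omega
  · rintro ⟨x, y⟩ h
    rw [mem_Rp one_pos (by norm_num)] at h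
    simp only at h ⊢
    have e1 := sq_mod_four x
    have e2 := sq_mod_four y
    have hx : x % 2 = 1 := by omega
    have := sq_mod_eight hx
    rw [od_one hx, od_one (by omega)]; rfl

/-- Twice the number of representations of `N` by `x² + y² + z² + 12 w²` with all variables odd: the
odd representations by `x² + y²` are counted by `A4 k - sg k * A4 k` at `2 k`, those by `z² + 12 w²`
by `A3`, so the number is four times the difference of the unsigned and the signed convolution. -/
lemma sum_odd {N : ℤ} (hN : N % 8 = 7) (hpos : 0 < N) :
    2 * ∑ q ∈ Q 1 1 1 12 N, od q.1 * od q.2.1 * (od q.2.2.1 * od q.2.2.2) =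
      3 * A2 N + A1 N + 3 * C2 N := by
  have h := sum_Q one_pos one_pos one_pos (by norm_num : (0 : ℤ) < 12) N
    (fun x y => od x * od y) (fun x y => od x * od y)
  have e0 : ∑ p ∈ Rp 1 1 0, od p.1 * od p.2 = 0 := by
    refine Finset.sum_eq_zero ?_
    rintro ⟨x, y⟩ h
    rw [mem_Rp one_pos one_pos] at h
    simp only at h ⊢
    have h1 := sq_nonneg x
    have h2 := sq_nonneg y
    have : x ^ 2 = 0 := by linarith
    rw [pow_eq_zero_iff two_ne_zero] at this
    rw [this, od_zero (Int.zero_emod 2), zero_mul]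
  have e1 : ∑ i ∈ Finset.Ioo 0 N, (∑ p ∈ Rp 1 1 i, od p.1 * od p.2) *
      ∑ p ∈ Rp 1 12 (N - i), od p.1 * od p.2 =
      4 * cv (dil 2 (fun k => A4 k - sg k * A4 k)) A3 N := by
    rw [cv, Finset.mul_sum]
    refine Finset.sum_congr rfl fun i hi => ?_
    rw [Finset.mem_Ioo] at hi
    rw [sum_odd_sq i hi.1]
    by_cases h5 : (N - i) % 8 = 5
    · rw [sum_odd_twelve h5 (by omega)]; ring
    · have : dil 2 (fun k => A4 k - sg k * A4 k) i = 0 := by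
        by_cases h : (2 : ℤ) ∣ i
        · obtain ⟨k, rfl⟩ := h
          rw [dil_mul_self two_ne_zero]
          rcases Int.emod_two_eq_zero_or_one k with hk | hk
          · rw [sg_even hk]; ring
          · rw [A4_three_mod_four (by omega)]; ring
        · exact dil_of_not_dvd h _
      rw [this]; ring
  have e2 : cv (dil 2 (fun k => A4 k - sg k * A4 k)) A3 N =
      cv (dil 2 A4) A3 N - cv (dil 2 (fun k => sg k * A4 k)) A3 N := by
    rw [← cv_sub_left]
    refine cv_congr fun i j _ _ _ => ?_
    congr 1
    by_cases h : (2 : ℤ) ∣ i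
    · simp only [dil, if_pos h]
    · simp only [dil, if_neg h, sub_zero]
  rw [h, sum_Icc_ends hpos, e0, e1, e2, sum_odd_sq N hpos,
    dil_of_not_dvd (by omega : ¬ (2 : ℤ) ∣ N)]
  have a1 := conv_c1 hN hpos
  have a2 := conv_sign hN hpos
  have a3 := jacobi_identity hpos (by omega : N % 2 = 1)
  linarith

/-! ### Evaluation of the terms of the formula -/

lemma eight_tri (x : ℤ) : 8 * (x * (x - 1) / 2) = (2 * x - 1) ^ 2 - 1 := by
  have h := Int.even_mul_pred_self x
  obtain ⟨t, ht⟩ := h.two_dvd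
  rw [ht, Int.mul_ediv_cancel_left _ two_ne_zero]
  linear_combination -4 * ht

lemma od_mul (x y : ℤ) : od x * od y = if x % 2 = 1 ∧ y % 2 = 1 then 1 else 0 := by
  unfold od; split_ifs <;> simp_all

/-- Multiplying by `8` and completing squares turns triangular numbers into odd squares. -/
lemma tquad_eq (n : ℕ) : (tquad 1 1 1 12 n : ℤ) =
    ∑ q ∈ Q 1 1 1 12 (8 * n + 15), od q.1 * od q.2.1 * (od q.2.2.1 * od q.2.2.2) := by
  have e : ∑ q ∈ Q 1 1 1 12 (8 * n + 15), od q.1 * od q.2.1 * (od q.2.2.1 * od q.2.2.2) =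
      (((Q 1 1 1 12 (8 * n + 15)).filter fun q => (q.1 % 2 = 1 ∧ q.2.1 % 2 = 1) ∧
        q.2.2.1 % 2 = 1 ∧ q.2.2.2 % 2 = 1).card : ℤ) := by
    rw [Finset.card_filter]
    push_cast
    refine Finset.sum_congr rfl fun q _ => ?_
    rw [od_mul, od_mul]
    split_ifs <;> simp_all
  rw [e, Nat.cast_inj, tquad]
  set s := (Q 1 1 1 12 (8 * n + 15)).filter fun q => (q.1 % 2 = 1 ∧ q.2.1 % 2 = 1) ∧
        q.2.2.1 % 2 = 1 ∧ q.2.2.2 % 2 = 1 with hs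
  have hinj : Set.InjOn (fun q : ℤ × ℤ × ℤ × ℤ =>
      ((q.1 + 1) / 2, (q.2.1 + 1) / 2, (q.2.2.1 + 1) / 2, (q.2.2.2 + 1) / 2)) s := by
    rintro ⟨x, y, z, w⟩ h ⟨x', y', z', w'⟩ h' he
    rw [hs, Finset.mem_coe, Finset.mem_filter] at h h'
    simp only [Prod.mk.injEq] at h h' he ⊢
    omega
  rw [← Finset.card_image_of_injOn hinj]
  refine Nat.subtype_card _ ?_
  rintro ⟨x, y, z, w⟩
  have ex := eight_tri x
  have ey := eight_tri y
  have ez := eight_tri z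
  have ew := eight_tri w
  rw [Finset.mem_image]
  constructor
  · rintro ⟨⟨x', y', z', w'⟩, h, he⟩
    rw [hs, Finset.mem_filter, mem_Q one_pos one_pos one_pos (by norm_num)] at h
    simp only [Prod.mk.injEq] at h he ⊢
    obtain rfl : x' = 2 * x - 1 := by omega
    obtain rfl : y' = 2 * y - 1 := by omega
    obtain rfl : z' = 2 * z - 1 := by omega
    obtain rfl : w' = 2 * w - 1 := by omega
    push_cast
    linarith [h.1]
  · intro h
    simp only at h
    push_cast at h
    refine ⟨(2 * x - 1, 2 * y - 1, 2 * z - 1, 2 * w - 1), ?_, ?_⟩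
    · rw [hs, Finset.mem_filter, mem_Q one_pos one_pos one_pos (by norm_num)]
      simp only
      refine ⟨by linarith, ?_⟩
      omega
    · simp

lemma A1_three_mul (m : ℤ) : A1 (3 * m) = A1 m := by
  have h := D_prime_mul (χ := fun d => c12 d * d) (fun a b => by rw [c12_mul]; ring)
    prime_three' three_pos m
  have e : c12 3 = 0 := by decide
  simp only [e] at h
  rw [A1, h]; ring

lemma A2_three_mul (m : ℤ) : A2 (3 * m) = 3 * A2 m := by
  have hc : ∀ d : ℤ, (3 : ℤ) ∣ d → c12 d = 0 := by
    intro d hd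
    rw [c12, c3, if_neg (by omega), if_neg (by omega), mul_zero]
  have key : ∀ n : ℤ, A2 n = ∑ p ∈ (P n).filter (fun p => ¬ (3 : ℤ) ∣ p.1), c12 p.1 * p.2 := by
    intro n
    rw [A2, D, Finset.sum_filter_of_ne]
    intro p _ hne h
    exact hne (by rw [hc _ h, zero_mul])
  rw [key, key, Finset.mul_sum]
  refine Finset.sum_nbij' (fun p => (p.1, p.2 / 3)) (fun p => (p.1, 3 * p.2)) ?_ ?_ ?_ ?_ ?_
  · rintro ⟨d, e⟩ h
    rw [Finset.mem_filter, mem_P] at h ⊢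
    obtain ⟨⟨hd, he, hde⟩, h3⟩ := h
    simp only at hd he hde h3 ⊢
    obtain ⟨k, rfl⟩ : (3 : ℤ) ∣ e :=
      (prime_three'.dvd_or_dvd (hde ▸ dvd_mul_right 3 m)).resolve_left h3
    rw [Int.mul_ediv_cancel_left _ three_ne_zero]
    exact ⟨⟨hd, by omega, by linarith⟩, h3⟩
  · rintro ⟨d, e⟩ h
    rw [Finset.mem_filter, mem_P] at h ⊢
    obtain ⟨⟨hd, he, hde⟩, h3⟩ := h
    simp only at hd he hde h3 ⊢
    exact ⟨⟨hd, by omega, by linarith⟩, h3⟩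
  · rintro ⟨d, e⟩ h
    rw [Finset.mem_filter, mem_P] at h
    obtain ⟨⟨hd, he, hde⟩, h3⟩ := h
    simp only at hd he hde h3 ⊢
    have : (3 : ℤ) ∣ e := (prime_three'.dvd_or_dvd (hde ▸ dvd_mul_right 3 m)).resolve_left h3
    rw [Int.mul_ediv_cancel' this]
  · rintro ⟨d, e⟩ _
    simp
  · rintro ⟨d, e⟩ h
    rw [Finset.mem_filter, mem_P] at h
    obtain ⟨⟨hd, he, hde⟩, h3⟩ := h
    simp only at hd he hde h3 ⊢
    obtain ⟨k, rfl⟩ : (3 : ℤ) ∣ e :=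
      (prime_three'.dvd_or_dvd (hde ▸ dvd_mul_right 3 m)).resolve_left h3
    rw [Int.mul_ediv_cancel_left _ three_ne_zero]; ring

lemma A1_pow (β : ℕ) (m : ℤ) : A1 (3 ^ β * m) = A1 m := by
  induction β with
  | zero => simp
  | succ β ih => rw [pow_succ', mul_assoc, A1_three_mul, ih]

lemma A2_pow (β : ℕ) (m : ℤ) : A2 (3 ^ β * m) = 3 ^ β * A2 m := by
  induction β with
  | zero => simp
  | succ β ih => rw [pow_succ', mul_assoc, A2_three_mul, ih]; ring

/-- The symmetry `d ↦ m / d` of the divisors, as `c12 d` is `1` or `-1` on them. -/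
lemma A2_coprime {m : ℤ} (h2 : m % 2 = 1) (h3 : ¬ (3 : ℤ) ∣ m) : A2 m = c12 m * A1 m := by
  rw [A1, ← D_mul_left, D_comm, A2]
  have e : D (fun _ => 1) (fun a => c12 m * (c12 a * a)) m = D c12 (fun e => e) m := by
    refine D_congr fun a x _ _ h => ?_
    obtain ⟨_, hx⟩ := odd_of_mul h2 h
    have hx3 : ¬ (3 : ℤ) ∣ x := fun hd => h3 (h ▸ dvd_mul_of_dvd_right hd a)
    have hsq : c12 x * c12 x = 1 := by
      have h1 := c4_sq hx
      have h2 : c3 x * c3 x = 1 := by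
        rcases (by omega : x % 3 = 1 ∨ x % 3 = 2) with h | h <;> simp [c3, h]
      rw [c12, mul_mul_mul_comm, h1, h2]; rfl
    rw [← h, c12_mul]
    linear_combination c12 a * x * hsq
  rw [← e, D_comm]

lemma A1_divisors {m : ℕ} (hm : 0 < m) (h2 : m % 2 = 1) :
    A1 m = ∑ d ∈ m.divisors, (d : ℤ) * jacobiSym 3 d := by
  rw [A1, D]
  refine Finset.sum_bij' (fun p _ => p.1.toNat) (fun d _ => ((d : ℤ), ((m / d : ℕ) : ℤ)))
    ?_ ?_ ?_ ?_ ?_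
  · rintro ⟨d, e⟩ h
    rw [mem_P] at h
    rw [Nat.mem_divisors]
    refine ⟨?_, hm.ne'⟩
    rw [← Int.natCast_dvd_natCast, Int.toNat_of_nonneg h.1.le, ← h.2.2]
    exact dvd_mul_right _ _
  · intro d h
    rw [mem_P]
    have hd := Nat.pos_of_mem_divisors h
    rw [Nat.mem_divisors] at h
    simp only
    refine ⟨by exact_mod_cast hd, ?_, ?_⟩
    · exact_mod_cast Nat.div_pos (Nat.le_of_dvd hm h.1) hd
    · exact_mod_cast Nat.mul_div_cancel' h.1
  · rintro ⟨d, e⟩ h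
    rw [mem_P] at h
    obtain ⟨hd, he, h⟩ := h
    simp only at hd he h ⊢
    obtain ⟨d, rfl⟩ := Int.eq_ofNat_of_zero_le hd.le
    obtain ⟨e, rfl⟩ := Int.eq_ofNat_of_zero_le he.le
    have h' : d * e = m := by exact_mod_cast h
    have hd' : 0 < d := by exact_mod_cast hd
    simp only [Int.toNat_natCast]
    rw [← h', Nat.mul_div_cancel_left _ hd']
  · intro d h
    simp
  · rintro ⟨d, e⟩ h
    rw [mem_P] at h
    obtain ⟨hd, he, h⟩ := h
    simp only at hd he h ⊢
    obtain ⟨d, rfl⟩ := Int.eq_ofNat_of_zero_le hd.le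
    have hodd := (odd_of_mul (by omega : (m : ℤ) % 2 = 1) h).1
    rw [Int.toNat_natCast, jacobi_three (by omega)]
    ring

lemma neg_one_pow_eq {b : ℕ} (hb : b % 2 = 1) : (-1 : ℚ) ^ ((b - 1) / 2) = ((c4 b : ℤ) : ℚ) := by
  rcases odd_cases (by omega : (b : ℤ) % 2 = 1) with h | h
  · rw [c4_one h, Even.neg_one_pow (Nat.even_iff.2 (by omega))]; simp
  · rw [c4_three h, Odd.neg_one_pow (Nat.odd_iff.2 (by omega))]; simp

lemma C2_half (N : ℤ) : C2 N =
    2 * ∑ p ∈ (OP N).filter (fun p => 0 < p.1 ∧ 0 < p.2), c4 p.2 * p.2 := by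
  have h : ∑ p ∈ ((OP N).filter (fun p => 0 < p.2)).filter (fun p => ¬ 0 < p.1), c4 p.2 * p.2 =
      ∑ p ∈ ((OP N).filter (fun p => 0 < p.2)).filter (fun p => 0 < p.1), c4 p.2 * p.2 := by
    refine Finset.sum_nbij' (fun p => (-p.1, p.2)) (fun p => (-p.1, p.2)) ?_ ?_ ?_ ?_ ?_
    · rintro ⟨x, y⟩ h
      rw [Finset.mem_filter, Finset.mem_filter, mem_OP] at h ⊢
      rw [neg_sq]
      simp only at h ⊢
      obtain ⟨⟨⟨h1, h2⟩, h3⟩, h4⟩ := h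
      exact ⟨⟨⟨by omega, h2⟩, h3⟩, by omega⟩
    · rintro ⟨x, y⟩ h
      rw [Finset.mem_filter, Finset.mem_filter, mem_OP] at h ⊢
      rw [neg_sq]
      simp only at h ⊢
      obtain ⟨⟨⟨h1, h2⟩, h3⟩, h4⟩ := h
      exact ⟨⟨⟨by omega, h2⟩, h3⟩, by omega⟩
    · rintro ⟨x, y⟩ _; simp
    · rintro ⟨x, y⟩ _; simp
    · rintro ⟨x, y⟩ _; simp
  rw [C2, ← Finset.sum_filter_add_sum_filter_not _ (fun p => 0 < p.1), h, Finset.filter_filter,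
    two_mul]
  simp only [and_comm]

/-- The unordered sum over `a` and `b` has finite support and equals a sum over odd integral
points; oddness of `b` follows from that of `a`. -/
lemma finsum_eq (M : ℕ) : (∑ᶠ (a : ℕ) (b : ℕ)
    (_ : 0 < a ∧ 0 < b ∧ Odd a ∧ 4 * M = a ^ 2 + 3 * b ^ 2), (-1 : ℚ) ^ ((b - 1) / 2) * (b : ℚ)) =
    ((∑ p ∈ (OP M).filter (fun p => 0 < p.1 ∧ 0 < p.2), c4 p.2 * p.2 : ℤ) : ℚ) := by
  classical
  have bd : ∀ a b : ℕ, 4 * M = a ^ 2 + 3 * b ^ 2 → a < 4 * M + 1 ∧ b < 4 * M + 1 := by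
    intro a b h
    constructor <;> nlinarith [Nat.le_self_pow two_ne_zero a, Nat.le_self_pow two_ne_zero b]
  have e1 : ∀ a : ℕ, (∑ᶠ (b : ℕ) (_ : 0 < a ∧ 0 < b ∧ Odd a ∧ 4 * M = a ^ 2 + 3 * b ^ 2),
      (-1 : ℚ) ^ ((b - 1) / 2) * (b : ℚ)) = ∑ b ∈ Finset.range (4 * M + 1),
      if 0 < a ∧ 0 < b ∧ Odd a ∧ 4 * M = a ^ 2 + 3 * b ^ 2 then
        (-1 : ℚ) ^ ((b - 1) / 2) * (b : ℚ) else 0 := by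
    intro a
    simp only [finsum_eq_if]
    refine finsum_eq_sum_of_support_subset _ fun b hb => ?_
    rw [Function.mem_support] at hb
    rw [Finset.mem_coe, Finset.mem_range]
    by_contra hlt
    exact hb (if_neg fun h => hlt (bd a b h.2.2.2).2)
  simp only [e1]
  rw [finsum_eq_sum_of_support_subset (s := Finset.range (4 * M + 1))]
  · rw [← Finset.sum_product', ← Finset.sum_filter]
    push_cast
    refine Finset.sum_nbij' (fun p => ((p.1 : ℤ), (p.2 : ℤ))) (fun p => (p.1.toNat, p.2.toNat))
      ?_ ?_ ?_ ?_ ?_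
    · rintro ⟨a, b⟩ h
      rw [Finset.mem_filter] at h
      obtain ⟨_, h1, h2, h3, h4⟩ := h
      simp only at h1 h2 h3 h4
      rw [OP, Finset.mem_filter, Finset.mem_filter, mem_Rp one_pos three_pos]
      simp only
      rw [Nat.odd_iff] at h3
      refine ⟨⟨?_, by omega⟩, by exact_mod_cast h1, by exact_mod_cast h2⟩
      rw [one_mul]
      exact_mod_cast h4.symm
    · rintro ⟨a, b⟩ h
      rw [Finset.mem_filter, mem_OP] at h
      obtain ⟨⟨h1, h2, h3⟩, ha, hb⟩ := h
      simp only at ha hb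
      obtain ⟨a, rfl⟩ := Int.eq_ofNat_of_zero_le ha.le
      obtain ⟨b, rfl⟩ := Int.eq_ofNat_of_zero_le hb.le
      have h4 : 4 * M = a ^ 2 + 3 * b ^ 2 := by exact_mod_cast h3.symm
      simp only [Int.toNat_natCast]
      rw [Finset.mem_filter, Finset.mem_product, Finset.mem_range, Finset.mem_range]
      exact ⟨bd a b h4, by exact_mod_cast ha, by exact_mod_cast hb, Nat.odd_iff.2 (by omega), h4⟩
    · rintro ⟨a, b⟩ _
      simp
    · rintro ⟨a, b⟩ h
      rw [Finset.mem_filter] at h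
      simp only [Prod.mk.injEq] at h ⊢
      omega
    · rintro ⟨a, b⟩ h
      rw [Finset.mem_filter] at h
      obtain ⟨_, h1, h2, h3, h4⟩ := h
      simp only at h1 h2 h3 h4 ⊢
      rw [Nat.odd_iff] at h3
      have ea := sq_mod_four a
      have eb := sq_mod_four b
      have h5 : 4 * (M : ℤ) = (a : ℤ) ^ 2 + 3 * (b : ℤ) ^ 2 := by exact_mod_cast h4
      rw [neg_one_pow_eq (by omega)]
      simp
  · intro a ha
    rw [Function.mem_support] at ha
    rw [Finset.mem_coe, Finset.mem_range]
    by_contra hlt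
    exact ha (Finset.sum_eq_zero fun b _ => if_neg fun h => hlt (bd a b h.2.2.2).1)

end Tri

theorem stmt_16 (n : ℕ) (hn : 0 < n) (β n₁ : ℕ) (hn₁ : 0 < n₁) (h3 : ¬ 3 ∣ n₁)
    (hfac : 8 * n + 15 = 3 ^ β * n₁) :
    (tquad 1 1 1 12 n : ℚ) =
      1 / 2 * ((3 : ℚ) ^ (β + 1) * jacobiSym 3 n₁ + 1) *
          ∑ d ∈ n₁.divisors, (d : ℚ) * jacobiSym 3 d +
        3 * ∑ᶠ (a : ℕ) (b : ℕ)
          (_ : 0 < a ∧ 0 < b ∧ Odd a ∧ 4 * (8 * n + 15) = a ^ 2 + 3 * b ^ 2),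
          (-1 : ℚ) ^ ((b - 1) / 2) * (b : ℚ) := by
  have hodd : n₁ % 2 = 1 := by
    have h : Odd (3 ^ β * n₁) := by rw [← hfac, Nat.odd_iff]; omega
    exact Nat.odd_iff.1 (Nat.odd_mul.1 h).2
  have hN : ((8 * n + 15 : ℕ) : ℤ) = 3 ^ β * (n₁ : ℤ) := by rw [hfac]; push_cast; rfl
  have h := Tri.sum_odd (N := 8 * n + 15) (by omega) (by omega)
  rw [← Tri.tquad_eq, Tri.C2_half] at h
  have hN' : (8 * n + 15 : ℤ) = 3 ^ β * (n₁ : ℤ) := by exact_mod_cast hN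
  have e1 : Tri.A1 (8 * n + 15) = ∑ d ∈ n₁.divisors, (d : ℤ) * jacobiSym 3 d := by
    rw [hN', Tri.A1_pow, Tri.A1_divisors hn₁ hodd]
  have e2 : Tri.A2 (8 * n + 15) =
      3 ^ β * (jacobiSym 3 n₁ * ∑ d ∈ n₁.divisors, (d : ℤ) * jacobiSym 3 d) := by
    rw [hN', Tri.A2_pow, Tri.A2_coprime (by omega) (by omega), Tri.jacobi_three hodd,
      Tri.A1_divisors hn₁ hodd]
  rw [e1, e2] at h
  have hf := Tri.finsum_eq (8 * n + 15)
  rw [hf]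
  have hq := congrArg (fun z : ℤ => (z : ℚ)) h
  push_cast at hq ⊢
  rw [pow_succ]
  linarith
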